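/- Let q = p^f be a power of a prime p, let 2m ≥ 4 and suppose GSp_{2m}(q) is not solvable. Let π be a set of primes with 2 ∈ π, 3 ∈ π and p ∉ π, and let H be a solvable Hall π-subgroup of GSp_{2m}(q). Set G = H·Sp_{2m}(q). Then there exist x, y, z ∈ G such that H ∩ H^x ∩ H^y ∩ H^z is contained in the center Z(GSp_{2m}(q)), i.e. consists of scalar matrices. -/

import Mathlib

open Matrix Pointwise

/-- `H^x = x⁻¹ H x`. -/
def conjBy {G : Type*} [Group G] (H : Subgroup G) (x : G) : Subgroup G :=
  Subgroup.map ((MulAut.conj x⁻¹).toMonoidHom) H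

/-- Hall π-subgroup of the whole group. -/
def IsHallSubgroup {G : Type*} [Group G] (π : Set ℕ) (H : Subgroup G) : Prop :=
  (∀ r : ℕ, r.Prime → r ∣ Nat.card H → r ∈ π) ∧ ∀ r ∈ π, ¬ r ∣ H.index

/-- Hall π-subgroup of the subgroup `K`. -/
def IsHallSubgroupIn {G : Type*} [Group G] (π : Set ℕ) (K H : Subgroup G) : Prop :=
  H ≤ K ∧ (∀ r : ℕ, r.Prime → r ∣ Nat.card H → r ∈ π) ∧ ∀ r ∈ π, ¬ r ∣ H.relIndex K

/-- The subgroup `SL_n` of `GL_n`. -/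
def SLsub (n : ℕ) (F : Type*) [Field F] : Subgroup (GL (Fin n) F) where
  carrier := {g | Matrix.det (g : Matrix (Fin n) (Fin n) F) = 1}
  one_mem' := by simp
  mul_mem' := by
    intro a b ha hb
    simp only [Set.mem_setOf_eq, Units.val_mul, Matrix.det_mul] at *
    rw [ha, hb, one_mul]
  inv_mem' := by
    intro g hg
    simp only [Set.mem_setOf_eq] at *
    have h1 : ((g⁻¹ : GL (Fin n) F) : Matrix (Fin n) (Fin n) F) *
        (g : Matrix (Fin n) (Fin n) F) = 1 := g.inv_mul
    have := congrArg Matrix.det h1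
    rw [Matrix.det_mul, Matrix.det_one, hg, mul_one] at this
    exact this

/-- The group of similitudes of the bilinear form `B` (acting on row vectors). -/
def similitudeGroup {n : ℕ} {F : Type*} [Field F]
    (B : (Fin n → F) → (Fin n → F) → F) : Subgroup (GL (Fin n) F) where
  carrier := {g | ∃ c : Fˣ, ∀ u v : Fin n → F,
    B (Matrix.vecMul u (g : Matrix (Fin n) (Fin n) F))
      (Matrix.vecMul v (g : Matrix (Fin n) (Fin n) F)) = (c : F) * B u v}
  one_mem' := ⟨1, by simp⟩
  mul_mem' := by
    rintro a b ⟨c, hc⟩ ⟨d, hd⟩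
    refine ⟨c * d, fun u v => ?_⟩
    simp only [Units.val_mul, ← Matrix.vecMul_vecMul, hd, hc]
    ring
  inv_mem' := by
    rintro g ⟨c, hc⟩
    refine ⟨c⁻¹, fun u v => ?_⟩
    have h1 : ∀ w : Fin n → F, Matrix.vecMul
        (Matrix.vecMul w ((g⁻¹ : GL (Fin n) F) : Matrix (Fin n) (Fin n) F))
        (g : Matrix (Fin n) (Fin n) F) = w := by
      intro w
      rw [Matrix.vecMul_vecMul, g.inv_mul, Matrix.vecMul_one]
    have h2 := hc (Matrix.vecMul u ((g⁻¹ : GL (Fin n) F) : Matrix (Fin n) (Fin n) F))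
      (Matrix.vecMul v ((g⁻¹ : GL (Fin n) F) : Matrix (Fin n) (Fin n) F))
    rw [h1, h1] at h2
    rw [h2, Units.val_inv_eq_inv_val, inv_mul_cancel_left₀ (by exact_mod_cast c.ne_zero)]

/-- The isometry group of the bilinear form `B` (acting on row vectors). -/
def isometryGroup {n : ℕ} {F : Type*} [Field F]
    (B : (Fin n → F) → (Fin n → F) → F) : Subgroup (GL (Fin n) F) where
  carrier := {g | ∀ u v : Fin n → F,
    B (Matrix.vecMul u (g : Matrix (Fin n) (Fin n) F))
      (Matrix.vecMul v (g : Matrix (Fin n) (Fin n) F)) = B u v}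
  one_mem' := by simp
  mul_mem' := by
    intro a b ha hb u v
    simp only [Set.mem_setOf_eq] at ha hb
    simp only [Units.val_mul, ← Matrix.vecMul_vecMul]
    rw [hb, ha]
  inv_mem' := by
    intro g hg u v
    have h1 : ∀ w : Fin n → F, Matrix.vecMul
        (Matrix.vecMul w ((g⁻¹ : GL (Fin n) F) : Matrix (Fin n) (Fin n) F))
        (g : Matrix (Fin n) (Fin n) F) = w := by
      intro w
      rw [Matrix.vecMul_vecMul, g.inv_mul, Matrix.vecMul_one]
    have h2 := hg (Matrix.vecMul u ((g⁻¹ : GL (Fin n) F) : Matrix (Fin n) (Fin n) F))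
      (Matrix.vecMul v ((g⁻¹ : GL (Fin n) F) : Matrix (Fin n) (Fin n) F))
    rw [h1, h1] at h2
    exact h2.symm

/-- The group of similitudes of the quadratic form `Q` (acting on row vectors). -/
def qSimilitudeGroup {n : ℕ} {F : Type*} [Field F]
    (Q : (Fin n → F) → F) : Subgroup (GL (Fin n) F) where
  carrier := {g | ∃ c : Fˣ, ∀ v : Fin n → F,
    Q (Matrix.vecMul v (g : Matrix (Fin n) (Fin n) F)) = (c : F) * Q v}
  one_mem' := ⟨1, by simp⟩
  mul_mem' := by
    rintro a b ⟨c, hc⟩ ⟨d, hd⟩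
    refine ⟨c * d, fun v => ?_⟩
    simp only [Units.val_mul, ← Matrix.vecMul_vecMul, hd, hc]
    ring
  inv_mem' := by
    rintro g ⟨c, hc⟩
    refine ⟨c⁻¹, fun v => ?_⟩
    have h1 : ∀ w : Fin n → F, Matrix.vecMul
        (Matrix.vecMul w ((g⁻¹ : GL (Fin n) F) : Matrix (Fin n) (Fin n) F))
        (g : Matrix (Fin n) (Fin n) F) = w := by
      intro w
      rw [Matrix.vecMul_vecMul, g.inv_mul, Matrix.vecMul_one]
    have h2 := hc (Matrix.vecMul v ((g⁻¹ : GL (Fin n) F) : Matrix (Fin n) (Fin n) F))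
    rw [h1] at h2
    rw [h2, Units.val_inv_eq_inv_val, inv_mul_cancel_left₀ (by exact_mod_cast c.ne_zero)]

/-- The unitary group `GU_n` with respect to the field automorphism `φ`. -/
def GUgrp (n : ℕ) {K : Type*} [Field K] (φ : K →+* K) : Subgroup (GL (Fin n) K) where
  carrier := {g | ((g : Matrix (Fin n) (Fin n) K).map φ)ᵀ * (g : Matrix (Fin n) (Fin n) K) = 1}
  one_mem' := by
    simp [Matrix.map_one φ φ.map_zero φ.map_one]
  mul_mem' := by
    intro a b ha hb
    simp only [Set.mem_setOf_eq, Units.val_mul, Matrix.map_mul, Matrix.transpose_mul] at *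
    calc ((b : Matrix (Fin n) (Fin n) K).map φ)ᵀ * ((a : Matrix (Fin n) (Fin n) K).map φ)ᵀ *
          ((a : Matrix (Fin n) (Fin n) K) * (b : Matrix (Fin n) (Fin n) K))
        = ((b : Matrix (Fin n) (Fin n) K).map φ)ᵀ *
          (((a : Matrix (Fin n) (Fin n) K).map φ)ᵀ * (a : Matrix (Fin n) (Fin n) K)) *
          (b : Matrix (Fin n) (Fin n) K) := by noncomm_ring
      _ = 1 := by rw [ha, mul_one, hb]
  inv_mem' := by
    intro g hg
    simp only [Set.mem_setOf_eq] at *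
    have hcomm : (g : Matrix (Fin n) (Fin n) K) * ((g : Matrix (Fin n) (Fin n) K).map φ)ᵀ = 1 :=
      mul_eq_one_comm.mp hg
    have h1 : ((g : Matrix (Fin n) (Fin n) K) * ((g⁻¹ : GL (Fin n) K) : Matrix (Fin n) (Fin n) K)).map φ = 1 := by
      rw [g.mul_inv]
      exact Matrix.map_one φ φ.map_zero φ.map_one
    rw [Matrix.map_mul] at h1
    have h2 := congrArg Matrix.transpose h1
    rw [Matrix.transpose_mul, Matrix.transpose_one] at h2
    calc (((g⁻¹ : GL (Fin n) K) : Matrix (Fin n) (Fin n) K).map φ)ᵀ *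
          ((g⁻¹ : GL (Fin n) K) : Matrix (Fin n) (Fin n) K)
        = (((g⁻¹ : GL (Fin n) K) : Matrix (Fin n) (Fin n) K).map φ)ᵀ *
          (((g : Matrix (Fin n) (Fin n) K).map φ)ᵀ * (g : Matrix (Fin n) (Fin n) K)) *
          ((g⁻¹ : GL (Fin n) K) : Matrix (Fin n) (Fin n) K) := by rw [hg, mul_one]
      _ = ((((g⁻¹ : GL (Fin n) K) : Matrix (Fin n) (Fin n) K).map φ)ᵀ *
          ((g : Matrix (Fin n) (Fin n) K).map φ)ᵀ) *
          ((g : Matrix (Fin n) (Fin n) K) * ((g⁻¹ : GL (Fin n) K) : Matrix (Fin n) (Fin n) K)) := by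
            noncomm_ring
      _ = 1 := by rw [h2, g.mul_inv, mul_one]


/-- Quaternion data: `I`, `J` act as a quaternion pair on the plane spanned by `u, w` and
trivially on its orthogonal complement. -/
structure QD {K V : Type*} [Field K] [AddCommGroup V] [Module K V] (B : V →ₗ[K] V →ₗ[K] K)
    (ι : K) (I J : Module.End K V) (u w : V) : Prop where
  buw : B u w ≠ 0
  Iu : I u = ι • u
  Iw : I w = -(ι • w)
  Ju : J u = w
  Jw : J w = -u
  fix : ∀ v, B u v = 0 → B w v = 0 → I v = v ∧ J v = v

/-- Order three data. -/
structure TD {K V : Type*} [Field K] [AddCommGroup V] [Module K V] (B : V →ₗ[K] V →ₗ[K] K)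
    (ω : K) (T : Module.End K V) (u w : V) : Prop where
  buw : B u w ≠ 0
  Tu : T u = ω • u
  Tw : T w = (ω * ω) • w
  fix : ∀ v, B u v = 0 → B w v = 0 → T v = v

/-- Orthogonality of two planes. -/
def Orth4 {K V : Type*} [Field K] [AddCommGroup V] [Module K V] (B : V →ₗ[K] V →ₗ[K] K)
    (u w u' w' : V) : Prop :=
  B u u' = 0 ∧ B u w' = 0 ∧ B w u' = 0 ∧ B w w' = 0

/-- Scalar endomorphisms. -/
def IsSc {K V : Type*} [Field K] [AddCommGroup V] [Module K V] (x : Module.End K V) : Prop :=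
  ∃ c : K, x = c • (1 : Module.End K V)

section basics

variable {K V : Type*} [Field K] [AddCommGroup V] [Module K V] {B : V →ₗ[K] V →ₗ[K] K}

theorem skewB (halt : ∀ v, B v v = 0) (u v : V) : B u v = - B v u := by
  have h := halt (u + v)
  simp only [map_add, LinearMap.add_apply, halt] at h
  linear_combination h

theorem decompB (halt : ∀ v, B v v = 0) {u w : V} (h : B u w ≠ 0) (v : V) :
    ∃ (a b : K) (v0 : V), v = a • u + b • w + v0 ∧ B u v0 = 0 ∧ B w v0 = 0 ∧
      a = - (B w v) / B u w ∧ b = B u v / B u w := by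
  refine ⟨- (B w v) / B u w, B u v / B u w,
    v - ((- (B w v) / B u w) • u + (B u v / B u w) • w), by abel, ?_, ?_, rfl, rfl⟩
  · simp only [map_sub, map_add, map_smul, halt, smul_eq_mul]
    field_simp
    ring
  · simp only [map_sub, map_add, map_smul, halt, smul_eq_mul, skewB halt w u]
    field_simp
    ring

theorem ne_of_B {u w : V} (h : B u w ≠ 0) : u ≠ 0 ∧ w ≠ 0 := by
  constructor
  · rintro rfl; simp at h
  · rintro rfl; simp at h

theorem coeff_zero (halt : ∀ v, B v v = 0) {u w : V} (h : B u w ≠ 0) {a b : K}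
    {v0 : V} (h1 : B u v0 = 0) (h2 : B w v0 = 0) (h0 : a • u + b • w + v0 = 0) :
    a = 0 ∧ b = 0 ∧ v0 = 0 := by
  have e1 := congrArg (B u) h0
  have e2 := congrArg (B w) h0
  simp only [map_add, map_smul, halt, smul_eq_mul, h1, h2, map_zero] at e1 e2
  have hb : b = 0 := by
    have : b * B u w = 0 := by linear_combination e1
    simpa [h] using this
  have ha : a = 0 := by
    rw [skewB halt w u] at e2
    have : a * B u w = 0 := by linear_combination -e2
    simpa [h] using this
  subst hb ha
  simpa using h0

theorem finrank_pair (halt : ∀ v, B v v = 0) {u w : V} (h : B u w ≠ 0) :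
    Module.finrank K (Submodule.span K {u, w}) = 2 := by
  have hli : LinearIndependent K ![u, w] := by
    rw [LinearIndependent.pair_iff]
    intro s t hst
    have := coeff_zero halt h (a := s) (b := t) (v0 := 0) (by simp) (by simp) (by simpa using hst)
    exact ⟨this.1, this.2.1⟩
  have := finrank_span_eq_card hli
  have e : Set.range ![u, w] = {u, w} := by
    ext x
    simp [Matrix.range_cons, Matrix.range_empty]
    tauto
  rw [e] at this
  simpa using this

theorem finrank_quad (halt : ∀ v, B v v = 0) {u w u' w' : V} (h : B u w ≠ 0) (h' : B u' w' ≠ 0)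
    (ho : Orth4 B u w u' w') :
    Module.finrank K (Submodule.span K {u, w, u', w'}) = 4 := by
  obtain ⟨o1, o2, o3, o4⟩ := ho
  have hli : LinearIndependent K ![u, w, u', w'] := by
    rw [Fintype.linearIndependent_iff]
    intro g hg
    simp only [Fin.sum_univ_four, Matrix.cons_val_zero, Matrix.cons_val_one,
      Matrix.cons_val] at hg
    have h1 := coeff_zero halt h (a := g 0) (b := g 1) (v0 := g 2 • u' + g 3 • w')
      (by simp [o1, o2]) (by simp [o3, o4]) (by rw [← hg]; abel)
    have h2 := coeff_zero halt h' (a := g 2) (b := g 3) (v0 := 0) (by simp) (by simp)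
      (by simpa using h1.2.2)
    intro i
    fin_cases i
    · exact h1.1
    · exact h1.2.1
    · exact h2.1
    · exact h2.2.1
  have := finrank_span_eq_card hli
  have e : Set.range ![u, w, u', w'] = {u, w, u', w'} := by
    ext x
    simp [Matrix.range_cons, Matrix.range_empty]
    tauto
  rw [e] at this
  simpa using this

theorem det_lemma [FiniteDimensional K V] (Y : Submodule K V) (x y : Module.End K V) (ζ : K)
    (hx : ∀ v ∈ Y, x v ∈ Y) (hy : ∀ v ∈ Y, y v ∈ Y)
    (hxi : Function.Injective x) (hyi : Function.Injective y)
    (h : x * y = ζ • (y * x)) : ζ ^ Module.finrank K Y = 1 := by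
  set x' : Module.End K Y := x.restrict hx
  set y' : Module.End K Y := y.restrict hy
  have hx' : IsUnit (LinearMap.det x') := by
    refine IsUnit.map LinearMap.det ?_
    rw [LinearMap.isUnit_iff_ker_eq_bot, LinearMap.ker_eq_bot]
    intro a b hab
    have := congrArg Subtype.val hab
    exact Subtype.ext (hxi this)
  have hy' : IsUnit (LinearMap.det y') := by
    refine IsUnit.map LinearMap.det ?_
    rw [LinearMap.isUnit_iff_ker_eq_bot, LinearMap.ker_eq_bot]
    intro a b hab
    have := congrArg Subtype.val hab
    exact Subtype.ext (hyi this)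
  have h' : x' * y' = ζ • (y' * x') := by
    ext v
    have := LinearMap.congr_fun h (v : V)
    simpa [x', y'] using this
  have hd := congrArg LinearMap.det h'
  rw [LinearMap.det_smul, map_mul, map_mul] at hd
  have := hx'.ne_zero
  have := hy'.ne_zero
  have hne : LinearMap.det x' * LinearMap.det y' ≠ 0 := mul_ne_zero ‹_› ‹_›
  apply mul_right_cancel₀ hne
  rw [one_mul]
  nth_rewrite 2 [hd]
  ring

theorem IsSc.comm {x : Module.End K V} (hx : IsSc x) (y : Module.End K V) : x * y = y * x := by
  obtain ⟨c, rfl⟩ := hx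
  simp

/-- Plücker argument for an element with order three data. -/
theorem plucker (halt : ∀ v, B v v = 0) (h3 : (3 : K) ≠ 0) {ω : K}
    {T : Module.End K V} {u w : V} (hT : TD B ω T u w)
    (hl : ∀ x y, B (T x) (T y) = B x y) {v v2 : V}
    (a1 : B v (T v) = 0) (a2 : B v (T (T v)) = 0) (a3 : B v (T v2) = 0) (a4 : B v (T (T v2)) = 0)
    (b1 : B v2 (T v) = 0) (b2 : B v2 (T (T v)) = 0) (b3 : B v2 (T v2) = 0)
    (b4 : B v2 (T (T v2)) = 0) : B v v2 = 0 := by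
  have key : ∀ x : V, ∃ a b : K, x - T x = a • u + b • w := by
    intro x
    obtain ⟨a, b, v0, e, h1, h2, -⟩ := decompB halt hT.buw x
    refine ⟨a * (1 - ω), b * (1 - ω * ω), ?_⟩
    rw [e]
    simp only [map_add, map_smul, hT.Tu, hT.Tw, hT.fix v0 h1 h2]
    module
  obtain ⟨p1, q1, e1⟩ := key v
  obtain ⟨p2, q2, e2⟩ := key (T v)
  obtain ⟨p3, q3, e3⟩ := key v2
  obtain ⟨p4, q4, e4⟩ := key (T v2)
  have sk := skewB halt
  have pl : ∀ p1 q1 p2 q2 : K, B (p1 • u + q1 • w) (p2 • u + q2 • w)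
      = (p1 * q2 - q1 * p2) * B u w := by
    intro p1 q1 p2 q2
    simp only [map_add, map_smul, LinearMap.add_apply, LinearMap.smul_apply, smul_eq_mul, halt,
      sk w u]
    ring
  have g1 : ∀ x y, B (T x) (T (T y)) = B x (T y) := fun x y => hl _ _
  have f13 := pl p1 q1 p3 q3
  have f24 := pl p2 q2 p4 q4
  have f14 := pl p1 q1 p4 q4
  have f23 := pl p2 q2 p3 q3
  have f12 := pl p1 q1 p2 q2
  have f34 := pl p3 q3 p4 q4
  rw [← e1, ← e3] at f13
  rw [← e2, ← e4] at f24
  rw [← e1, ← e4] at f14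
  rw [← e2, ← e3] at f23
  rw [← e1, ← e2] at f12
  rw [← e3, ← e4] at f34
  have c1 : B (T v) v2 = 0 := by rw [sk, b1, neg_zero]
  have c2 : B (T (T v)) v2 = 0 := by rw [sk, b2, neg_zero]
  have c3 : B (T (T v)) (T v) = 0 := by rw [sk, hl, a1, neg_zero]
  have c4 : B (T v) v = 0 := by rw [sk, a1, neg_zero]
  have c5 : B (T (T v)) v = 0 := by rw [sk, a2, neg_zero]
  have c6 : B (T v2) v2 = 0 := by rw [sk, b3, neg_zero]
  simp only [map_sub, LinearMap.sub_apply, hl, a1, a2, a3, a4, b1, b2, b3, b4, c1, c2, c4, c5, c6,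
    halt] at f13 f24 f14 f23 f12 f34
  have h33 : 3 * (B v v2 * B v v2) = 0 := by
    have hb := hT.buw
    have key2 : (p1 * q2 - q1 * p2) * (p3 * q4 - q3 * p4) - (p1 * q3 - q1 * p3) * (p2 * q4 - q2 * p4)
      + (p1 * q4 - q1 * p4) * (p2 * q3 - q2 * p3) = 0 := by ring
    have e13 : (p1 * q3 - q1 * p3) * B u w = 2 * B v v2 := by rw [← f13]; ring
    have e24 : (p2 * q4 - q2 * p4) * B u w = 2 * B v v2 := by rw [← f24]; ring
    have e14 : (p1 * q4 - q1 * p4) * B u w = - B v v2 := by rw [← f14]; ring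
    have e23 : (p2 * q3 - q2 * p3) * B u w = - B v v2 := by rw [← f23]; ring
    have e12 : (p1 * q2 - q1 * p2) * B u w = 0 := by rw [← f12]; ring
    linear_combination (-(B u w) ^ 2) * key2 + (p3 * q4 - q3 * p4) * B u w * e12
      - ((p1 * q3 - q1 * p3) * B u w) * e24 - 2 * B v v2 * e13
      + ((p1 * q4 - q1 * p4) * B u w) * e23 - B v v2 * e14
  simpa [h3] using h33

end basics

section ext

variable {K V : Type*} [Field K] [AddCommGroup V] [Module K V] {B : V →ₗ[K] V →ₗ[K] K}

theorem QD.sq {ι : K} (hι : ι * ι = -1) {I J : Module.End K V} {u w : V} (h : QD B ι I J u w)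
    (a b : K) (v0 : V) (h1 : B u v0 = 0) (h2 : B w v0 = 0) :
    I (I (a • u + b • w + v0)) = -(a • u) + -(b • w) + v0 := by
  have e1 : ι • ι • (a • u) = -(a • u) := by
    rw [smul_smul, hι]; simp
  have e2 : ι • ι • (b • w) = -(b • w) := by
    rw [smul_smul, hι]; simp
  simp only [map_add, map_smul, map_neg, h.Iu, h.Iw, (h.fix v0 h1 h2).1, smul_neg, neg_neg]
  rw [smul_comm a ι, smul_comm a ι, smul_comm b ι, smul_comm b ι, e1, e2]

/-- `X` and `Y` commute up to the scalar `μ`. -/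
def CR (μ : K) (X Y : Module.End K V) : Prop := X * Y = μ • (Y * X)

theorem CR.mul_right {μ ν : K} {X Y Z : Module.End K V} (h1 : CR μ X Y) (h2 : CR ν X Z) :
    CR (μ * ν) X (Y * Z) := by
  unfold CR at *
  rw [← mul_assoc, h1, smul_mul_assoc, mul_assoc, h2, mul_smul_comm, smul_smul, mul_assoc]

theorem CR.mul_left {μ ν : K} {X Y Z : Module.End K V} (h1 : CR μ X Z) (h2 : CR ν Y Z) :
    CR (μ * ν) (X * Y) Z := by
  unfold CR at *
  rw [mul_assoc, h2, mul_smul_comm, ← mul_assoc, h1, smul_mul_assoc, smul_smul, mul_assoc,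
    mul_comm ν]

theorem CR.pow_left {μ : K} {X Z : Module.End K V} (h1 : CR μ X Z) (n : ℕ) :
    CR (μ ^ n) (X ^ n) Z := by
  induction n with
  | zero => simp [CR]
  | succ n ih => rw [pow_succ, pow_succ]; exact ih.mul_left h1

theorem CR.pow_right {μ : K} {X Z : Module.End K V} (h1 : CR μ X Z) (n : ℕ) :
    CR (μ ^ n) X (Z ^ n) := by
  induction n with
  | zero => simp [CR]
  | succ n ih => rw [pow_succ, pow_succ]; exact ih.mul_right h1

theorem CR.eq_one {μ : K} {X Y : Module.End K V} (h : CR μ X Y) (hc : X * Y = Y * X)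
    (hne : Y * X ≠ 0) : μ = 1 := by
  unfold CR at h
  rw [hc] at h
  by_contra hμ
  have : (μ - 1) • (Y * X) = 0 := by rw [sub_smul, one_smul, ← h, sub_self]
  rcases smul_eq_zero.mp this with h' | h'
  · exact hμ (sub_eq_zero.mp h')
  · exact hne h'

variable {G : Type*} [Group G] {ρ : G →* Module.End K V}

theorem rho_inv_apply (g : G) (v : V) : ρ g⁻¹ (ρ g v) = v := by
  rw [← Module.End.mul_apply, ← map_mul]; simp

theorem rho_apply_inv (g : G) (v : V) : ρ g (ρ g⁻¹ v) = v := by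
  rw [← Module.End.mul_apply, ← map_mul]; simp

theorem rho_inj (g : G) : Function.Injective (ρ g) :=
  Function.LeftInverse.injective (rho_inv_apply g)

theorem rho_ne_zero [Nontrivial V] (g : G) : ρ g ≠ 0 := by
  intro h
  obtain ⟨v, hv⟩ := exists_ne (0 : V)
  have := rho_inv_apply (ρ := ρ) g v
  rw [h] at this
  simp at this
  exact hv this.symm

theorem CR.one_of_comm [Nontrivial V] {μ : K} {g h : G} (hc : CR μ (ρ g) (ρ h))
    (he : ρ g * ρ h = ρ h * ρ g) : μ = 1 := by
  apply hc.eq_one he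
  rw [← map_mul]
  exact rho_ne_zero _

theorem CR.conj {μ : K} {a b : G} (hc : CR μ (ρ a) (ρ b)) (g : G) :
    CR μ (ρ (g * a * g⁻¹)) (ρ (g * b * g⁻¹)) := by
  have e1 : ρ (g * a * g⁻¹) * ρ (g * b * g⁻¹) = ρ g * (ρ a * ρ b) * ρ g⁻¹ := by
    simp only [← map_mul]; congr 1; group
  have e2 : ρ (g * b * g⁻¹) * ρ (g * a * g⁻¹) = ρ g * (ρ b * ρ a) * ρ g⁻¹ := by
    simp only [← map_mul]; congr 1; group
  unfold CR at *
  rw [e1, e2, hc]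
  simp

theorem IsSc.conj {a : G} (h : IsSc (ρ a)) (g : G) : IsSc (ρ (g * a * g⁻¹)) := by
  obtain ⟨c, hc⟩ := h
  refine ⟨c, ?_⟩
  rw [map_mul, map_mul, hc]
  simp only [mul_smul_comm, smul_mul_assoc, mul_one]
  rw [← map_mul]
  simp

/-- data of a normal subgroup which is non-abelian elementary modulo scalars -/
structure ExtS (ρ : G →* Module.End K V) (A : Subgroup G) (r : ℕ) : Prop where
  normal : A.Normal
  pow : ∀ a ∈ A, IsSc (ρ (a ^ r))
  comm : ∀ a ∈ A, ∀ b ∈ A, IsSc (ρ (a * b * a⁻¹ * b⁻¹))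
  ex : ∃ a ∈ A, ¬ IsSc (ρ a)
  nd : ∀ a ∈ A, ¬ IsSc (ρ a) → ∃ b ∈ A, ρ a * ρ b ≠ ρ b * ρ a

theorem ExtS.cr [Nontrivial V] {A : Subgroup G} {r : ℕ} (h : ExtS ρ A r) {a b : G} (ha : a ∈ A)
    (hb : b ∈ A) : ∃ ζ : K, ζ ^ r = 1 ∧ CR ζ (ρ a) (ρ b) := by
  obtain ⟨ζ, hζ⟩ := h.comm a ha b hb
  have hc : CR ζ (ρ a) (ρ b) := by
    have e : ρ a * ρ b = ρ (a * b * a⁻¹ * b⁻¹) * (ρ b * ρ a) := by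
      simp only [← map_mul]; congr 1; group
    unfold CR
    rw [e, hζ]; simp
  refine ⟨ζ, ?_, hc⟩
  have h1 := hc.pow_left r
  rw [← map_pow] at h1
  exact h1.one_of_comm ((h.pow a ha).comm _)

theorem odd_pow_eq_one {r : ℕ} (hr : Odd r) {μ : K} (h : μ ^ r = 1) {k : ℕ} (h2 : μ ^ (2 ^ k) = 1) :
    μ = 1 := by
  have h1 := orderOf_dvd_of_pow_eq_one h
  have h3 := orderOf_dvd_of_pow_eq_one h2
  have hc : Nat.Coprime r (2 ^ k) := Nat.Coprime.pow_right _ (Nat.coprime_two_right.mpr hr)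
  have := Nat.dvd_gcd h1 h3
  rw [hc] at this
  exact orderOf_eq_one_iff.mp (Nat.dvd_one.mp this)

theorem eig_mem {X E : Module.End K V} (h : X * E = E * X) {μ : K} :
    ∀ v ∈ Module.End.eigenspace E μ, X v ∈ Module.End.eigenspace E μ := by
  intro v hv
  rw [Module.End.mem_eigenspace_iff] at *
  rw [← Module.End.mul_apply, ← h, Module.End.mul_apply, hv, map_smul]

theorem QD.sq_sq (halt : ∀ v, B v v = 0) {ι : K} (hι : ι * ι = -1) {I J : Module.End K V} {u w : V}
    (h : QD B ι I J u w) : (I * I) * (I * I) = 1 := by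
  ext v
  obtain ⟨a, b, v0, e, h1, h2, -⟩ := decompB halt h.buw v
  have := h.sq hι a b v0 h1 h2
  simp only [Module.End.mul_apply, Module.End.one_apply]
  rw [e, this, ← neg_smul, ← neg_smul, h.sq hι _ _ v0 h1 h2]
  simp

theorem QD.eig (halt : ∀ v, B v v = 0) (h2' : (2 : K) ≠ 0) {ι : K} (hι : ι * ι = -1)
    {I J : Module.End K V} {u w : V}
    (h : QD B ι I J u w) : Module.End.eigenspace (I * I) (-1) = Submodule.span K {u, w} := by
  apply le_antisymm
  · intro v hv
    rw [Module.End.mem_eigenspace_iff] at hv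
    obtain ⟨a, b, v0, e, h1, h2, -⟩ := decompB halt h.buw v
    have := h.sq hι a b v0 h1 h2
    rw [Module.End.mul_apply, e, this] at hv
    have h0 : (2 : K) • v0 = 0 := by
      have : (2 : K) • v0 = (-(a • u) + -(b • w) + v0) - (-1 : K) • (a • u + b • w + v0) := by module
      rw [this, hv, sub_self]
    have h0' : v0 = 0 := by simpa [h2'] using h0
    rw [e, h0', add_zero]
    exact Submodule.mem_span_pair.mpr ⟨a, b, rfl⟩
  · intro v hv
    obtain ⟨a, b, rfl⟩ := Submodule.mem_span_pair.mp hv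
    have := h.sq hι a b 0 (by simp) (by simp)
    rw [Module.End.mem_eigenspace_iff, Module.End.mul_apply]
    simp only [add_zero] at this
    rw [this]; module

theorem eig_double (halt : ∀ v, B v v = 0) (h2' : (2 : K) ≠ 0) {ι : K} (hι : ι * ι = -1)
    {I J I' J' : Module.End K V} {u w u' w' : V}
    (h : QD B ι I J u w) (h' : QD B ι I' J' u' w') (ho : Orth4 B u w u' w') :
    Module.End.eigenspace ((I * I) * (I' * I')) (-1) = Submodule.span K {u, w, u', w'} ∧
    ((I * I) * (I' * I')) * ((I * I) * (I' * I')) = 1 := by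
  have key : ∀ v, ∃ (a b c d : K) (v0 : V), v = a • u + b • w + c • u' + d • w' + v0 ∧
      ((I * I) * (I' * I')) v = -(a • u + b • w + c • u' + d • w') + v0 ∧
      B u v0 = 0 ∧ B w v0 = 0 ∧ B u' v0 = 0 ∧ B w' v0 = 0 := by
    intro v
    obtain ⟨o1, o2, o3, o4⟩ := ho
    have s := skewB halt
    have o1' : B u' u = 0 := by rw [s, o1, neg_zero]
    have o2' : B w' u = 0 := by rw [s, o2, neg_zero]
    have o3' : B u' w = 0 := by rw [s, o3, neg_zero]
    have o4' : B w' w = 0 := by rw [s, o4, neg_zero]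
    obtain ⟨a, b, v1, e, h1, h2, -⟩ := decompB halt h.buw v
    obtain ⟨c, d, v0, e', h1', h2', -⟩ := decompB halt h'.buw v1
    have q1 : B u v0 = 0 := by
      rw [e'] at h1; simpa [o1, o2] using h1
    have q2 : B w v0 = 0 := by
      rw [e'] at h2; simpa [o3, o4] using h2
    refine ⟨a, b, c, d, v0, by rw [e, e']; abel, ?_, q1, q2, h1', h2'⟩
    have e2 : v = c • u' + d • w' + (a • u + b • w + v0) := by rw [e, e']; abel
    simp only [Module.End.mul_apply]
    rw [e2, h'.sq hι c d _ (by simp [h1', o1', o3']) (by simp [h2', o2', o4'])]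
    have e3 : -(c • u') + -(d • w') + (a • u + b • w + v0) =
      a • u + b • w + (-(c • u') + -(d • w') + v0) := by abel
    rw [e3, h.sq hι a b _ (by simp [q1, o1, o2]) (by simp [q2, o3, o4])]
    abel
  have fixv : ∀ v0, B u v0 = 0 → B w v0 = 0 → B u' v0 = 0 → B w' v0 = 0 →
      ((I * I) * (I' * I')) v0 = v0 := by
    intro v0 h1 h2 h3 h4
    simp only [Module.End.mul_apply]
    rw [(h'.fix v0 h3 h4).1, (h'.fix v0 h3 h4).1, (h.fix v0 h1 h2).1, (h.fix v0 h1 h2).1]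
  have neg : ∀ x ∈ ({u, w, u', w'} : Set V), ((I * I) * (I' * I')) x = -x := by
    obtain ⟨o1, o2, o3, o4⟩ := ho
    have s := skewB halt
    have o1' : B u' u = 0 := by rw [s, o1, neg_zero]
    have o2' : B w' u = 0 := by rw [s, o2, neg_zero]
    have o3' : B u' w = 0 := by rw [s, o3, neg_zero]
    have o4' : B w' w = 0 := by rw [s, o4, neg_zero]
    have hu : I (I u) = -u := by rw [h.Iu, map_smul, h.Iu, smul_smul, hι]; simp
    have hw : I (I w) = -w := by rw [h.Iw, map_neg, map_smul, h.Iw, smul_neg, smul_smul, hι]; simp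
    have hu' : I' (I' u') = -u' := by rw [h'.Iu, map_smul, h'.Iu, smul_smul, hι]; simp
    have hw' : I' (I' w') = -w' := by
      rw [h'.Iw, map_neg, map_smul, h'.Iw, smul_neg, smul_smul, hι]; simp
    intro x hx
    simp only [Set.mem_insert_iff, Set.mem_singleton_iff] at hx
    simp only [Module.End.mul_apply]
    rcases hx with rfl | rfl | rfl | rfl
    · rw [(h'.fix _ o1' o2').1, (h'.fix _ o1' o2').1, hu]
    · rw [(h'.fix _ o3' o4').1, (h'.fix _ o3' o4').1, hw]
    · rw [hu', map_neg, map_neg, (h.fix _ o1 o3).1, (h.fix _ o1 o3).1]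
    · rw [hw', map_neg, map_neg, (h.fix _ o2 o4).1, (h.fix _ o2 o4).1]
  constructor
  · apply le_antisymm
    · intro v hv
      rw [Module.End.mem_eigenspace_iff] at hv
      obtain ⟨a, b, c, d, v0, e, e', -⟩ := key v
      rw [e', e] at hv
      have h0 : (2 : K) • v0 = 0 := by
        have : (2 : K) • v0 = (-(a • u + b • w + c • u' + d • w') + v0) -
          (-1 : K) • (a • u + b • w + c • u' + d • w' + v0) := by module
        rw [this, hv, sub_self]
      have h0' : v0 = 0 := by simpa [h2'] using h0
      rw [e, h0', add_zero]
      refine add_mem (add_mem (add_mem ?_ ?_) ?_) ?_ <;>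
        exact Submodule.smul_mem _ _ (Submodule.subset_span (by simp))
    · rw [Submodule.span_le]
      intro x hx
      have := neg x hx
      simp only [SetLike.mem_coe]
      rw [Module.End.mem_eigenspace_iff, this]; simp
  · ext v
    obtain ⟨a, b, c, d, v0, e, e', k1, k2, k3, k4⟩ := key v
    rw [Module.End.mul_apply, e']
    simp only [map_add, map_neg, map_smul, fixv v0 k1 k2 k3 k4, neg u (by simp), neg w (by simp),
      neg u' (by simp), neg w' (by simp)]
    rw [Module.End.one_apply]
    conv_rhs => rw [e]
    module

theorem mul_mem_conj {A : Subgroup G} (hA : A.Normal) {a : G} (ha : a ∈ A) (g : G) :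
    g * a * g⁻¹ ∈ A := hA.conj_mem a ha g

/-- in the odd case, an involution with two-dimensional `-1`-space inverts `A` modulo scalars -/
theorem odd_inverts [FiniteDimensional K V] [Nontrivial V] (halt : ∀ v, B v v = 0)
    (h2' : (2 : K) ≠ 0)
    {ι : K} (hι : ι * ι = -1) {A : Subgroup G} {r : ℕ} (hr : Odd r) (hA : ExtS ρ A r) {i j : G}
    {u w : V} (h : QD B ι (ρ i) (ρ j) u w) {a : G} (ha : a ∈ A) :
    IsSc (ρ (a * ((i * i) * a * (i * i)⁻¹))) := by
  set e := i * i with he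
  have hE : ρ e = ρ i * ρ i := by rw [he, map_mul]
  have hEE : ρ e * ρ e = 1 := by rw [hE]; exact h.sq_sq halt hι
  -- the element `a * a^e` commutes with `E`
  have key : ∀ a ∈ A, CR 1 (ρ (a * (e * a * e⁻¹))) (ρ e) := by
    intro a ha
    have ha' := mul_mem_conj hA.normal ha e
    obtain ⟨ζ, hζ, hc⟩ := hA.cr ha' ha
    have e1 : ρ (e * (a * (e * a * e⁻¹)) * e⁻¹) = ρ (e * a * e⁻¹) * ρ a := by
      have : e * (a * (e * a * e⁻¹)) * e⁻¹ = (e * a * e⁻¹) * ((e * e) * a * (e * e)⁻¹) := by group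
      rw [this, map_mul, map_mul _ (e * e * a), map_mul _ (e * e) a, map_mul _ e e, hEE]
      have h1 : ρ (e * e)⁻¹ = 1 := by
        have : ρ (e * e) * ρ (e * e)⁻¹ = 1 := by rw [← map_mul]; simp
        rwa [map_mul _ e e, hEE, one_mul] at this
      rw [h1]; simp
    have e2 : CR ζ (ρ e) (ρ (a * (e * a * e⁻¹))) := by
      unfold CR
      have : ρ e * ρ (a * (e * a * e⁻¹)) = ρ (e * (a * (e * a * e⁻¹)) * e⁻¹) * ρ e := by
        simp only [← map_mul]; congr 1; group
      rw [this, e1, hc, map_mul _ a, smul_mul_assoc]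
    have e3 : ζ = 1 := by
      have := e2.pow_left 2
      rw [pow_two (ρ e), hEE] at this
      have h1 : ζ ^ 2 = 1 := this.eq_one (by simp) (by rw [mul_one]; exact rho_ne_zero _)
      exact odd_pow_eq_one hr hζ (k := 1) (by simpa using h1)
    rw [e3] at e2
    unfold CR at *
    simpa using e2.symm
  by_contra hns
  set b := a * (e * a * e⁻¹) with hb
  have hbA : b ∈ A := A.mul_mem ha (mul_mem_conj hA.normal ha e)
  obtain ⟨w0, hw0, hne⟩ := hA.nd b hbA hns
  obtain ⟨ζ, hζ, hc⟩ := hA.cr hbA hw0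
  have hbE := key a ha
  have hwE := key w0 hw0
  have c1 := hc.conj e
  have hbb : ρ (e * b * e⁻¹) = ρ b := by
    have : ρ (e * b * e⁻¹) = (ρ e * ρ b) * ρ e⁻¹ := by simp only [← map_mul]
    unfold CR at hbE
    rw [one_smul] at hbE
    rw [this, ← hbE, mul_assoc, ← map_mul ρ e]
    rw [mul_inv_cancel, map_one, mul_one]
  rw [hbb] at c1
  have c2 := hc.mul_right c1
  rw [← map_mul] at c2
  unfold CR at hbE hwE
  rw [one_smul] at hbE hwE
  have := det_lemma (Module.End.eigenspace (ρ e) (-1)) _ _ _ (eig_mem hbE) (eig_mem hwE)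
    (rho_inj _) (rho_inj _) c2
  rw [hE, h.eig halt h2' hι, finrank_pair halt h.buw] at this
  have hz : ζ = 1 := odd_pow_eq_one hr hζ (k := 2) (by rw [← this]; ring)
  apply hne
  unfold CR at hc
  rw [hc, hz, one_smul]

theorem odd_contra [FiniteDimensional K V] [Nontrivial V] (halt : ∀ v, B v v = 0)
    (h2' : (2 : K) ≠ 0)
    {ι : K} (hι : ι * ι = -1) {A : Subgroup G} {r : ℕ} (hr : Odd r) (hA : ExtS ρ A r) {i j i' j' : G}
    {u w u' w' : V} (h : QD B ι (ρ i) (ρ j) u w) (h' : QD B ι (ρ i') (ρ j') u' w')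
    (ho : Orth4 B u w u' w') : False := by
  have I1 := fun a (ha : a ∈ A) => odd_inverts halt h2' hι hr hA h ha
  have I2 := fun a (ha : a ∈ A) => odd_inverts halt h2' hι hr hA h' ha
  set e := i * i with he
  set e' := i' * i' with he'
  obtain ⟨hd, hF⟩ := eig_double halt h2' hι h h' ho
  have hFe : ρ i * ρ i * (ρ i' * ρ i') = ρ (e * e') := by simp only [he, he', map_mul]
  rw [hFe] at hd hF
  have key : ∀ a ∈ A, ρ a * ρ (e * e') = ρ (e * e') * ρ a := by
    intro a ha
    have ha' := mul_mem_conj hA.normal ha e'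
    set a' := e' * a * e'⁻¹ with haa
    obtain ⟨c', hc'⟩ := I2 a ha
    obtain ⟨c'', hc''⟩ := I1 a' ha'
    have hc'0 : c' ≠ 0 := by
      rintro rfl
      exact rho_ne_zero _ (hc'.trans (zero_smul _ _))
    rw [map_mul] at hc' hc''
    have hcomm : ρ a' * ρ a = c' • 1 := by
      have e1 : ρ a * (ρ a' * ρ a) = ρ a * (c' • 1) := by
        rw [← mul_assoc, hc']; simp
      ext v
      have := LinearMap.congr_fun e1 v
      simp only [Module.End.mul_apply] at this
      exact rho_inj _ this
    have hcr : CR (c'' / c') (ρ (e * e')) (ρ a) := by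
      unfold CR
      have e0 : ρ (e * e') * ρ a = ρ (e * a' * e⁻¹) * ρ (e * e') := by
        simp only [← map_mul]; congr 1; rw [haa]; group
      have e1 : ρ (e * a' * e⁻¹) = (c'' / c') • ρ a := by
        have e2 : ρ a' * ρ (e * a' * e⁻¹) = ρ a' * ((c'' / c') • ρ a) := by
          rw [hc'', mul_smul_comm, hcomm, smul_smul, div_mul_cancel₀ _ hc'0]
        ext v
        have := LinearMap.congr_fun e2 v
        simp only [Module.End.mul_apply] at this
        exact rho_inj _ this
      rw [e0, e1, smul_mul_assoc]
    have m2 := hcr.pow_left 2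
    rw [pow_two (ρ (e * e')), hF] at m2
    have h1 := m2.eq_one (by simp) (by rw [mul_one]; exact rho_ne_zero _)
    have mr := hcr.pow_right r
    rw [← map_pow] at mr
    have h3 := mr.one_of_comm ((hA.pow a ha).comm _).symm
    have h4 : c'' / c' = 1 := odd_pow_eq_one hr h3 (k := 1) (by simpa using h1)
    rw [h4] at hcr
    unfold CR at hcr
    simpa using hcr.symm
  obtain ⟨a, ha, hns⟩ := hA.ex
  obtain ⟨b, hb, hne⟩ := hA.nd a ha hns
  obtain ⟨ζ, hζ, hc⟩ := hA.cr ha hb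
  have := det_lemma (Module.End.eigenspace (ρ (e * e')) (-1)) _ _ _ (eig_mem (key a ha))
    (eig_mem (key b hb)) (rho_inj _) (rho_inj _) hc
  rw [hd, finrank_quad halt h.buw h'.buw ho] at this
  have hz : ζ = 1 := odd_pow_eq_one hr hζ (k := 2) (by rw [← this]; ring)
  apply hne
  unfold CR at hc
  rw [hc, hz, one_smul]

end ext

section two

variable {K V : Type*} [Field K] [AddCommGroup V] [Module K V] {B : V →ₗ[K] V →ₗ[K] K}
variable {G : Type*} [Group G] {ρ : G →* Module.End K V}

/-- the subgroup of elements acting as scalars -/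
def scSub (ρ : G →* Module.End K V) : Subgroup G where
  carrier := {g | IsSc (ρ g)}
  one_mem' := ⟨1, by simp⟩
  mul_mem' := by
    rintro a b ⟨c, hc⟩ ⟨d, hd⟩
    refine ⟨c * d, ?_⟩
    rw [map_mul, hc, hd]
    simp [smul_smul, mul_comm]
  inv_mem' := by
    rintro a ⟨c, hc⟩
    by_cases h0 : c = 0
    · refine ⟨1, ?_⟩
      have h1 : ρ a = 0 := by rw [hc, h0, zero_smul]
      have : ∀ v : V, v = 0 := fun v => by
        have := rho_inv_apply (ρ := ρ) a v
        rw [h1] at this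
        simpa using this.symm
      ext v
      rw [this v]; simp
    · refine ⟨c⁻¹, ?_⟩
      have h1 : ρ a⁻¹ * ρ a = 1 := by rw [← map_mul]; simp
      rw [hc] at h1
      rw [← h1]
      simp [smul_smul, h0]

theorem scSub_normal : (scSub ρ).Normal := ⟨fun a ha g => IsSc.conj ha g⟩

theorem mem_scSub {g : G} : g ∈ scSub ρ ↔ IsSc (ρ g) := Iff.rfl

theorem exists_fixed [Finite G] {A : Subgroup G} (hA : A.Normal) (hpow : ∀ a ∈ A, IsSc (ρ (a ^ 2)))
    (hex : ∃ a ∈ A, ¬ IsSc (ρ a)) {S : Subgroup G} (hS : IsPGroup 2 S) :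
    ∃ z ∈ A, ¬ IsSc (ρ z) ∧ ∀ s ∈ S, IsSc (ρ (s * z * s⁻¹ * z⁻¹)) := by
  classical
  have hN : (scSub ρ).Normal := scSub_normal
  set N := scSub ρ with hNdef
  set X : Subgroup (G ⧸ N) := A.map (QuotientGroup.mk' N) with hX
  have hXn : X.Normal := hA.map _ (QuotientGroup.mk'_surjective N)
  let φ : S →* MulAut X := (MulAut.conjNormal).comp ((QuotientGroup.mk' N).comp S.subtype)
  let _ : MulAction S X := MulAction.compHom X φ
  have : Fact (Nat.Prime 2) := ⟨Nat.prime_two⟩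
  have hXp : IsPGroup 2 X := by
    intro ⟨x, hx⟩
    obtain ⟨a, ha, rfl⟩ := hx
    refine ⟨1, ?_⟩
    apply Subtype.ext
    exact (QuotientGroup.eq_one_iff (a ^ 2)).mpr (hpow a ha)
  obtain ⟨a, ha, hna⟩ := hex
  have hXne : Nontrivial X := by
    refine ⟨⟨⟨QuotientGroup.mk' N a, a, ha, rfl⟩, 1, ?_⟩⟩
    intro h
    have := congrArg Subtype.val h
    exact hna ((QuotientGroup.eq_one_iff _).mp this)
  have h2 : 2 ∣ Nat.card X := by
    obtain ⟨n, hn⟩ := IsPGroup.iff_card.mp hXp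
    have h1 : 1 < Nat.card X := Finite.one_lt_card
    rw [hn] at h1 ⊢
    apply dvd_pow_self
    rintro rfl
    simp at h1
  obtain ⟨x, hx, hx1⟩ := hS.exists_fixed_point_of_prime_dvd_card_of_fixed_point X h2
    (a := (1 : X)) (by
      intro s
      exact map_one (φ s))
  obtain ⟨z, hz, hzx⟩ := x.2
  refine ⟨z, hz, ?_, ?_⟩
  · intro h
    apply hx1
    ext
    rw [← hzx]
    exact ((QuotientGroup.eq_one_iff _).mpr h).symm
  · intro s hs
    have h1 := congrArg Subtype.val (hx ⟨s, hs⟩)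
    have h2 : ((φ ⟨s, hs⟩ x : X) : G ⧸ N) = x := h1
    simp only [φ, MonoidHom.comp_apply, MulAut.conjNormal_apply] at h2
    rw [← hzx] at h2
    have h3 : QuotientGroup.mk' N (s * z * s⁻¹ * z⁻¹) = 1 := by
      rw [map_mul _ _ z⁻¹, map_inv, mul_inv_eq_one, ← h2]
      simp
    exact (QuotientGroup.eq_one_iff _).mp h3

theorem lam_ne_zero {lam : G → K} (hlam : ∀ g x y, B (ρ g x) (ρ g y) = lam g * B x y) {u w : V}
    (h : B u w ≠ 0) (g : G) : lam g ≠ 0 := by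
  intro h0
  have h1 := hlam g⁻¹ (ρ g u) (ρ g w)
  rw [rho_inv_apply, rho_inv_apply, hlam g, h0] at h1
  simp at h1
  exact h h1

theorem eig_one_plane (halt : ∀ v, B v v = 0) (h2 : (2 : K) ≠ 0) {ι : K} (hι : ι * ι = -1)
    {I J : Module.End K V} {u w : V} (h : QD B ι I J u w) {χ : K} (hχ : χ ≠ 1) :
    (∃ x : V, ∀ v, I v = χ • v → ∃ a : K, v = a • x) ∧
    (∃ x : V, ∀ v, J v = χ • v → ∃ a : K, v = a • x) := by
  have hχ' : 1 - χ ≠ 0 := fun h => hχ (sub_eq_zero.mp h).symm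
  have hι0 : ι ≠ 0 := by rintro rfl; simp at hι
  constructor
  · have key : ∀ v, I v = χ • v → ∃ a b : K, v = a • u + b • w ∧ (ι - χ) * a = 0 ∧
        (-ι - χ) * b = 0 := by
      intro v hv
      obtain ⟨a, b, v0, e, h1, h2, -⟩ := decompB halt h.buw v
      rw [e] at hv
      simp only [map_add, map_smul, h.Iu, h.Iw, (h.fix v0 h1 h2).1] at hv
      have h0 : ((ι - χ) * a) • u + ((-ι - χ) * b) • w + (1 - χ) • v0 = 0 := by
        have h0' := sub_eq_zero.mpr hv
        rw [← h0']; module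
      obtain ⟨r1, r2, r3⟩ := coeff_zero halt h.buw (by simp [h1]) (by simp [h2]) h0
      have : v0 = 0 := by simpa [hχ'] using r3
      exact ⟨a, b, by rw [e, this, add_zero], r1, r2⟩
    by_cases hc : χ = ι
    · refine ⟨u, fun v hv => ?_⟩
      obtain ⟨a, b, e, -, r2⟩ := key v hv
      have : b = 0 := by
        rcases mul_eq_zero.mp r2 with r | r
        · exfalso
          have : 2 * ι = 0 := by rw [hc] at r; linear_combination -r
          simp [h2, hι0] at this
        · exact r
      exact ⟨a, by rw [e, this]; simp⟩
    · refine ⟨w, fun v hv => ?_⟩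
      obtain ⟨a, b, e, r1, -⟩ := key v hv
      have : a = 0 := by
        rcases mul_eq_zero.mp r1 with r | r
        · exact absurd (sub_eq_zero.mp r).symm hc
        · exact r
      exact ⟨b, by rw [e, this]; simp⟩
  · refine ⟨χ • u + w, fun v hv => ?_⟩
    obtain ⟨a, b, v0, e, h1, h2, -⟩ := decompB halt h.buw v
    rw [e] at hv
    simp only [map_add, map_smul, h.Ju, h.Jw, (h.fix v0 h1 h2).2] at hv
    have h0 : (-b - χ * a) • u + (a - χ * b) • w + (1 - χ) • v0 = 0 := by
      have h0' := sub_eq_zero.mpr hv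
      rw [← h0']; module
    obtain ⟨r1, r2, r3⟩ := coeff_zero halt h.buw (by simp [h1]) (by simp [h2]) h0
    have hv0 : v0 = 0 := by simpa [hχ'] using r3
    refine ⟨b, ?_⟩
    have : a = χ * b := by linear_combination r2
    rw [e, hv0, this]; module

theorem cr_one_of_fixed (halt : ∀ v, B v v = 0)
    {lam : G → K} (hlam : ∀ g x y, B (ρ g x) (ρ g y) = lam g * B x y)
    {v1 v2 : V} (hv : B v1 v2 ≠ 0) {I : Module.End K V} {z : G} {χ : K} (hc : CR χ I (ρ z))
    (f1 : I v1 = v1) (f2 : I v2 = v2) {x : V} (hx : ∀ v, I v = χ • v → ∃ a : K, v = a • x) :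
    False := by
  have e : ∀ v, I v = v → I (ρ z v) = χ • ρ z v := by
    intro v hv
    have := LinearMap.congr_fun hc v
    simp only [Module.End.mul_apply, LinearMap.smul_apply, hv] at this
    exact this
  obtain ⟨a, ha⟩ := hx _ (e v1 f1)
  obtain ⟨b, hb⟩ := hx _ (e v2 f2)
  have := hlam z v1 v2
  rw [ha, hb] at this
  simp [halt] at this
  rcases this with h | h
  · exact lam_ne_zero hlam hv z h
  · exact hv h

/-- the scalar relation from a commutator -/
theorem cr_of_comm {s z : G} (h : IsSc (ρ (s * z * s⁻¹ * z⁻¹))) : ∃ χ : K, CR χ (ρ s) (ρ z) := by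
  obtain ⟨ζ, hζ⟩ := h
  refine ⟨ζ, ?_⟩
  have e : ρ s * ρ z = ρ (s * z * s⁻¹ * z⁻¹) * (ρ z * ρ s) := by
    simp only [← map_mul]; congr 1; group
  unfold CR
  rw [e, hζ]; simp

theorem TD.cube (halt : ∀ v, B v v = 0) {ω : K} (hω : ω * ω + ω + 1 = 0) {T : Module.End K V}
    {u w : V} (h : TD B ω T u w) : T * T * T = 1 := by
  have h3 : ω * ω * ω = 1 := by linear_combination (ω - 1) * hω
  ext v
  obtain ⟨a, b, v0, e, h1, h2, -⟩ := decompB halt h.buw v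
  simp only [Module.End.mul_apply, Module.End.one_apply]
  rw [e]
  simp only [map_add, map_smul, h.Tu, h.Tw, h.fix v0 h1 h2, smul_smul]
  congr 2
  · congr 1; linear_combination a * h3
  · congr 1; linear_combination (b * ω * ω * ω + b) * h3

theorem TD.lam_one {ω : K} (hω : ω * ω + ω + 1 = 0) {t : G} {u w : V}
    (h : TD B ω (ρ t) u w) {lam : G → K} (hlam : ∀ g x y, B (ρ g x) (ρ g y) = lam g * B x y) :
    lam t = 1 := by
  have h3 : ω * ω * ω = 1 := by linear_combination (ω - 1) * hω
  have := hlam t u w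
  rw [h.Tu, h.Tw] at this
  simp only [map_smul, LinearMap.smul_apply, smul_eq_mul] at this
  apply mul_right_cancel₀ h.buw
  rw [← this]
  linear_combination (B u w) * h3

theorem TD.eig (halt : ∀ v, B v v = 0) (h3 : (3 : K) ≠ 0) {ω : K} (hω : ω * ω + ω + 1 = 0)
    {T : Module.End K V} {u w : V} (h : TD B ω T u w) {v : V} (hv : T v = ω • v) :
    ∃ a : K, v = a • u := by
  have h1' : 1 - ω ≠ 0 := by
    intro h
    have : ω = 1 := (sub_eq_zero.mp h).symm
    rw [this] at hω
    exact h3 (by linear_combination hω)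
  have h2' : ω * ω - ω ≠ 0 := by
    intro h
    have h0 : ω ≠ 0 := by rintro rfl; simp at hω
    have : ω * (ω - 1) = 0 := by linear_combination h
    rcases mul_eq_zero.mp this with h | h
    · exact h0 h
    · exact h1' (by linear_combination -h)
  obtain ⟨a, b, v0, e, h1, h2, -⟩ := decompB halt h.buw v
  rw [e] at hv
  simp only [map_add, map_smul, h.Tu, h.Tw, h.fix v0 h1 h2] at hv
  have h0 : (0 : K) • u + ((ω * ω - ω) * b) • w + (1 - ω) • v0 = 0 := by
    have h0' := sub_eq_zero.mpr hv
    rw [← h0']; module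
  obtain ⟨-, r2, r3⟩ := coeff_zero halt h.buw (by simp [h1]) (by simp [h2]) h0
  have : v0 = 0 := by simpa [h1'] using r3
  have hb : b = 0 := by simpa [h2'] using r2
  exact ⟨a, by rw [e, this, hb]; simp⟩

theorem two_norm_commutes [Nontrivial V] {A : Subgroup G} (hA : ExtS ρ A 2) {t : G}
    (ht : ρ t * ρ t * ρ t = 1) {a : G} (ha : a ∈ A) :
    ρ t * ρ (a * (t * a * t⁻¹) * (t * (t * a * t⁻¹) * t⁻¹)) =
    ρ (a * (t * a * t⁻¹) * (t * (t * a * t⁻¹) * t⁻¹)) * ρ t := by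
  have ha1 := mul_mem_conj hA.normal ha t
  have ha2 := mul_mem_conj hA.normal ha1 t
  set a1 := t * a * t⁻¹ with h1
  set a2 := t * a1 * t⁻¹ with h2
  obtain ⟨ζ, hζ, hc⟩ := hA.cr (A.mul_mem ha1 ha2) ha
  have e3 : ρ (t * a2 * t⁻¹) = ρ a := by
    have : t * a2 * t⁻¹ = (t * t * t) * a * (t * t * t)⁻¹ := by rw [h2, h1]; group
    have h4 : ρ (t * t * t) = 1 := by rw [map_mul, map_mul, ht]
    have h5 : ρ (t * t * t)⁻¹ = 1 := by
      have : ρ (t * t * t) * ρ (t * t * t)⁻¹ = 1 := by rw [← map_mul]; simp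
      rwa [h4, one_mul] at this
    rw [this, map_mul, map_mul _ (t * t * t) a, h4, h5]; simp
  have e2 : CR ζ (ρ t) (ρ (a * a1 * a2)) := by
    unfold CR
    have : ρ t * ρ (a * a1 * a2) = ρ (a1 * a2) * ρ (t * a2 * t⁻¹) * ρ t := by
      simp only [← map_mul]; congr 1
      rw [h2, h1]; group
    rw [this, e3, hc, ← map_mul ρ a, smul_mul_assoc, ← mul_assoc a a1 a2]
  have e4 := e2.pow_left 3
  have : ρ t ^ 3 = 1 := by rw [← ht]; noncomm_ring
  rw [this] at e4
  have h6 : ζ ^ 3 = 1 := e4.eq_one (by simp) (by rw [mul_one]; exact rho_ne_zero _)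
  have h7 : ζ = 1 := by linear_combination h6 - ζ * hζ
  unfold CR at e2
  rwa [h7, one_smul] at e2

theorem two_norm_scalar [Nontrivial V] (halt : ∀ v, B v v = 0) (h3 : (3 : K) ≠ 0) {ω : K}
    (hω : ω * ω + ω + 1 = 0) {A : Subgroup G} (hA : ExtS ρ A 2) {t : G} {u w : V}
    (h : TD B ω (ρ t) u w) {a : G} (ha : a ∈ A) :
    IsSc (ρ (a * (t * a * t⁻¹) * (t * (t * a * t⁻¹) * t⁻¹))) := by
  have ht := h.cube halt hω
  have hbc := two_norm_commutes hA ht ha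
  by_contra hns
  have ha1 := mul_mem_conj hA.normal ha t
  have ha2 := mul_mem_conj hA.normal ha1 t
  set b := a * (t * a * t⁻¹) * (t * (t * a * t⁻¹) * t⁻¹) with hb
  have hbA : b ∈ A := A.mul_mem (A.mul_mem ha ha1) ha2
  obtain ⟨x, hx, hne⟩ := hA.nd b hbA hns
  obtain ⟨ζ, hζ, hc⟩ := hA.cr hbA hx
  have hwc := two_norm_commutes hA ht hx
  have hbb : ρ (t * b * t⁻¹) = ρ b := by
    have : ρ (t * b * t⁻¹) = (ρ t * ρ b) * ρ t⁻¹ := by simp only [← map_mul]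
    rw [this, hbc, mul_assoc, ← map_mul ρ t, mul_inv_cancel, map_one, mul_one]
  have c1 := hc.conj t
  rw [hbb] at c1
  have c2 := c1.conj t
  rw [hbb] at c2
  have c3 := (hc.mul_right c1).mul_right c2
  rw [← map_mul, ← map_mul] at c3
  set b' := x * (t * x * t⁻¹) * (t * (t * x * t⁻¹) * t⁻¹) with hb'
  have eb : ∀ g : G, ρ t * ρ g = ρ g * ρ t → ∃ a : K, ρ g u = a • u := by
    intro g hg
    apply h.eig halt h3 hω
    rw [← Module.End.mul_apply, hg, Module.End.mul_apply, h.Tu, map_smul]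
  have hu := (ne_of_B h.buw).1
  have nz : ∀ (g : G) (a : K), ρ g u = a • u → a ≠ 0 := by
    rintro g a hg rfl
    rw [zero_smul] at hg
    exact hu (rho_inj (ρ := ρ) g (by rw [hg, map_zero]))
  obtain ⟨β, hβ⟩ := eb b hbc
  obtain ⟨γ, hγ⟩ := eb b' hwc
  have := LinearMap.congr_fun c3 u
  simp only [Module.End.mul_apply, LinearMap.smul_apply, hβ, hγ, map_smul, smul_smul] at this
  have h5 : (γ * β) = ζ * ζ * ζ * (β * γ) := smul_left_injective K hu this
  have h6 : ζ * ζ * ζ = 1 := by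
    apply mul_right_cancel₀ (mul_ne_zero (nz _ _ hβ) (nz _ _ hγ))
    rw [← h5]; ring
  have h7 : ζ = 1 := by linear_combination h6 - ζ * hζ
  apply hne
  unfold CR at hc
  rw [hc, h7, one_smul]

theorem two_contra [Finite G] (halt : ∀ v, B v v = 0) (hnd : ∀ v, (∀ x, B v x = 0) → v = 0)
    {lam : G → K} (hlam : ∀ g x y, B (ρ g x) (ρ g y) = lam g * B x y)
    (h2 : (2 : K) ≠ 0) (h3 : (3 : K) ≠ 0) {ι : K} (hι : ι * ι = -1) {ω : K}
    (hω : ω * ω + ω + 1 = 0) {A : Subgroup G} (hA : ExtS ρ A 2)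
    {S : Subgroup G} (hS : IsPGroup 2 S) {i j : G} (hi : i ∈ S) (hj : j ∈ S) {u w : V}
    (hQ : QD B ι (ρ i) (ρ j) u w) {v1 v2 : V} (hv : B v1 v2 ≠ 0) (ho : Orth4 B u w v1 v2)
    {t : G} {ut wt : V} (hT : TD B ω (ρ t) ut wt) : False := by
  have hu := (ne_of_B hQ.buw).1
  have : Nontrivial V := ⟨⟨u, 0, hu⟩⟩
  obtain ⟨o1, o2, o3, o4⟩ := ho
  obtain ⟨z, hz, hzn, hzf⟩ := exists_fixed hA.normal hA.pow hA.ex hS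
  have hcI : CR 1 (ρ i) (ρ z) := by
    obtain ⟨χ, hχ⟩ := cr_of_comm (hzf i hi)
    by_cases h1 : χ = 1
    · rwa [h1] at hχ
    · obtain ⟨x, hx⟩ := (eig_one_plane halt h2 hι hQ h1).1
      exact (cr_one_of_fixed halt hlam hv hχ (hQ.fix _ o1 o3).1 (hQ.fix _ o2 o4).1 hx).elim
  have hcJ : CR 1 (ρ j) (ρ z) := by
    obtain ⟨χ, hχ⟩ := cr_of_comm (hzf j hj)
    by_cases h1 : χ = 1
    · rwa [h1] at hχ
    · obtain ⟨x, hx⟩ := (eig_one_plane halt h2 hι hQ h1).2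
      exact (cr_one_of_fixed halt hlam hv hχ (hQ.fix _ o1 o3).2 (hQ.fix _ o2 o4).2 hx).elim
  have hι1 : ι ≠ 1 := by
    rintro rfl
    exact h2 (by linear_combination hι)
  unfold CR at hcI hcJ
  rw [one_smul] at hcI hcJ
  obtain ⟨c, hc⟩ := hA.pow z hz
  have yy : ∀ v, ρ z (ρ z v) = c • v := by
    intro v
    rw [← Module.End.mul_apply, ← map_mul, ← pow_two, hc]; simp
  -- `y` acts as a scalar on the plane
  obtain ⟨α, hα⟩ : ∃ α : K, ρ z u = α • u := by
    have hIy : ρ i (ρ z u) = ι • ρ z u := by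
      rw [← Module.End.mul_apply, hcI, Module.End.mul_apply, hQ.Iu, map_smul]
    obtain ⟨a, b, v0, e, q1, q2, -⟩ := decompB halt hQ.buw (ρ z u)
    rw [e] at hIy
    simp only [map_add, map_smul, hQ.Iu, hQ.Iw, (hQ.fix v0 q1 q2).1] at hIy
    have h0 : (0 : K) • u + ((-2 * ι) * b) • w + (1 - ι) • v0 = 0 := by
      have h0' := sub_eq_zero.mpr hIy
      rw [← h0']; module
    obtain ⟨-, r2, r3⟩ := coeff_zero halt hQ.buw (by simp [q1]) (by simp [q2]) h0
    have hv0 : v0 = 0 := by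
      have : 1 - ι ≠ 0 := fun h => hι1 (sub_eq_zero.mp h).symm
      simpa [this] using r3
    have hι0 : ι ≠ 0 := by rintro rfl; simp at hι
    have hb : b = 0 := by simpa [h2, hι0] using r2
    exact ⟨a, by rw [e, hv0, hb]; simp⟩
  have hαw : ρ z w = α • w := by
    rw [← hQ.Ju, ← Module.End.mul_apply, ← hcJ, Module.End.mul_apply, hα, map_smul]
  have hcα : c = α * α := by
    have := yy u
    rw [hα, map_smul, hα, smul_smul] at this
    exact (smul_left_injective K hu this).symm
  have hcl : lam z = c := by
    have := hlam z u w
    rw [hα, hαw] at this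
    simp only [map_smul, LinearMap.smul_apply, smul_eq_mul] at this
    apply mul_right_cancel₀ hQ.buw
    rw [← this, hcα]; ring
  have hc0 : c ≠ 0 := by rw [← hcl]; exact lam_ne_zero hlam hQ.buw z
  have sa : ∀ x v, B (ρ z x) v = B x (ρ z v) := by
    intro x v
    have := hlam z x (ρ z v)
    rw [yy, map_smul, smul_eq_mul, hcl] at this
    exact mul_left_cancel₀ hc0 this
  -- `T`
  have hT1 : ∀ x y, B (ρ t x) (ρ t y) = B x y := by
    intro x y; rw [hlam, hT.lam_one hω hlam, one_mul]
  have hTc : ∀ v, ρ t (ρ t (ρ t v)) = v := by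
    intro v
    have := LinearMap.congr_fun (hT.cube halt hω) v
    simpa using this
  set y := ρ z with hy
  set Y := ρ (t * z * t⁻¹) with hY
  set Y' := ρ (t * (t * z * t⁻¹) * t⁻¹) with hY'
  set T := ρ t with hTd
  have TY : ∀ v, T (y v) = Y (T v) := by
    intro v
    simp only [hTd, hy, hY, ← Module.End.mul_apply, ← map_mul]
    congr 2; group
  have TY' : ∀ v, T (Y v) = Y' (T v) := by
    intro v
    simp only [hTd, hY', hY, ← Module.End.mul_apply, ← map_mul]
    congr 2; group
  have TY'' : ∀ v, T (Y' v) = y (T v) := by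
    intro v
    have h1 := hTc v
    rw [← h1, ← TY', ← TY, hTc, hTc]
  have tinj : Function.Injective T := rho_inj t
  have Tsurj : ∀ v, ∃ x, v = T x := fun v => ⟨T (T v), (hTc v).symm⟩
  have YY : ∀ v, Y (Y v) = c • v := by
    intro v
    obtain ⟨x, rfl⟩ := Tsurj v
    rw [← TY, ← TY, yy, map_smul]
  have YY' : ∀ v, Y' (Y' v) = c • v := by
    intro v
    obtain ⟨x, rfl⟩ := Tsurj v
    rw [← TY', ← TY', YY, map_smul]
  have saY : ∀ x v, B (Y x) v = B x (Y v) := by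
    intro x v
    obtain ⟨x, rfl⟩ := Tsurj x
    obtain ⟨v, rfl⟩ := Tsurj v
    rw [← TY, ← TY, hT1, hT1, sa]
  have saY' : ∀ x v, B (Y' x) v = B x (Y' v) := by
    intro x v
    obtain ⟨x, rfl⟩ := Tsurj x
    obtain ⟨v, rfl⟩ := Tsurj v
    rw [← TY', ← TY', hT1, hT1, saY]
  obtain ⟨ν, hν⟩ := two_norm_scalar halt h3 hω hA hT hz
  have hν1 : ∀ v, y (Y (Y' v)) = ν • v := by
    intro v
    have := LinearMap.congr_fun hν v
    simpa [map_mul, hy, hY, hY'] using this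
  have hν2 : ∀ v, Y' (y (Y v)) = ν • v := by
    intro v
    obtain ⟨x, rfl⟩ := Tsurj v
    obtain ⟨x, rfl⟩ := Tsurj x
    have := congrArg (fun x => T (T x)) (hν1 x)
    simpa only [TY, TY', TY'', map_smul] using this
  have hν3 : ∀ v, Y' (Y (y v)) = ν • v := by
    intro v
    rw [← sub_eq_zero]
    apply hnd
    intro x
    rw [map_sub, LinearMap.sub_apply, saY', saY, sa, hν1]
    simp
  have yYc : ∀ v, y (Y v) = Y (y v) := by
    intro v
    exact rho_inj (t * (t * z * t⁻¹) * t⁻¹) (by rw [← hY', hν2, hν3])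
  have hν0 : ν ≠ 0 := by
    rintro rfl
    have := hν1 u
    rw [zero_smul] at this
    apply hu
    apply rho_inj (ρ := ρ) (t * (t * z * t⁻¹) * t⁻¹)
    apply rho_inj (ρ := ρ) (t * z * t⁻¹)
    apply rho_inj (ρ := ρ) z
    simp only [← hY', ← hY, ← hy, this, map_zero]
  -- Y' = (ν / c^2) y Y
  have hY'e : ∀ v, (c * c) • Y' v = ν • y (Y v) := by
    intro v
    have h1 := hν1 v
    have h4 := congrArg (fun x => y (Y x)) h1
    simp only [map_smul] at h4
    rw [← h4, ← yYc (Y (Y' v)), yy, YY, smul_smul]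
  have hν3c : ν * ν = c * c * c := by
    have h1 := YY' u
    have h4 : (c * c * (c * c)) • Y' (Y' u) = (ν * ν * (c * c)) • u := by
      calc (c * c * (c * c)) • Y' (Y' u) = (c * c) • Y' ((c * c) • Y' u) := by
            rw [map_smul, smul_smul]
        _ = ν • ν • y (Y (y (Y u))) := by rw [hY'e u, map_smul, smul_comm, hY'e]
        _ = _ := by rw [← yYc, yy, YY]; simp only [smul_smul, mul_assoc]
    rw [h1, smul_smul] at h4
    have h5 := smul_left_injective K hu h4
    apply mul_left_cancel₀ (mul_ne_zero hc0 hc0)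
    linear_combination -h5
  -- normalise: α0 = c^2/ν
  set α0 := c * c / ν with hα0
  have hα00 : α0 ≠ 0 := div_ne_zero (mul_ne_zero hc0 hc0) hν0
  have hα0c : α0 * α0 = c := by
    rw [hα0]; field_simp
    linear_combination -hν3c
  have hα0Y : ∀ v, α0 • Y' v = y (Y v) := by
    intro v
    apply smul_right_injective V hν0
    simp only [smul_smul]
    rw [← hY'e]
    congr 1
    rw [hα0]; field_simp
  -- existence of a vector of weight (1,-1,-1)
  obtain ⟨v, hv0, ev1, ev2⟩ : ∃ v : V, v ≠ 0 ∧ y v = α0 • v ∧ Y v = -(α0 • v) := by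
    have : ∃ v, y v ≠ α0 • v := by
      by_contra hcon
      push Not at hcon
      exact hzn ⟨α0, LinearMap.ext fun v => by rw [hcon v]; simp⟩
    obtain ⟨v, hv⟩ := this
    set d := α0 • v - y v with hd
    have hd0 : d ≠ 0 := fun h => hv (sub_eq_zero.mp h).symm
    have yd : y d = -(α0 • d) := by
      rw [hd, map_sub, map_smul, yy, ← hα0c]; module
    by_cases hp : α0 • d + Y d = 0
    · -- Y d = -α0 d
      have Yd : Y d = -(α0 • d) := by
        rw [eq_neg_iff_add_eq_zero, add_comm]; exact hp
      refine ⟨T d, fun h => hd0 (tinj (by rw [h, map_zero])), ?_, ?_⟩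
      · have : Y' d = α0 • d := by
          apply smul_right_injective V hα00
          simp only
          rw [hα0Y, Yd, map_neg, map_smul, yd]; simp
        rw [← TY'', this, map_smul]
      · rw [← TY, yd, map_neg, map_smul]
    · set x := α0 • d + Y d with hx
      have yx : y x = -(α0 • x) := by
        rw [hx, map_add, map_smul, yYc, yd, map_neg, map_smul]; module
      have Yx : Y x = α0 • x := by
        rw [hx, map_add, map_smul, YY, ← hα0c]; module
      have Y'x : Y' x = -(α0 • x) := by
        apply smul_right_injective V hα00
        simp only
        rw [hα0Y, Yx, map_smul, yx]
      refine ⟨T (T x), fun h => hp (tinj (tinj (by rw [h, map_zero, map_zero]))), ?_, ?_⟩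
      · rw [← TY'', ← TY', Yx]; simp
      · rw [← TY, ← TY'', Y'x]; simp
  have : ∃ v'', B v v'' ≠ 0 := by
    by_contra hcon
    push Not at hcon
    exact hv0 (hnd v hcon)
  obtain ⟨v'', hv''⟩ := this
  -- project to the same weight space
  set q := α0 • v'' + y v'' with hq
  set v2 := α0 • q - Y q with hv2
  have yq : y q = α0 • q := by
    rw [hq, map_add, map_smul, yy, ← hα0c]; module
  have e21 : y v2 = α0 • v2 := by
    rw [hv2, map_sub, map_smul, yYc, yq, map_smul]; module
  have e22 : Y v2 = -(α0 • v2) := by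
    rw [hv2, map_sub, map_smul, YY, ← hα0c]; module
  have hB : B v v2 ≠ 0 := by
    have h1 : B v v2 = 4 * α0 * α0 * B v v'' := by
      rw [hv2, map_sub, map_smul, ← saY, ev2, hq]
      simp only [map_add, map_smul, map_neg, LinearMap.neg_apply, LinearMap.smul_apply,
        smul_eq_mul, ← sa, ev1]
      ring
    rw [h1]
    have h4 : (4 : K) ≠ 0 := by
      have : (4 : K) = 2 * 2 := by norm_num
      rw [this]; exact mul_ne_zero h2 h2
    exact mul_ne_zero (mul_ne_zero (mul_ne_zero h4 hα00) hα00) hv''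
  -- orthogonality
  have wt : ∀ x, y x = α0 • x → Y x = -(α0 • x) → y (T x) = -(α0 • T x) ∧
      y (T (T x)) = -(α0 • T (T x)) := by
    intro x h1 h4
    constructor
    · have : Y' x = -(α0 • x) := by
        apply smul_right_injective V hα00
        simp only
        rw [hα0Y, h4, map_neg, map_smul, h1]; simp
      rw [← TY'', this]; simp
    · rw [← TY'', ← TY', h4]; simp
  have orth : ∀ x x', y x = α0 • x → y x' = -(α0 • x') → B x x' = 0 := by
    intro x x' h1 h4
    have := sa x x'
    rw [h1, h4] at this
    simp only [map_smul, map_neg, LinearMap.smul_apply, smul_eq_mul] at this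
    have h5 : 2 * α0 * B x x' = 0 := by linear_combination this
    simpa [h2, hα00] using h5
  obtain ⟨w1, w2⟩ := wt v ev1 ev2
  obtain ⟨w3, w4⟩ := wt v2 e21 e22
  exact hB (plucker halt h3 hT hT1 (orth _ _ ev1 w1) (orth _ _ ev1 w2) (orth _ _ ev1 w3)
    (orth _ _ ev1 w4) (orth _ _ e21 w1) (orth _ _ e21 w2) (orth _ _ e21 w3) (orth _ _ e21 w4))

end two

section solv

theorem exists_elem_abelian {Q : Type*} [Group Q] [Finite Q] (hs : IsSolvable Q) [Nontrivial Q] :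
    ∃ (X : Subgroup Q) (r : ℕ), X.Normal ∧ r.Prime ∧ X ≠ ⊥ ∧ (∀ x ∈ X, ∀ y ∈ X, x * y = y * x) ∧
      ∀ x ∈ X, x ^ r = 1 := by
  classical
  have hex : ∃ n, derivedSeries Q n = ⊥ := hs.solvable
  have hn := Nat.find_spec hex
  have hn0 : Nat.find hex ≠ 0 := by
    intro h0
    rw [h0, derivedSeries_zero] at hn
    exact top_ne_bot hn
  obtain ⟨k, hk⟩ := Nat.exists_eq_succ_of_ne_zero hn0
  have hD : derivedSeries Q k ≠ ⊥ := Nat.find_min hex (by omega)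
  rw [hk] at hn
  set D := derivedSeries Q k with hDdef
  have hDn : D.Normal := derivedSeries_normal Q k
  have hcomm : ∀ x ∈ D, ∀ y ∈ D, x * y = y * x := by
    intro x hx y hy
    have : (x * y * x⁻¹ * y⁻¹) ∈ derivedSeries Q (k + 1) := by
      rw [derivedSeries_succ]
      exact Subgroup.commutator_mem_commutator hx hy
    rw [hn, Subgroup.mem_bot] at this
    rw [mul_inv_eq_one, mul_inv_eq_iff_eq_mul] at this
    exact this
  have : Nontrivial D := (Subgroup.nontrivial_iff_ne_bot D).mpr hD
  obtain ⟨r, hr, hrd⟩ := Nat.exists_prime_and_dvd (n := Nat.card D) (Finite.one_lt_card).ne'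
  have := Fact.mk hr
  obtain ⟨x, hx⟩ := exists_prime_orderOf_dvd_card' (G := D) r hrd
  refine ⟨⟨⟨⟨{g | g ∈ D ∧ g ^ r = 1}, ?_⟩, ?_⟩, ?_⟩, r, ⟨?_⟩, hr, ?_, ?_, ?_⟩
  · rintro a b ⟨ha, ha'⟩ ⟨hb, hb'⟩
    refine ⟨D.mul_mem ha hb, ?_⟩
    have : Commute a b := hcomm a ha b hb
    rw [this.mul_pow, ha', hb', one_mul]
  · exact ⟨D.one_mem, one_pow _⟩
  · rintro a ⟨ha, ha'⟩
    exact ⟨D.inv_mem ha, by rw [inv_pow, ha', inv_one]⟩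
  · rintro a ⟨ha, ha'⟩ g
    exact ⟨hDn.conj_mem a ha g, by rw [conj_pow, ha']; simp⟩
  · intro h
    have hxm : (x : Q) ∈ (⊥ : Subgroup Q) := by
      rw [← h]
      refine ⟨x.2, ?_⟩
      have := pow_orderOf_eq_one x
      rw [hx] at this
      simpa using congrArg Subtype.val this
    rw [Subgroup.mem_bot] at hxm
    have : x = 1 := Subtype.ext hxm
    rw [this, orderOf_one] at hx
    exact hr.one_lt.ne hx
  · rintro a ⟨ha, _⟩ b ⟨hb, _⟩
    exact hcomm a ha b hb
  · rintro a ⟨_, ha⟩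
    exact ha

variable {K V : Type*} [Field K] [AddCommGroup V] [Module K V] {B : V →ₗ[K] V →ₗ[K] K}
variable {G : Type*} [Group G] {ρ : G →* Module.End K V}

theorem trichotomy [Finite G] (hs : IsSolvable G) (hns : ∃ g : G, ¬ IsSc (ρ g)) :
    (∃ A : Subgroup G, A.Normal ∧ (∀ a ∈ A, ∀ b ∈ A, ρ a * ρ b = ρ b * ρ a) ∧
      ∃ a ∈ A, ¬ IsSc (ρ a)) ∨ ∃ (A : Subgroup G) (r : ℕ), r.Prime ∧ ExtS ρ A r := by
  have hN : (scSub ρ).Normal := scSub_normal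
  set N := scSub ρ with hNdef
  obtain ⟨g, hg⟩ := hns
  have : Nontrivial (G ⧸ N) := ⟨⟨QuotientGroup.mk' N g, 1, fun h =>
    hg ((QuotientGroup.eq_one_iff _).mp h)⟩⟩
  have hs' : Group.IsSolvable G := hs
  have hsq : IsSolvable (G ⧸ N) :=
    Group.isSolvable_of_surjective (QuotientGroup.mk'_surjective N)
  obtain ⟨X, r, hXn, hr, hX, hXc, hXr⟩ := exists_elem_abelian hsq
  set A := X.comap (QuotientGroup.mk' N) with hA
  have hAn : A.Normal := hXn.comap _
  have hex : ∃ a ∈ A, ¬ IsSc (ρ a) := by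
    by_contra hcon
    push Not at hcon
    apply hX
    rw [Subgroup.eq_bot_iff_forall]
    intro x hx
    obtain ⟨a, rfl⟩ := QuotientGroup.mk'_surjective N x
    exact (QuotientGroup.eq_one_iff _).mpr (hcon a hx)
  have hcomm : ∀ a ∈ A, ∀ b ∈ A, IsSc (ρ (a * b * a⁻¹ * b⁻¹)) := by
    intro a ha b hb
    apply (QuotientGroup.eq_one_iff (N := N) (a * b * a⁻¹ * b⁻¹)).mp
    have := hXc _ ha _ hb
    show QuotientGroup.mk' N (a * b * a⁻¹ * b⁻¹) = 1
    rw [map_mul, map_mul, map_mul _ a b, this]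
    simp
  have hpow : ∀ a ∈ A, IsSc (ρ (a ^ r)) := by
    intro a ha
    apply (QuotientGroup.eq_one_iff (N := N) (a ^ r)).mp
    have := hXr _ ha
    rw [← map_pow] at this
    exact this
  by_cases hcase : ∀ a ∈ A, ¬ IsSc (ρ a) → ∃ b ∈ A, ρ a * ρ b ≠ ρ b * ρ a
  · exact Or.inr ⟨A, r, hr, hAn, hpow, hcomm, hex, hcase⟩
  · push Not at hcase
    obtain ⟨a, ha, hna, hac⟩ := hcase
    left
    refine ⟨⟨⟨⟨{x | x ∈ A ∧ ∀ b ∈ A, ρ x * ρ b = ρ b * ρ x}, ?_⟩, ?_⟩, ?_⟩, ⟨?_⟩, ?_, a,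
      ⟨ha, hac⟩, hna⟩
    · rintro x y ⟨hx, hx'⟩ ⟨hy, hy'⟩
      refine ⟨A.mul_mem hx hy, fun b hb => ?_⟩
      rw [map_mul, mul_assoc, hy' b hb, ← mul_assoc, hx' b hb, mul_assoc]
    · exact ⟨A.one_mem, by simp⟩
    · rintro x ⟨hx, hx'⟩
      refine ⟨A.inv_mem hx, fun b hb => ?_⟩
      have h1 : ρ x⁻¹ * (ρ x * ρ b) * ρ x⁻¹ = ρ x⁻¹ * (ρ b * ρ x) * ρ x⁻¹ := by rw [hx' b hb]
      have e1 : ρ x⁻¹ * (ρ x * ρ b) * ρ x⁻¹ = ρ b * ρ x⁻¹ := by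
        simp only [← map_mul]; congr 1; group
      have e2 : ρ x⁻¹ * (ρ b * ρ x) * ρ x⁻¹ = ρ x⁻¹ * ρ b := by
        simp only [← map_mul]; congr 1; group
      rw [e1, e2] at h1
      exact h1.symm
    · rintro x ⟨hx, hx'⟩ g
      refine ⟨hAn.conj_mem x hx g, fun b hb => ?_⟩
      have h1 := hx' (g⁻¹ * b * g) (by
        have := hAn.conj_mem b hb g⁻¹
        simpa using this)
      have e1 : ρ (g * x * g⁻¹) * ρ b = ρ g * (ρ x * ρ (g⁻¹ * b * g)) * ρ g⁻¹ := by
        simp only [← map_mul]; congr 1; group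
      have e2 : ρ b * ρ (g * x * g⁻¹) = ρ g * (ρ (g⁻¹ * b * g) * ρ x) * ρ g⁻¹ := by
        simp only [← map_mul]; congr 1; group
      rw [e1, e2, h1]
    · rintro x ⟨hx, hx'⟩ y ⟨hy, _⟩
      exact hx' y hy

end solv

section weights

variable {K V : Type*} [Field K] [AddCommGroup V] [Module K V] {B : V →ₗ[K] V →ₗ[K] K}
variable {G : Type*} [Group G] {ρ : G →* Module.End K V}

/-- simultaneous eigenspaces -/
def WS (ρ : G →* Module.End K V) (A : Subgroup G) (χ : A → K) : Submodule K V :=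
  ⨅ a : A, Module.End.eigenspace (ρ (a : G)) (χ a)

theorem mem_WS {A : Subgroup G} {χ : A → K} {v : V} :
    v ∈ WS ρ A χ ↔ ∀ a : A, ρ (a : G) v = χ a • v := by
  simp [WS, Submodule.mem_iInf, Module.End.mem_eigenspace_iff]

theorem WS_unique {A : Subgroup G} {χ ψ : A → K} {v : V} (h1 : v ∈ WS ρ A χ) (h2 : v ∈ WS ρ A ψ)
    (h0 : v ≠ 0) : χ = ψ := by
  funext a
  have e := (mem_WS.mp h1 a).symm.trans (mem_WS.mp h2 a)
  exact smul_left_injective K h0 e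

theorem rho_semisimple [FiniteDimensional K V] [Finite G] (hG : (Nat.card G : K) ≠ 0) (g : G) :
    (ρ g).IsSemisimple := by
  apply Module.End.isSemisimple_of_squarefree_aeval_eq_zero
    (p := (Polynomial.X ^ (Nat.card G) - 1 : Polynomial K))
  · exact (Polynomial.separable_X_pow_sub_C (1 : K) hG one_ne_zero).squarefree
  · rw [map_sub, map_pow, Polynomial.aeval_X, map_one, ← map_pow, pow_card_eq_one', map_one, sub_self]

theorem WS_props [IsAlgClosed K] [FiniteDimensional K V] [Finite G] (hG : (Nat.card G : K) ≠ 0)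
    {A : Subgroup G} (hc : ∀ a ∈ A, ∀ b ∈ A, ρ a * ρ b = ρ b * ρ a) :
    (⨆ χ, WS ρ A χ) = ⊤ ∧ iSupIndep (WS ρ A) := by
  have e : ∀ χ : A → K, WS ρ A χ = ⨅ a : A, (ρ (a : G)).maxGenEigenspace (χ a) := by
    intro χ
    unfold WS
    congr 1
    funext a
    exact ((rho_semisimple hG (a : G)).isFinitelySemisimple.maxGenEigenspace_eq_eigenspace _).symm
  have e' : WS ρ A = fun χ => ⨅ a : A, (ρ (a : G)).maxGenEigenspace (χ a) := funext e
  rw [e']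
  have hcc : ∀ a b : A, Commute (ρ (a : G)) (ρ (b : G)) := fun a b => hc a a.2 b b.2
  constructor
  · exact Module.End.iSup_iInf_maxGenEigenspace_eq_top_of_iSup_maxGenEigenspace_eq_top_of_commute
      (fun a : A => ρ (a : G)) (fun a b _ => hcc a b)
      (fun a => Module.End.iSup_maxGenEigenspace_eq_top _)
  · exact Module.End.independent_iInf_maxGenEigenspace_of_forall_mapsTo
      (fun a : A => ρ (a : G))
      (fun a b φ => Module.End.mapsTo_maxGenEigenspace_of_comm (hcc b a) φ)

/-- action on weights -/
def actW {A : Subgroup G} (hA : A.Normal) (g : G) (χ : A → K) : A → K :=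
  fun a => χ ⟨g⁻¹ * a * g, by simpa using hA.conj_mem a a.2 g⁻¹⟩

theorem actW_mul {A : Subgroup G} (hA : A.Normal) (g h : G) (χ : A → K) :
    actW hA (g * h) χ = actW hA g (actW hA h χ) := by
  funext a
  unfold actW
  congr 2
  simp [mul_assoc]

theorem actW_one {A : Subgroup G} (hA : A.Normal) (χ : A → K) : actW hA 1 χ = χ := by
  funext a
  unfold actW
  congr 1
  ext
  simp

theorem actW_mem {A : Subgroup G} (hA : A.Normal) (g : G) {χ : A → K} {v : V}
    (hv : v ∈ WS ρ A χ) : ρ g v ∈ WS ρ A (actW hA g χ) := by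
  rw [mem_WS] at *
  intro a
  have h1 := hv ⟨g⁻¹ * a * g, by simpa using hA.conj_mem a a.2 g⁻¹⟩
  have e : ρ (a : G) (ρ g v) = ρ g (ρ (g⁻¹ * a * g) v) := by
    simp only [← Module.End.mul_apply, ← map_mul]
    congr 2; group
  rw [e]
  simp only at h1
  rw [h1, map_smul]
  rfl

theorem actW_eq_of_ne {A : Subgroup G} (hA : A.Normal) (g : G) {χ : A → K} {v : V}
    (hv : v ∈ WS ρ A χ) (h0 : v ≠ 0) (h : ρ g v ∈ WS ρ A χ) : actW hA g χ = χ := by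
  apply WS_unique (actW_mem hA g hv) h
  intro hz
  exact h0 (rho_inj (ρ := ρ) g (by rw [hz, map_zero]))

theorem WS_orth {lam : G → K} (hlam : ∀ g x y, B (ρ g x) (ρ g y) = lam g * B x y)
    {A : Subgroup G} {χ ψ : A → K} {x y : V} (hx : x ∈ WS ρ A χ) (hy : y ∈ WS ρ A ψ)
    (h : B x y ≠ 0) (a : A) : χ a * ψ a = lam a := by
  have := hlam a x y
  rw [mem_WS.mp hx a, mem_WS.mp hy a] at this
  simp only [map_smul, LinearMap.smul_apply, smul_eq_mul] at this
  apply mul_right_cancel₀ h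
  rw [← this]; ring

/-- orthogonality determines the weight -/
theorem WS_orth_unique {lam : G → K} (hlam : ∀ g x y, B (ρ g x) (ρ g y) = lam g * B x y)
    {A : Subgroup G} {χ ψ ψ' : A → K} {x y x' y' : V} (hx : x ∈ WS ρ A χ) (hy : y ∈ WS ρ A ψ)
    (h : B x y ≠ 0) (hx' : x' ∈ WS ρ A χ) (hy' : y' ∈ WS ρ A ψ') (h' : B x' y' ≠ 0) : ψ = ψ' := by
  funext a
  have e1 := WS_orth hlam hx hy h a
  have e2 := WS_orth hlam hx' hy' h' a
  have hne : χ a ≠ 0 := by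
    intro h0
    rw [h0, zero_mul] at e1
    exact lam_ne_zero hlam h a e1.symm
  exact mul_left_cancel₀ hne (e1.trans e2.symm)

theorem WS_nondeg (halt : ∀ v, B v v = 0) (hnd : ∀ v, (∀ x, B v x = 0) → v = 0)
    {lam : G → K} (hlam : ∀ g x y, B (ρ g x) (ρ g y) = lam g * B x y)
    {A : Subgroup G} (htop : (⨆ χ, WS ρ A χ) = ⊤) {χ : A → K} {u w : V} (hu : u ∈ WS ρ A χ)
    (hw : w ∈ WS ρ A χ) (huw : B u w ≠ 0) {v : V} (hv : v ∈ WS ρ A χ)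
    (h : ∀ x ∈ WS ρ A χ, B v x = 0) : v = 0 := by
  apply hnd
  have : (⨆ χ, WS ρ A χ) ≤ LinearMap.ker (B v) := by
    apply iSup_le
    intro ψ x hx
    rw [LinearMap.mem_ker]
    by_contra hne
    have := WS_orth_unique hlam hu hw huw hv hx hne
    subst this
    exact hne (h x hx)
  intro x
  have hx : x ∈ (⊤ : Submodule K V) := trivial
  rw [← htop] at hx
  exact LinearMap.mem_ker.mp (this hx)

/-- dichotomy for quaternion planes relative to weight spaces -/
theorem QD.dich (halt : ∀ v, B v v = 0) (h2 : (2 : K) ≠ 0) {ι : K} (hι : ι * ι = -1)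
    {A : Subgroup G} (hA : A.Normal)
    (htop : (⨆ χ, WS ρ A χ) = ⊤) (hind : iSupIndep (WS ρ A)) {i j : G} {u w : V}
    (h : QD B ι (ρ i) (ρ j) u w) :
    (∃ χ, u ∈ WS ρ A χ ∧ w ∈ WS ρ A χ) ∨
    (∃ (χ ψ : A → K) (x y : V), χ ≠ ψ ∧ x ∈ WS ρ A χ ∧ y ∈ WS ρ A ψ ∧
      (∀ v ∈ WS ρ A χ, ∃ a : K, v = a • x) ∧ (∀ v ∈ WS ρ A ψ, ∃ a : K, v = a • y) ∧
      Submodule.span K {u, w} = Submodule.span K {x, y}) := by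
  have hι0 : ι ≠ 0 := by rintro rfl; simp at hι
  -- step (i)
  have st1 : ∀ χ, ∀ v ∈ WS ρ A χ, ρ i (ρ i v) ∈ WS ρ A χ := by
    intro χ v hv
    by_cases hv0 : v = 0
    · subst hv0; simp
    have m1 := actW_mem hA i hv
    have m2 := actW_mem hA i m1
    have m3 := actW_mem hA i m2
    have m4 := actW_mem hA i m3
    by_cases hc : actW hA i (actW hA i χ) = χ
    · rwa [hc] at m2
    exfalso
    have f4 : ρ i (ρ i (ρ i (ρ i v))) = v := by
      have := LinearMap.congr_fun (h.sq_sq halt hι) v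
      simpa using this
    rw [f4] at m4
    have c4 := WS_unique hv m4 hv0
    have n1 : actW hA i χ ≠ χ := by
      intro h1
      apply hc; rw [h1, h1]
    have n3 : actW hA i (actW hA i (actW hA i χ)) ≠ χ := by
      intro h1
      rw [h1] at c4
      exact n1 c4.symm
    have e : v = ρ i v - ρ i (ρ i v) + ρ i (ρ i (ρ i v)) := by
      obtain ⟨a, b, v0, e, h1, h2, -⟩ := decompB halt h.buw v
      have s2 : ρ i (ρ i v) = -(a • u) + -(b • w) + v0 := by
        rw [e]; exact h.sq hι a b v0 h1 h2
      rw [s2, e]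
      simp only [map_add, map_smul, map_neg, h.Iu, h.Iw, (h.fix v0 h1 h2).1]
      module
    have hdis := hind χ
    rw [Submodule.disjoint_def] at hdis
    apply hv0
    apply hdis v hv
    have hle : ∀ ψ, ψ ≠ χ → WS ρ A ψ ≤ ⨆ ψ, ⨆ (_ : ψ ≠ χ), WS ρ A ψ := fun ψ hψ =>
      le_iSup₂_of_le ψ hψ le_rfl
    rw [e]
    exact add_mem (sub_mem (hle _ n1 m1) (hle _ hc m2)) (hle _ n3 m3)
  -- decomposition within weight spaces
  have st2 : ∀ χ, ∀ v ∈ WS ρ A χ, ∃ (a b : K) (v0 : V), v = a • u + b • w + v0 ∧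
      B u v0 = 0 ∧ B w v0 = 0 ∧ a • u + b • w ∈ WS ρ A χ ∧ v0 ∈ WS ρ A χ := by
    intro χ v hv
    obtain ⟨a, b, v0, e, h1, h2', -⟩ := decompB halt h.buw v
    have hE := st1 χ v hv
    have s2 : ρ i (ρ i v) = -(a • u) + -(b • w) + v0 := by
      rw [e]; exact h.sq hι a b v0 h1 h2'
    have m : a • u + b • w ∈ WS ρ A χ := by
      have : a • u + b • w = (2 : K)⁻¹ • (v - ρ i (ρ i v)) := by
        rw [s2]; nth_rewrite 1 [e]
        have : a • u + b • w + v0 - (-(a • u) + -(b • w) + v0) = (2 : K) • (a • u + b • w) := by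
          module
        rw [this, smul_smul, inv_mul_cancel₀ h2, one_smul]
      rw [this]
      exact Submodule.smul_mem _ _ (sub_mem hv hE)
    refine ⟨a, b, v0, e, h1, h2', m, ?_⟩
    have : v0 = v - (a • u + b • w) := by rw [e]; abel
    rw [this]; exact sub_mem hv m
  -- a nonzero weight vector in the plane
  obtain ⟨χ, a, b, hx, hx0⟩ : ∃ (χ : A → K) (a b : K), a • u + b • w ∈ WS ρ A χ ∧
      a • u + b • w ≠ 0 := by
    by_contra hcon
    push Not at hcon
    have hle : (⨆ χ, WS ρ A χ) ≤ LinearMap.ker (B u) := by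
      apply iSup_le
      intro χ v hv
      obtain ⟨a, b, v0, e, h1, h2', m, -⟩ := st2 χ v hv
      have := hcon χ a b m
      rw [this, zero_add] at e
      rw [LinearMap.mem_ker, e, h1]
    rw [htop] at hle
    exact h.buw (LinearMap.mem_ker.mp (hle (x := w) trivial))
  by_cases hst : ρ i (a • u + b • w) ∈ WS ρ A χ ∧ ρ j (a • u + b • w) ∈ WS ρ A χ
  · left
    refine ⟨χ, ?_⟩
    obtain ⟨hI, hJ⟩ := hst
    have eI : ρ i (a • u + b • w) = ι • (a • u) - ι • (b • w) := by
      simp only [map_add, map_smul, h.Iu, h.Iw]; module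
    have eJ : ρ j (a • u + b • w) = a • w - b • u := by
      simp only [map_add, map_smul, h.Ju, h.Jw]; module
    have hau : a • u ∈ WS ρ A χ := by
      have : a • u = (2 * ι)⁻¹ • (ι • (a • u + b • w) + ρ i (a • u + b • w)) := by
        rw [eI]
        have : ι • (a • u + b • w) + (ι • (a • u) - ι • (b • w)) = (2 * ι) • (a • u) := by module
        rw [this, smul_smul, inv_mul_cancel₀ (mul_ne_zero h2 hι0), one_smul]
      rw [this]
      exact Submodule.smul_mem _ _ (add_mem (Submodule.smul_mem _ _ hx) hI)
    have hbw : b • w ∈ WS ρ A χ := by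
      have : b • w = (a • u + b • w) - a • u := by abel
      rw [this]; exact sub_mem hx hau
    rw [eJ] at hJ
    by_cases ha : a = 0
    · subst ha
      have hb : b ≠ 0 := by rintro rfl; simp at hx0
      simp only [zero_smul, zero_sub, neg_mem_iff] at hJ
      exact ⟨(Submodule.smul_mem_iff _ hb).mp hJ, (Submodule.smul_mem_iff _ hb).mp hbw⟩
    · have hu := (Submodule.smul_mem_iff _ ha).mp hau
      refine ⟨hu, ?_⟩
      have : a • w = (a • w - b • u) + b • u := by abel
      have h1 : a • w ∈ WS ρ A χ := by
        rw [this]; exact add_mem hJ (Submodule.smul_mem _ _ hu)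
      exact (Submodule.smul_mem_iff _ ha).mp h1
  · right
    have hg : ∃ g : G, ρ g (a • u + b • w) ∉ WS ρ A χ ∧
        (∀ v, B u v = 0 → B w v = 0 → ρ g v = v) ∧
        ρ g (a • u + b • w) ∈ Submodule.span K {u, w} := by
      rw [not_and_or] at hst
      rcases hst with h' | h'
      · refine ⟨i, h', fun v h1 h2 => (h.fix v h1 h2).1, ?_⟩
        rw [Submodule.mem_span_pair]
        exact ⟨a * ι, - (b * ι), by simp only [map_add, map_smul, h.Iu, h.Iw]; module⟩
      · refine ⟨j, h', fun v h1 h2 => (h.fix v h1 h2).2, ?_⟩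
        rw [Submodule.mem_span_pair]
        exact ⟨-b, a, by simp only [map_add, map_smul, h.Ju, h.Jw]; module⟩
    obtain ⟨g, hgn, hgf, hgs⟩ := hg
    set x := a • u + b • w with hxd
    set y := ρ g x with hyd
    have hy := actW_mem hA g hx
    have hne : χ ≠ actW hA g χ := by
      intro he
      rw [← he] at hy
      exact hgn hy
    have hy0 : y ≠ 0 := by
      intro h0
      apply hgn
      rw [h0]; exact zero_mem _
    have hxs : x ∈ Submodule.span K {u, w} := Submodule.mem_span_pair.mpr ⟨a, b, rfl⟩
    have hli : LinearIndependent K ![x, y] := by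
      rw [LinearIndependent.pair_iff]
      intro s t hst
      have hs : s = 0 := by
        by_contra hs
        have h1 : s • x = (-t) • y := by
          rw [eq_comm, neg_smul, neg_eq_iff_add_eq_zero, add_comm]; exact hst
        exact hne (WS_unique (v := s • x) (Submodule.smul_mem _ _ hx)
          (by rw [h1]; exact Submodule.smul_mem _ _ hy) (smul_ne_zero hs hx0))
      subst hs
      simp only [zero_smul, zero_add, smul_eq_zero, hy0, or_false] at hst
      exact ⟨rfl, hst⟩
    have hfr : Module.finrank K (Submodule.span K {x, y}) = 2 := by
      have := finrank_span_eq_card hli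
      have e : Set.range ![x, y] = {x, y} := by
        ext z
        simp [Matrix.range_cons, Matrix.range_empty]
        tauto
      rw [e] at this
      simpa using this
    have hsp : Submodule.span K {u, w} = Submodule.span K {x, y} := by
      symm
      have : FiniteDimensional K (Submodule.span K {u, w}) :=
        FiniteDimensional.span_of_finite K (Set.toFinite _)
      apply Submodule.eq_of_le_of_finrank_eq
      · rw [Submodule.span_le]
        rintro z (rfl | rfl)
        · exact hxs
        · exact hgs
      · rw [hfr, finrank_pair halt h.buw]
    have key : ∀ φ, (φ = χ ∨ φ = actW hA g χ) → ∀ v ∈ WS ρ A φ, v ∈ Submodule.span K {x, y} := by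
      intro φ hφ v hv
      obtain ⟨a', b', v0, e, h1, h2', m, m0⟩ := st2 φ v hv
      have hv00 : v0 = 0 := by
        by_contra h0
        have gf := hgf v0 h1 h2'
        have e1 : actW hA g φ = φ := actW_eq_of_ne hA g m0 h0 (by rw [gf]; exact m0)
        rcases hφ with rfl | rfl
        · exact hne e1.symm
        · have e2 := congrArg (actW hA g⁻¹) e1
          have hcan : ∀ φ' : A → K, actW hA g⁻¹ (actW hA g φ') = φ' := by
            intro φ'; rw [← actW_mul, inv_mul_cancel, actW_one]
          rw [hcan, hcan] at e2
          exact hne e2.symm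
      rw [e, hv00, add_zero, ← hsp]
      exact Submodule.mem_span_pair.mpr ⟨a', b', rfl⟩
    refine ⟨χ, actW hA g χ, x, y, hne, hx, hy, ?_, ?_, hsp⟩
    · intro v hv
      obtain ⟨s, t, e⟩ := Submodule.mem_span_pair.mp (key χ (Or.inl rfl) v hv)
      refine ⟨s, ?_⟩
      by_cases ht : t = 0
      · rw [← e, ht]; simp
      exfalso
      apply hne
      apply WS_unique (v := t • y) _ (Submodule.smul_mem _ _ hy) (smul_ne_zero ht hy0)
      have : t • y = v - s • x := by rw [← e]; abel
      rw [this]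
      exact sub_mem hv (Submodule.smul_mem _ _ hx)
    · intro v hv
      obtain ⟨s, t, e⟩ := Submodule.mem_span_pair.mp (key _ (Or.inr rfl) v hv)
      refine ⟨t, ?_⟩
      by_cases ht : s = 0
      · rw [← e, ht]; simp
      exfalso
      apply hne
      apply WS_unique (v := s • x) (Submodule.smul_mem _ _ hx) _ (smul_ne_zero ht hx0)
      have : s • x = v - t • y := by rw [← e]; abel
      rw [this]
      exact sub_mem hv (Submodule.smul_mem _ _ hy)

end weights

section structureThm

variable {K V : Type*} [Field K] [AddCommGroup V] [Module K V] {B : V →ₗ[K] V →ₗ[K] K}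
  {G : Type*} [Group G] {ρ : G →* Module.End K V}

theorem WS_perp {lam : G → K} (hlam : ∀ g x y, B (ρ g x) (ρ g y) = lam g * B x y)
    {A : Subgroup G} {χ φ : A → K} {u0 w0 : V} (hu0 : u0 ∈ WS ρ A χ) (hw0 : w0 ∈ WS ρ A χ)
    (h0 : B u0 w0 ≠ 0) (hφ : φ ≠ χ) {x y : V} (hx : x ∈ WS ρ A χ) (hy : y ∈ WS ρ A φ) :
    B x y = 0 := by
  by_contra h
  exact hφ (WS_orth_unique hlam hu0 hw0 h0 hx hy h).symm

theorem perp_span {u w x y : V} (hs : Submodule.span K {u, w} = Submodule.span K {x, y})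
    {f : V →ₗ[K] K} (hx : f x = 0) (hy : f y = 0) : f u = 0 ∧ f w = 0 := by
  have : Submodule.span K {u, w} ≤ LinearMap.ker f := by
    rw [hs, Submodule.span_le]
    rintro z (rfl | rfl)
    · exact hx
    · exact hy
  exact ⟨this (Submodule.subset_span (by simp)), this (Submodule.subset_span (by simp))⟩

theorem perp_or_in (halt : ∀ v, B v v = 0) (h2 : (2 : K) ≠ 0)
    {lam : G → K} (hlam : ∀ g x y, B (ρ g x) (ρ g y) = lam g * B x y) {ι : K} (hι : ι * ι = -1)
    {A : Subgroup G} (hA : A.Normal)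
    (htop : (⨆ χ, WS ρ A χ) = ⊤) (hind : iSupIndep (WS ρ A)) {i j : G} {u w : V}
    (h : QD B ι (ρ i) (ρ j) u w) {χ : A → K} {u0 w0 : V} (hu0 : u0 ∈ WS ρ A χ)
    (hw0 : w0 ∈ WS ρ A χ) (h0 : B u0 w0 ≠ 0) :
    (u ∈ WS ρ A χ ∧ w ∈ WS ρ A χ) ∨ (∀ v ∈ WS ρ A χ, B u v = 0 ∧ B w v = 0) := by
  rcases h.dich halt h2 hι hA htop hind with ⟨φ, hu, hw⟩ | ⟨φ, ψ, x, y, hne, hx, hy, hX, hY, hs⟩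
  · by_cases hφ : φ = χ
    · subst hφ
      exact Or.inl ⟨hu, hw⟩
    · right
      intro v hv
      rw [skewB halt u, skewB halt w, WS_perp hlam hu0 hw0 h0 hφ hv hu,
        WS_perp hlam hu0 hw0 h0 hφ hv hw]
      simp
  · right
    have hno : ∀ (φ : A → K) (x : V), (∀ v ∈ WS ρ A φ, ∃ a : K, v = a • x) → φ ≠ χ := by
      rintro φ x hX rfl
      obtain ⟨a, rfl⟩ := hX _ hu0
      obtain ⟨b, rfl⟩ := hX _ hw0
      apply h0
      simp [halt]
    intro v hv
    have := perp_span hs (f := B v) (WS_perp hlam hu0 hw0 h0 (hno φ x hX) hv hx)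
      (WS_perp hlam hu0 hw0 h0 (hno ψ y hY) hv hy)
    rw [skewB halt u, skewB halt w, this.1, this.2]
    simp

theorem td_in_or_fix (halt : ∀ v, B v v = 0) (hnd : ∀ v, (∀ x, B v x = 0) → v = 0)
    (h3 : (3 : K) ≠ 0)
    {lam : G → K} (hlam : ∀ g x y, B (ρ g x) (ρ g y) = lam g * B x y) {ω : K}
    (hω : ω * ω + ω + 1 = 0) {A : Subgroup G} (hA : A.Normal)
    (htop : (⨆ χ, WS ρ A χ) = ⊤) {t : G} {u w : V}
    (h : TD B ω (ρ t) u w) {χ : A → K} {u0 w0 : V} (hu0 : u0 ∈ WS ρ A χ)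
    (hw0 : w0 ∈ WS ρ A χ) (h0 : B u0 w0 ≠ 0) :
    (u ∈ WS ρ A χ ∧ w ∈ WS ρ A χ) ∨ (∀ v ∈ WS ρ A χ, ρ t v = v) := by
  have hl1 := h.lam_one hω hlam
  have hcube := h.cube halt hω
  have hu00 := (ne_of_B h0).1
  have e3 : actW hA t (actW hA t (actW hA t χ)) = χ := by
    rw [← actW_mul, ← actW_mul]
    apply actW_eq_of_ne hA _ hu0 hu00
    have : ρ (t * t * t) = 1 := by
      rw [map_mul, map_mul, hcube]
    rw [this]
    exact hu0
  have e1 : actW hA t χ = χ := by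
    by_contra hc
    have hc2 : actW hA t (actW hA t χ) ≠ χ := by
      intro hh
      rw [hh] at e3
      exact hc e3
    have P1 : ∀ x ∈ WS ρ A χ, ∀ y ∈ WS ρ A χ, B x (ρ t y) = 0 := fun x hx y hy =>
      WS_perp hlam hu0 hw0 h0 hc hx (actW_mem hA t hy)
    have P2 : ∀ x ∈ WS ρ A χ, ∀ y ∈ WS ρ A χ, B x (ρ t (ρ t y)) = 0 := fun x hx y hy =>
      WS_perp hlam hu0 hw0 h0 hc2 hx (actW_mem hA t (actW_mem hA t hy))
    apply h0
    apply plucker halt h3 h (fun x y => by rw [hlam, hl1, one_mul])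
      (P1 _ hu0 _ hu0) (P2 _ hu0 _ hu0) (P1 _ hu0 _ hw0) (P2 _ hu0 _ hw0)
      (P1 _ hw0 _ hu0) (P2 _ hw0 _ hu0) (P1 _ hw0 _ hw0) (P2 _ hw0 _ hw0)
  have hTW : ∀ v ∈ WS ρ A χ, ρ t v ∈ WS ρ A χ := by
    intro v hv
    have := actW_mem hA t hv
    rwa [e1] at this
  have key : ∀ v ∈ WS ρ A χ, (B w v ≠ 0 → u ∈ WS ρ A χ) ∧ (B u v ≠ 0 → w ∈ WS ρ A χ) := by
    intro v hv
    obtain ⟨a, b, v0, e, k1, k2, ha, hb⟩ := decompB halt h.buw v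
    have hT1 : ρ t v = (a * ω) • u + (b * (ω * ω)) • w + v0 := by
      rw [e]
      simp only [map_add, map_smul, h.Tu, h.Tw, h.fix v0 k1 k2]
      module
    have hT2 : ρ t (ρ t v) = (a * (ω * ω)) • u + (b * (ω * ω) * (ω * ω)) • w + v0 := by
      rw [hT1]
      simp only [map_add, map_smul, h.Tu, h.Tw, h.fix v0 k1 k2]
      module
    have m1 := hTW v hv
    have m2 := hTW _ m1
    have hw2 : ω * ω = -ω - 1 := by linear_combination hω
    have c1 : v + (ω * ω) • ρ t v + ω • ρ t (ρ t v) = (3 * a) • u := by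
      rw [hT2, hT1, e, ← sub_eq_zero]
      have : a • u + b • w + v0 + (ω * ω) • ((a * ω) • u + (b * (ω * ω)) • w + v0) +
        ω • ((a * (ω * ω)) • u + (b * (ω * ω) * (ω * ω)) • w + v0) - (3 * a) • u
        = (a * (2 * (ω * ω * ω) - 2)) • u +
         (b * (1 + ω * ω * (ω * ω) + ω * ω * ω * (ω * ω))) • w + (ω * ω + ω + 1) • v0 := by module
      rw [this, hω]
      have z1 : a * (2 * (ω * ω * ω) - 2) = 0 := by linear_combination (2 * a * (ω - 1)) * hω
      have z2 : b * (1 + ω * ω * (ω * ω) + ω * ω * ω * (ω * ω)) = 0 := by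
        linear_combination b * (ω * ω * ω - ω + 1) * hω
      rw [z1, z2]
      simp
    have c2 : v + ω • ρ t v + (ω * ω) • ρ t (ρ t v) = (3 * b) • w := by
      rw [hT2, hT1, e, ← sub_eq_zero]
      have : a • u + b • w + v0 + ω • ((a * ω) • u + (b * (ω * ω)) • w + v0) +
        (ω * ω) • ((a * (ω * ω)) • u + (b * (ω * ω) * (ω * ω)) • w + v0) - (3 * b) • w
        = (a * (1 + ω * ω + ω * ω * (ω * ω))) • u +
         (b * (ω * ω * ω + ω * ω * ω * (ω * ω * ω) - 2)) • w + (ω * ω + ω + 1) • v0 := by module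
      rw [this, hω]
      have z1 : a * (1 + ω * ω + ω * ω * (ω * ω)) = 0 := by
        linear_combination a * (ω * ω - ω + 1) * hω
      have z2 : b * (ω * ω * ω + ω * ω * ω * (ω * ω * ω) - 2) = 0 := by
        linear_combination b * (ω - 1) * (2 + ω * ω * ω) * hω
      rw [z1, z2]
      simp
    constructor
    · intro hne
      have ha0 : 3 * a ≠ 0 := by
        rw [ha]
        exact mul_ne_zero h3 (div_ne_zero (neg_ne_zero.mpr hne) h.buw)
      have : (3 * a) • u ∈ WS ρ A χ := by
        rw [← c1]
        exact add_mem (add_mem hv (Submodule.smul_mem _ _ m1)) (Submodule.smul_mem _ _ m2)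
      exact (Submodule.smul_mem_iff _ ha0).mp this
    · intro hne
      have hb0 : 3 * b ≠ 0 := by
        rw [hb]
        exact mul_ne_zero h3 (div_ne_zero hne h.buw)
      have : (3 * b) • w ∈ WS ρ A χ := by
        rw [← c2]
        exact add_mem (add_mem hv (Submodule.smul_mem _ _ m1)) (Submodule.smul_mem _ _ m2)
      exact (Submodule.smul_mem_iff _ hb0).mp this
  by_cases hex : ∀ v ∈ WS ρ A χ, B u v = 0 ∧ B w v = 0
  · right
    intro v hv
    exact h.fix v (hex v hv).1 (hex v hv).2
  · left
    push Not at hex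
    obtain ⟨v, hv, hvv⟩ := hex
    have nd : ∀ z ∈ WS ρ A χ, z ≠ 0 → ∃ x ∈ WS ρ A χ, B z x ≠ 0 := by
      intro z hz hz0
      by_contra hcon
      push Not at hcon
      exact hz0 (WS_nondeg halt hnd hlam htop hu0 hw0 h0 hz hcon)
    by_cases hb : B u v = 0
    · have hu := (key v hv).1 (hvv hb)
      obtain ⟨x, hx, hx'⟩ := nd u hu (ne_of_B h.buw).1
      exact ⟨hu, (key x hx).2 hx'⟩
    · have hw := (key v hv).2 hb
      obtain ⟨x, hx, hx'⟩ := nd w hw (ne_of_B h.buw).2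
      exact ⟨(key x hx).1 hx', hw⟩

/-- The stabilizer of a weight. -/
def stabG {A : Subgroup G} (hA : A.Normal) (χ : A → K) : Subgroup G where
  carrier := {g | actW hA g χ = χ}
  one_mem' := actW_one hA χ
  mul_mem' := by
    intro a b ha hb
    simp only [Set.mem_setOf_eq] at *
    rw [actW_mul, hb, ha]
  inv_mem' := by
    intro a ha
    simp only [Set.mem_setOf_eq] at *
    conv_lhs => rw [← ha]
    rw [← actW_mul, inv_mul_cancel, actW_one]

/-- The representation of the stabilizer on the weight space. -/
def resRho (ρ : G →* Module.End K V) {A : Subgroup G} (hA : A.Normal) (χ : A → K) :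
    stabG hA χ →* Module.End K (WS ρ A χ) where
  toFun g := (ρ g).restrict (p := WS ρ A χ) (q := WS ρ A χ) (fun v hv => by
    have h1 := actW_mem hA (g : G) hv
    have h2 : actW hA (g : G) χ = χ := g.2
    rwa [h2] at h1)
  map_one' := by
    ext v
    simp
  map_mul' a b := by
    ext v
    simp

theorem resRho_coe {A : Subgroup G} (hA : A.Normal) (χ : A → K) (g : stabG hA χ)
    (v : WS ρ A χ) : ((resRho ρ hA χ g v : WS ρ A χ) : V) = ρ g v := rfl

/-- The restricted form. -/
def resB (B : V →ₗ[K] V →ₗ[K] K) (W : Submodule K V) : W →ₗ[K] W →ₗ[K] K :=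
  B.compl₁₂ W.subtype W.subtype

theorem resB_apply (W : Submodule K V) (x y : W) : resB B W x y = B x y := rfl

theorem QD.res {ι : K} {A : Subgroup G} (hA : A.Normal) (χ : A → K) {i j : G} {u w : V}
    (h : QD B ι (ρ i) (ρ j) u w) (hu : u ∈ WS ρ A χ) (hw : w ∈ WS ρ A χ)
    (hi : i ∈ stabG hA χ) (hj : j ∈ stabG hA χ) :
    QD (resB B (WS ρ A χ)) ι (resRho ρ hA χ ⟨i, hi⟩) (resRho ρ hA χ ⟨j, hj⟩) ⟨u, hu⟩ ⟨w, hw⟩ where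
  buw := h.buw
  Iu := Subtype.ext h.Iu
  Iw := Subtype.ext h.Iw
  Ju := Subtype.ext h.Ju
  Jw := Subtype.ext h.Jw
  fix := fun v h1 h2 => ⟨Subtype.ext (h.fix v h1 h2).1, Subtype.ext (h.fix v h1 h2).2⟩

theorem QD.mem_stab {ι : K} {A : Subgroup G} (hA : A.Normal) (χ : A → K) {i j : G} {u w : V}
    (h : QD B ι (ρ i) (ρ j) u w) (hu : u ∈ WS ρ A χ) (hw : w ∈ WS ρ A χ) :
    i ∈ stabG hA χ ∧ j ∈ stabG hA χ :=
  ⟨actW_eq_of_ne hA i hu (ne_of_B h.buw).1 (by rw [h.Iu]; exact Submodule.smul_mem _ _ hu),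
   actW_eq_of_ne hA j hu (ne_of_B h.buw).1 (by rw [h.Ju]; exact hw)⟩

theorem TD.res {ω : K} {A : Subgroup G} (hA : A.Normal) (χ : A → K) {t : G} {u w : V}
    (h : TD B ω (ρ t) u w) (hu : u ∈ WS ρ A χ) (hw : w ∈ WS ρ A χ)
    (hi : t ∈ stabG hA χ) :
    TD (resB B (WS ρ A χ)) ω (resRho ρ hA χ ⟨t, hi⟩) ⟨u, hu⟩ ⟨w, hw⟩ where
  buw := h.buw
  Tu := Subtype.ext h.Tu
  Tw := Subtype.ext h.Tw
  fix := fun v h1 h2 => Subtype.ext (h.fix v h1 h2)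

theorem TD.mem_stab {ω : K} {A : Subgroup G} (hA : A.Normal) (χ : A → K) {t : G} {u w : V}
    (h : TD B ω (ρ t) u w) (hu : u ∈ WS ρ A χ) (hw : w ∈ WS ρ A χ) :
    t ∈ stabG hA χ :=
  actW_eq_of_ne hA t hu (ne_of_B h.buw).1 (by rw [h.Tu]; exact Submodule.smul_mem _ _ hu)

theorem span_eq_of_le [FiniteDimensional K V] (halt : ∀ v, B v v = 0) {u w x y : V}
    (h1 : B u w ≠ 0) (h2 : B x y ≠ 0)
    (hx : x ∈ Submodule.span K {u, w}) (hy : y ∈ Submodule.span K {u, w}) :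
    Submodule.span K {u, w} = Submodule.span K {x, y} := by
  symm
  apply Submodule.eq_of_le_of_finrank_eq
  · rw [Submodule.span_le]
    rintro z (rfl | rfl)
    · exact hx
    · exact hy
  · rw [finrank_pair halt h1, finrank_pair halt h2]

theorem B_ne_of_span (halt : ∀ v, B v v = 0) {u w x y : V} (h : B u w ≠ 0)
    (hs : Submodule.span K {u, w} = Submodule.span K {x, y}) : B x y ≠ 0 := by
  intro h0
  apply h
  have hu : ∀ z, (z = u ∨ z = w) → B z x = 0 ∧ B z y = 0 := by
    intro z hz
    have hz' : z ∈ Submodule.span K {x, y} := by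
      rw [← hs]
      apply Submodule.subset_span
      rcases hz with rfl | rfl <;> simp
    obtain ⟨a, b, rfl⟩ := Submodule.mem_span_pair.mp hz'
    have h0' : B y x = 0 := by rw [skewB halt, h0, neg_zero]
    simp [halt, h0, h0']
  exact (perp_span hs (hu u (Or.inl rfl)).1 (hu u (Or.inl rfl)).2).2

theorem structure_thm [IsAlgClosed K] (h2 : (2 : K) ≠ 0) (h3 : (3 : K) ≠ 0) {ι ω : K}
    (hι : ι * ι = -1) (hω : ω * ω + ω + 1 = 0) (n : ℕ) :
    ∀ {V : Type*} [AddCommGroup V] [Module K V] [FiniteDimensional K V]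
    {B : V →ₗ[K] V →ₗ[K] K} {G : Type*} [Group G] [Finite G] {ρ : G →* Module.End K V}
    (hsol : Group.IsSolvable G) (hG : (Nat.card G : K) ≠ 0) {lam : G → K}
    (halt : ∀ v, B v v = 0) (hnd : ∀ v, (∀ x, B v x = 0) → v = 0)
    (hlam : ∀ g x y, B (ρ g x) (ρ g y) = lam g * B x y)
    {S : Subgroup G} (hS : IsPGroup 2 S) {κ τ : Type} {i j : κ → G} {u w : κ → V}
    (hQ : ∀ k, QD B ι (ρ (i k)) (ρ (j k)) (u k) (w k)) (hi : ∀ k, i k ∈ S) (hj : ∀ k, j k ∈ S)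
    (ho : ∀ k l, k ≠ l → Orth4 B (u k) (w k) (u l) (w l))
    (hfull : ∀ v, (∀ k, ρ (i k) v = v) → v = 0)
    {t : τ → G} {ut wt : τ → V} (hT : ∀ k, TD B ω (ρ (t k)) (ut k) (wt k))
    (htfull : ∀ v, (∀ k, ρ (t k) v = v) → v = 0)
    {i1 j1 i2 j2 : G} {u1 w1 u2 w2 : V} (q1 : QD B ι (ρ i1) (ρ j1) u1 w1)
    (q2 : QD B ι (ρ i2) (ρ j2) u2 w2), Module.finrank K V = n →
    Submodule.span K {u1, w1} = Submodule.span K {u2, w2} ∨ Orth4 B u1 w1 u2 w2 := by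
  induction n using Nat.strong_induction_on with
  | _ n ih =>
  intro V _ _ _ B G _ _ ρ hsol hG lam halt hnd hlam S hS κ τ i j u w hQ hi hj ho hfull t ut wt hT
    htfull i1 j1 i2 j2 u1 w1 u2 w2 q1 q2 hn
  have hu1 : u1 ≠ 0 := (ne_of_B q1.buw).1
  by_cases hsub : Subsingleton κ
  · left
    have : Nonempty κ := by
      by_contra hne
      rw [not_nonempty_iff] at hne
      exact hu1 (hfull u1 (fun k => hne.elim k))
    obtain ⟨k⟩ := this
    have hspan : ∀ v, v ∈ Submodule.span K {u k, w k} := by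
      intro v
      obtain ⟨a, b, v0, e, k1, k2, -⟩ := decompB halt (hQ k).buw v
      have : v0 = 0 := by
        apply hfull
        intro l
        rw [Subsingleton.elim l k]
        exact ((hQ k).fix v0 k1 k2).1
      rw [e, this, add_zero]
      exact Submodule.mem_span_pair.mpr ⟨a, b, rfl⟩
    rw [← span_eq_of_le halt (hQ k).buw q1.buw (hspan _) (hspan _),
      ← span_eq_of_le halt (hQ k).buw q2.buw (hspan _) (hspan _)]
  have hsub' : ∃ k l : κ, k ≠ l := by
    by_contra hcon
    push Not at hcon
    exact hsub ⟨hcon⟩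
  obtain ⟨k, l, hkl⟩ := hsub'
  have : Nontrivial V := ⟨⟨u1, 0, hu1⟩⟩
  have hτ : Nonempty τ := by
    by_contra hne
    rw [not_nonempty_iff] at hne
    exact hu1 (htfull u1 (fun k => hne.elim k))
  obtain ⟨t0⟩ := hτ
  have hns : ∃ g : G, ¬ IsSc (ρ g) := by
    refine ⟨i k, ?_⟩
    rintro ⟨c, hc⟩
    have e1 := (hQ k).Iu
    have e2 := (hQ k).Iw
    rw [hc] at e1 e2
    simp only [LinearMap.smul_apply, Module.End.one_apply] at e1 e2
    have c1 : c = ι := smul_left_injective K (ne_of_B (hQ k).buw).1 e1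
    have c2 : c = -ι := smul_left_injective K (ne_of_B (hQ k).buw).2 (by simpa using e2)
    have : (2 : K) * ι = 0 := by linear_combination c2 - c1
    rcases mul_eq_zero.mp this with h | h
    · exact h2 h
    · rw [h] at hι
      simp at hι
  rcases trichotomy hsol hns with ⟨A, hA, hAc, a, haA, hans⟩ | ⟨A, r, hr, hA⟩
  swap
  · exfalso
    rcases hr.eq_two_or_odd' with rfl | hodd
    · exact two_contra halt hnd hlam h2 h3 hι hω hA hS (hi k) (hj k) (hQ k) (hQ l).buw (ho k l hkl)
        (hT t0)
    · exact odd_contra halt h2 hι hodd hA (hQ k) (hQ l) (ho k l hkl)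
  obtain ⟨htop, hind⟩ := WS_props hG hAc
  have main : ∀ χ : A → K, u1 ∈ WS ρ A χ → w1 ∈ WS ρ A χ → u2 ∈ WS ρ A χ → w2 ∈ WS ρ A χ →
      Submodule.span K {u1, w1} = Submodule.span K {u2, w2} ∨ Orth4 B u1 w1 u2 w2 := by
    intro χ m1 m2 m3 m4
    have hlt : Module.finrank K (WS ρ A χ) < n := by
      rw [← hn]
      apply Submodule.finrank_lt
      intro hT
      apply hans
      refine ⟨χ ⟨a, haA⟩, ?_⟩
      ext v
      have hv : v ∈ WS ρ A χ := by rw [hT]; trivial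
      exact mem_WS.mp hv ⟨a, haA⟩
    have hsol' : Group.IsSolvable (stabG hA χ) := inferInstance
    have hG' : (Nat.card (stabG hA χ) : K) ≠ 0 := by
      intro h0
      apply hG
      obtain ⟨c, hc⟩ := (stabG hA χ).card_subgroup_dvd_card
      rw [hc, Nat.cast_mul, h0, zero_mul]
    have res := ih _ hlt (V := WS ρ A χ) (B := resB B (WS ρ A χ)) (G := stabG hA χ)
      (ρ := resRho ρ hA χ) hsol' hG' (lam := fun g => lam g) (fun v => halt v)
      (fun v hv => Subtype.ext (WS_nondeg halt hnd hlam htop m1 m2 q1.buw v.2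
        (fun x hx => hv ⟨x, hx⟩)))
      (fun g x y => hlam g x y) (S := S.subgroupOf (stabG hA χ))
      (hS.comap_of_injective _ Subtype.val_injective)
      (κ := {k // u k ∈ WS ρ A χ ∧ w k ∈ WS ρ A χ})
      (τ := {k // ut k ∈ WS ρ A χ ∧ wt k ∈ WS ρ A χ})
      (fun k => (hQ k).res hA χ k.2.1 k.2.2 ((hQ k).mem_stab hA χ k.2.1 k.2.2).1
        ((hQ k).mem_stab hA χ k.2.1 k.2.2).2)
      (fun k => Subgroup.mem_subgroupOf.mpr (hi k)) (fun k => Subgroup.mem_subgroupOf.mpr (hj k))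
      (fun k l hkl => ho k l (fun h => hkl (Subtype.ext h)))
      (by
        intro v hv
        apply Subtype.ext
        apply hfull
        intro k
        rcases perp_or_in halt h2 hlam hι hA htop hind (hQ k) m1 m2 q1.buw with h | h
        · exact congrArg Subtype.val (hv ⟨k, h⟩)
        · exact ((hQ k).fix v (h v v.2).1 (h v v.2).2).1)
      (fun k => (hT k).res hA χ k.2.1 k.2.2 ((hT k).mem_stab hA χ k.2.1 k.2.2))
      (by
        intro v hv
        apply Subtype.ext
        apply htfull
        intro k
        rcases td_in_or_fix halt hnd h3 hlam hω hA htop (hT k) m1 m2 q1.buw with h | h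
        · exact congrArg Subtype.val (hv ⟨k, h⟩)
        · exact h v v.2)
      (q1.res hA χ m1 m2 (q1.mem_stab hA χ m1 m2).1 (q1.mem_stab hA χ m1 m2).2)
      (q2.res hA χ m3 m4 (q2.mem_stab hA χ m3 m4).1 (q2.mem_stab hA χ m3 m4).2) rfl
    rcases res with h | h
    · left
      have := congrArg (Submodule.map (WS ρ A χ).subtype) h
      rw [Submodule.map_span, Submodule.map_span] at this
      simpa [Set.image_pair] using this
    · right
      exact h
  rcases q1.dich halt h2 hι hA htop hind with ⟨χ, m1, m2⟩ | ⟨χ, ψ, x, y, hne, hx, hy, hX, hY, hs⟩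
  · rcases perp_or_in halt h2 hlam hι hA htop hind q2 m1 m2 q1.buw with h | h
    · exact main χ m1 m2 h.1 h.2
    · right
      refine ⟨?_, ?_, ?_, ?_⟩ <;> rw [skewB halt, neg_eq_zero]
      exacts [(h _ m1).1, (h _ m1).2, (h _ m2).1, (h _ m2).2]
  rcases q2.dich halt h2 hι hA htop hind with ⟨φ, m1, m2⟩ |
    ⟨χ', ψ', x', y', hne', hx', hy', hX', hY', hs'⟩
  · rcases perp_or_in halt h2 hlam hι hA htop hind q1 m1 m2 q2.buw with h | h
    · exact main φ h.1 h.2 m1 m2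
    · right
      exact ⟨(h _ m1).1, (h _ m2).1, (h _ m1).2, (h _ m2).2⟩
  have bxy := B_ne_of_span halt q1.buw hs
  have bxy' := B_ne_of_span halt q2.buw hs'
  have byx : B y x ≠ 0 := by rw [skewB halt]; exact neg_ne_zero.mpr bxy
  have byx' : B y' x' ≠ 0 := by rw [skewB halt]; exact neg_ne_zero.mpr bxy'
  have fin : x' ∈ Submodule.span K {x, y} → y' ∈ Submodule.span K {x, y} →
      Submodule.span K {u1, w1} = Submodule.span K {u2, w2} := by
    intro h h'
    rw [hs, hs']
    exact span_eq_of_le halt bxy bxy' h h'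
  have sx : ∀ a : K, a • x ∈ Submodule.span K {x, y} := fun a =>
    Submodule.smul_mem _ _ (Submodule.subset_span (by simp))
  have sy : ∀ a : K, a • y ∈ Submodule.span K {x, y} := fun a =>
    Submodule.smul_mem _ _ (Submodule.subset_span (by simp))
  by_cases c1 : χ = χ'
  · left
    subst c1
    have c2 := WS_orth_unique hlam hx hy bxy hx' hy' bxy'
    subst c2
    obtain ⟨a1, e1⟩ := hX _ hx'
    obtain ⟨a2, e2⟩ := hY _ hy'
    exact fin (e1 ▸ sx _) (e2 ▸ sy _)
  by_cases c2 : χ = ψ'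
  · left
    subst c2
    have c2 := WS_orth_unique hlam hx hy bxy hy' hx' byx'
    subst c2
    obtain ⟨a1, e1⟩ := hX _ hy'
    obtain ⟨a2, e2⟩ := hY _ hx'
    exact fin (e2 ▸ sy _) (e1 ▸ sx _)
  right
  have d1 : χ' ≠ ψ := by
    rintro rfl
    exact c2 (WS_orth_unique hlam hy hx byx hx' hy' bxy')
  have d2 : ψ' ≠ ψ := by
    rintro rfl
    exact c1 (WS_orth_unique hlam hy hx byx hy' hx' byx')
  have bx : B x x' = 0 ∧ B x y' = 0 := by
    constructor <;> by_contra hc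
    · exact d1 (WS_orth_unique hlam hx hy bxy hx hx' hc).symm
    · exact d2 (WS_orth_unique hlam hx hy bxy hx hy' hc).symm
  have by' : B y x' = 0 ∧ B y y' = 0 := by
    constructor <;> by_contra hc
    · exact c1 (WS_orth_unique hlam hy hx byx hy hx' hc)
    · exact c2 (WS_orth_unique hlam hy hx byx hy hy' hc)
  have f1 := perp_span hs' bx.1 bx.2
  have f2 := perp_span hs' by'.1 by'.2
  have g1 := perp_span hs (f := B u2) (by rw [skewB halt, f1.1, neg_zero])
    (by rw [skewB halt, f2.1, neg_zero])
  have g2 := perp_span hs (f := B w2) (by rw [skewB halt, f1.2, neg_zero])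
    (by rw [skewB halt, f2.2, neg_zero])
  refine ⟨?_, ?_, ?_, ?_⟩ <;> rw [skewB halt, neg_eq_zero]
  exacts [g1.1, g2.1, g1.2, g2.2]

end structureThm

section sympl

/-- A symplectic basis, scaled by `δ`. -/
structure SB {K V κ : Type*} [Field K] [AddCommGroup V] [Module K V] [DecidableEq κ]
    (B : V →ₗ[K] V →ₗ[K] K) (δ : K) (a b : κ → V) : Prop where
  ne : δ ≠ 0
  aa : ∀ k l, B (a k) (a l) = 0
  bb : ∀ k l, B (b k) (b l) = 0
  ab : ∀ k l, B (a k) (b l) = if k = l then δ else 0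
  full : ∀ v, (∀ k, B (a k) v = 0 ∧ B (b k) v = 0) → v = 0

variable {K V κ : Type*} [Field K] [AddCommGroup V] [Module K V] {B : V →ₗ[K] V →ₗ[K] K}

theorem SB.ba [DecidableEq κ] (halt : ∀ v, B v v = 0) {δ : K} {a b : κ → V} (h : SB B δ a b)
    (k l : κ) : B (b k) (a l) = if k = l then -δ else 0 := by
  rw [skewB halt, h.ab]
  by_cases e : k = l
  · simp [e]
  · simp [e, Ne.symm e]

theorem SB.expand [Fintype κ] [DecidableEq κ] (halt : ∀ v, B v v = 0) {δ : K} {a b : κ → V}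
    (h : SB B δ a b) (v : V) :
    v = ∑ k, ((-(B (b k) v) / δ) • a k + (B (a k) v / δ) • b k) := by
  rw [← sub_eq_zero]
  apply h.full
  have hne := h.ne
  intro l
  constructor
  · simp only [map_sub, map_sum, map_add, map_smul, h.aa, h.ab, smul_eq_mul]
    simp [hne]
  · simp only [map_sub, map_sum, map_add, map_smul, h.bb, h.ba halt, smul_eq_mul]
    simp [hne]

theorem exists_SB (n : ℕ) : ∀ {V : Type*} [AddCommGroup V] [Module K V] [FiniteDimensional K V]
    {B : V →ₗ[K] V →ₗ[K] K} (halt : ∀ v, B v v = 0) (hnd : ∀ v, (∀ x, B v x = 0) → v = 0),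
    Module.finrank K V = n → ∃ (m : ℕ) (a b : Fin m → V), SB B 1 a b := by
  induction n using Nat.strong_induction_on with
  | _ n ih =>
  intro V _ _ _ B halt hnd hn
  by_cases hz : ∀ v : V, v = 0
  · exact ⟨0, Fin.elim0, Fin.elim0, one_ne_zero, fun k => k.elim0, fun k => k.elim0,
      fun k => k.elim0, fun v _ => hz v⟩
  push Not at hz
  obtain ⟨u, hu⟩ := hz
  have : ∃ x, B u x ≠ 0 := by
    by_contra hc
    push Not at hc
    exact hu (hnd u hc)
  obtain ⟨x, hx⟩ := this
  set w := (B u x)⁻¹ • x with hw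
  have huw : B u w = 1 := by simp [hw, hx]
  have huw0 : B u w ≠ 0 := by rw [huw]; exact one_ne_zero
  have hwu : B w u = -1 := by rw [skewB halt, huw]
  set W : Submodule K V := LinearMap.ker (B u) ⊓ LinearMap.ker (B w) with hW
  have hWm : ∀ v, v ∈ W ↔ B u v = 0 ∧ B w v = 0 := by
    intro v; simp [hW]
  have hlt : Module.finrank K W < n := by
    rw [← hn]
    apply Submodule.finrank_lt
    intro hT
    have : w ∈ W := by rw [hT]; trivial
    exact huw0 ((hWm w).mp this).1
  obtain ⟨m, a, b, hab⟩ := ih _ hlt (V := W) (B := resB B W) (fun v => halt v) (by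
    intro v hv
    apply Subtype.ext
    apply hnd
    intro y
    obtain ⟨p, q, y0, e, h1, h2, -⟩ := decompB halt huw0 y
    have h0 := hv ⟨y0, (hWm y0).mpr ⟨h1, h2⟩⟩
    rw [resB_apply] at h0
    have hv' := (hWm v).mp v.2
    rw [e, map_add, map_add, map_smul, map_smul, h0, skewB halt _ u, skewB halt _ w, hv'.1, hv'.2]
    simp) rfl
  refine ⟨m + 1, Fin.cons u (fun k => (a k : V)), Fin.cons w (fun k => (b k : V)), one_ne_zero,
    ?_, ?_, ?_, ?_⟩
  · intro k l
    refine Fin.cases ?_ (fun k => ?_) k <;> refine Fin.cases ?_ (fun l => ?_) l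
    · simp [halt]
    · simpa using ((hWm _).mp (a l).2).1
    · simp only [Fin.cons_succ, Fin.cons_zero]
      rw [skewB halt, ((hWm _).mp (a k).2).1, neg_zero]
    · simpa [resB_apply] using hab.aa k l
  · intro k l
    refine Fin.cases ?_ (fun k => ?_) k <;> refine Fin.cases ?_ (fun l => ?_) l
    · simp [halt]
    · simpa using ((hWm _).mp (b l).2).2
    · simp only [Fin.cons_succ, Fin.cons_zero]
      rw [skewB halt, ((hWm _).mp (b k).2).2, neg_zero]
    · simpa [resB_apply] using hab.bb k l
  · intro k l
    refine Fin.cases ?_ (fun k => ?_) k <;> refine Fin.cases ?_ (fun l => ?_) l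
    · simp [huw]
    · rw [if_neg (Fin.succ_ne_zero l).symm]
      simpa using ((hWm _).mp (b l).2).1
    · simp only [Fin.cons_succ, Fin.cons_zero]
      rw [skewB halt, ((hWm _).mp (a k).2).2, neg_zero]
      simp
    · simpa [resB_apply, Fin.succ_inj] using hab.ab k l
  · intro v hv
    have h0 := hv 0
    simp only [Fin.cons_zero] at h0
    have := hab.full ⟨v, (hWm v).mpr h0⟩ (fun k => by simpa [resB_apply] using hv k.succ)
    exact congrArg Subtype.val this

theorem SB.two_mul [Fintype κ] [DecidableEq κ] (halt : ∀ v, B v v = 0) {δ : K} {a b : κ → V}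
    (h : SB B δ a b) : Module.finrank K V = 2 * Fintype.card κ := by
  let f : V ≃ₗ[K] (κ → K) × (κ → K) :=
  { toFun := fun v => (fun k => -(B (b k) v) / δ, fun k => B (a k) v / δ)
    map_add' := by
      intro x y
      ext k <;> simp <;> ring
    map_smul' := by
      intro c x
      ext k <;> simp <;> ring
    invFun := fun c => ∑ k, (c.1 k • a k + c.2 k • b k)
    left_inv := fun v => (h.expand halt v).symm
    right_inv := by
      intro c
      have hne := h.ne
      ext l
      · simp only [map_sum, map_add, map_smul, h.bb, h.ba halt, smul_eq_mul]
        simp [hne]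
      · simp only [map_sum, map_add, map_smul, h.aa, h.ab, smul_eq_mul]
        simp [hne] }
  rw [f.finrank_eq]
  simp only [Module.finrank_prod, Module.finrank_fintype_fun_eq_card]
  ring

end sympl

section hall

theorem conj_into {Γ P : Type*} [Group Γ] [Group P] [Finite Γ] {r : ℕ} (hr : r.Prime)
    (hP : IsPGroup r P) (Φ : P →* Γ) (H : Subgroup Γ) (hi : ¬ r ∣ H.index) :
    ∃ x : Γ, ∀ g : P, x⁻¹ * Φ g * x ∈ H := by
  have : Fact r.Prime := ⟨hr⟩
  let act : MulAction P (Γ ⧸ H) := MulAction.compHom (Γ ⧸ H) Φ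
  obtain ⟨y, hy⟩ := hP.nonempty_fixed_point_of_prime_not_dvd_card (Γ ⧸ H)
    (by rwa [← Subgroup.index_eq_card])
  obtain ⟨x, rfl⟩ := QuotientGroup.mk_surjective y
  refine ⟨x, fun g => ?_⟩
  have h1 : ((Φ g * x : Γ) : Γ ⧸ H) = (x : Γ ⧸ H) := hy g
  have := QuotientGroup.eq.mp h1.symm
  rwa [← mul_assoc] at this

variable {F : Type*} [Field F] {n m : ℕ} {B : (Fin n → F) →ₗ[F] (Fin n → F) →ₗ[F] F}

/-- The homomorphism from block matrices. -/
def Phi {ι : Type*} [Fintype ι] [DecidableEq ι] (C : Matrix (Fin 2 × ι) (Fin n) F)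
    (D : Matrix (Fin n) (Fin 2 × ι) F) (hCD : C * D = 1) (hDC : D * C = 1) :
    (ι → Matrix.SpecialLinearGroup (Fin 2) F) →* GL (Fin n) F :=
  have key : ∀ M N : ι → Matrix.SpecialLinearGroup (Fin 2) F,
      D * blockDiagonal (fun k => (M k : Matrix (Fin 2) (Fin 2) F)) * C *
      (D * blockDiagonal (fun k => (N k : Matrix (Fin 2) (Fin 2) F)) * C) =
      D * blockDiagonal (fun k => ((M * N) k : Matrix (Fin 2) (Fin 2) F)) * C := by
    intro M N
    calc _ = D * blockDiagonal (fun k => (M k : Matrix (Fin 2) (Fin 2) F)) * (C * D) *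
       blockDiagonal (fun k => (N k : Matrix (Fin 2) (Fin 2) F)) * C := by
          simp only [Matrix.mul_assoc]
      _ = _ := by
          rw [hCD, Matrix.mul_one, Matrix.mul_assoc D, ← blockDiagonal_mul]
          rfl
  have key1 : D * blockDiagonal (fun k => ((1 : ι → Matrix.SpecialLinearGroup (Fin 2) F) k :
      Matrix (Fin 2) (Fin 2) F)) * C = 1 := by
    have : (fun k => ((1 : ι → Matrix.SpecialLinearGroup (Fin 2) F) k :
      Matrix (Fin 2) (Fin 2) F)) = 1 := by
      funext k; simp
    rw [this, blockDiagonal_one, Matrix.mul_one, hDC]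
  { toFun := fun M => ⟨D * blockDiagonal (fun k => (M k : Matrix (Fin 2) (Fin 2) F)) * C,
      D * blockDiagonal (fun k => (M⁻¹ k : Matrix (Fin 2) (Fin 2) F)) * C,
      by rw [key, mul_inv_cancel, key1], by rw [key, inv_mul_cancel, key1]⟩
    map_one' := Units.ext key1
    map_mul' := fun M N => Units.ext (key M N).symm }

theorem SB.ext1 {κ W : Type*} [Fintype κ] [DecidableEq κ] [AddCommGroup W] [Module F W]
    (halt : ∀ v, B v v = 0) {δ : F} {a b : κ → Fin n → F} (h : SB B δ a b)
    {f g : (Fin n → F) →ₗ[F] W} (ha : ∀ k, f (a k) = g (a k)) (hb : ∀ k, f (b k) = g (b k)) :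
    f = g := by
  apply LinearMap.ext
  intro v
  rw [h.expand halt v]
  simp [ha, hb]

theorem exists_Phi {κ : Type*} [Fintype κ] [DecidableEq κ] (halt : ∀ v, B v v = 0) {δ : F}
    {a b : κ → Fin n → F} (h : SB B δ a b) :
    ∃ Φ : (κ → Matrix.SpecialLinearGroup (Fin 2) F) →* GL (Fin n) F, ∀ M,
      (∀ k, vecMul (a k) (Φ M).val = (M k).1 0 0 • a k + (M k).1 0 1 • b k ∧
      vecMul (b k) (Φ M).val = (M k).1 1 0 • a k + (M k).1 1 1 • b k) ∧
      Φ M ∈ isometryGroup (fun u v => B u v) := by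
  set C : Matrix (Fin 2 × κ) (Fin n) F := Matrix.of fun r => if r.1 = 0 then a r.2 else b r.2 with hC
  set D : Matrix (Fin n) (Fin 2 × κ) F := Matrix.of fun i r =>
    if r.1 = 0 then -(B (b r.2) (Pi.single i 1)) / δ else (B (a r.2) (Pi.single i 1)) / δ with hD
  have hvD : ∀ v : Fin n → F, ∀ r, vecMul v D r =
      if r.1 = 0 then -(B (b r.2) v) / δ else (B (a r.2) v) / δ := by
    intro v r
    have e : ∀ x : Fin n → F, B x v = ∑ i, v i * B x (Pi.single i 1) := by
      intro x
      conv_lhs => rw [pi_eq_sum_univ' v]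
      rw [map_sum]
      refine Finset.sum_congr rfl (fun i _ => ?_)
      rw [map_smul, smul_eq_mul]
    rw [e, e]
    simp only [vecMul, dotProduct, hD, Matrix.of_apply]
    by_cases hr : r.1 = 0
    · simp only [hr, if_true]
      rw [← Finset.sum_neg_distrib, Finset.sum_div]
      exact Finset.sum_congr rfl (fun i _ => by ring)
    · simp only [hr, if_false]
      rw [Finset.sum_div]
      exact Finset.sum_congr rfl (fun i _ => by ring)
  have hvC : ∀ x : Fin 2 × κ → F, vecMul x C = ∑ k, (x (0, k) • a k + x (1, k) • b k) := by
    intro x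
    rw [vecMul_eq_sum, Fintype.sum_prod_type, Fin.sum_univ_two, ← Finset.sum_add_distrib]
    rfl
  have hDC : D * C = 1 := by
    suffices hh : ∀ i, vecMul (Pi.single i 1) (D * C) = Pi.single i 1 by
      ext i j
      have := congrFun (hh i) j
      rw [Matrix.single_one_vecMul] at this
      rw [Matrix.one_eq_pi_single]
      exact this
    intro i
    rw [← vecMul_vecMul, hvC]
    conv_rhs => rw [h.expand halt (Pi.single i 1)]
    refine Finset.sum_congr rfl (fun k _ => ?_)
    rw [hvD, hvD]
    simp
  have hne := h.ne
  have hCD : C * D = 1 := by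
    ext ⟨r, k⟩ ⟨s, l⟩
    have : (C * D) (r, k) (s, l) = vecMul (C (r, k)) D (s, l) := rfl
    have hC0 : ∀ k, C (0, k) = a k := fun k => rfl
    have hC1 : ∀ k, C (1, k) = b k := fun k => rfl
    rw [this, hvD]
    fin_cases r <;> fin_cases s <;>
      simp [hC0, hC1, h.aa, h.bb, h.ab, h.ba halt, Matrix.one_apply, hne, eq_comm (a := l)] <;>
      split_ifs <;> simp [hne]
  refine ⟨Phi C D hCD hDC, fun M => ?_⟩
  have hrow : ∀ k r, vecMul (C (r, k)) (Phi C D hCD hDC M).val =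
      (M k).1 r 0 • a k + (M k).1 r 1 • b k := by
    intro k r
    have e : (Phi C D hCD hDC M).val =
      D * (blockDiagonal (fun k => (M k : Matrix (Fin 2) (Fin 2) F)) * C) := by
        rw [← Matrix.mul_assoc]; rfl
    have e1 : vecMul (C (r, k)) D = Pi.single (r, k) 1 := by
      funext s
      have : vecMul (C (r, k)) D s = (C * D) (r, k) s := rfl
      rw [this, hCD, Matrix.one_eq_pi_single]
    rw [e, ← vecMul_vecMul, ← vecMul_vecMul, e1, hvC]
    rw [Finset.sum_eq_single k]
    · simp [blockDiagonal_apply]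
    · intro l _ hl
      simp [blockDiagonal_apply, hl.symm]
    · simp
  have hab : ∀ k, vecMul (a k) (Phi C D hCD hDC M).val = (M k).1 0 0 • a k + (M k).1 0 1 • b k ∧
      vecMul (b k) (Phi C D hCD hDC M).val = (M k).1 1 0 • a k + (M k).1 1 1 • b k :=
    fun k => ⟨hrow k 0, hrow k 1⟩
  refine ⟨hab, ?_⟩
  have hdet : ∀ k, (M k).1 0 0 * (M k).1 1 1 - (M k).1 0 1 * (M k).1 1 0 = 1 := by
    intro k
    rw [← Matrix.det_fin_two]
    exact (M k).2
  set T := Matrix.vecMulLinear (Phi C D hCD hDC M).val with hT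
  have hTa : ∀ k, T (a k) = (M k).1 0 0 • a k + (M k).1 0 1 • b k := fun k => (hab k).1
  have hTb : ∀ k, T (b k) = (M k).1 1 0 • a k + (M k).1 1 1 • b k := fun k => (hab k).2
  have : B.compl₁₂ T T = B := by
    apply h.ext1 halt <;> intro k <;> apply h.ext1 halt <;> intro l <;>
      simp only [LinearMap.compl₁₂_apply, hTa, hTb, map_add, map_smul, LinearMap.add_apply,
        LinearMap.smul_apply, h.aa, h.bb, h.ab, h.ba halt, smul_eq_mul] <;>
      by_cases hkl : k = l
    all_goals try (simp [hkl]; done)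
    all_goals subst hkl; simp only [if_true]
    · ring
    · linear_combination δ * hdet k
    · linear_combination -δ * hdet k
    · ring
  intro u v
  exact LinearMap.congr_fun (LinearMap.congr_fun this u) v

end hall

section halldata

variable {F : Type*} [Field F] [Finite F] {n m : ℕ}
  {B : (Fin n → F) →ₗ[F] (Fin n → F) →ₗ[F] F}

theorem GL_cancel (g : GL (Fin n) F) (v : Fin n → F) :
    vecMul (vecMul v (g⁻¹ : GL (Fin n) F).val) g.val = v := by
  rw [vecMul_vecMul, g.inv_mul, vecMul_one]

theorem GL_cancel' (g : GL (Fin n) F) (v : Fin n → F) :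
    vecMul (vecMul v g.val) (g⁻¹ : GL (Fin n) F).val = v := by
  rw [vecMul_vecMul, g.mul_inv, vecMul_one]

theorem hall_data {κ : Type*} [Fintype κ] [DecidableEq κ] (halt : ∀ v, B v v = 0) {δ : F}
    {a b : κ → Fin n → F} (h : SB B δ a b) {H : Subgroup (GL (Fin n) F)}
    (hle : H ≤ similitudeGroup (fun u v => B u v)) {r : ℕ} (hr : r.Prime)
    (hidx : ¬ r ∣ H.relIndex (similitudeGroup (fun u v => B u v)))
    (Q : Subgroup (Matrix.SpecialLinearGroup (Fin 2) F)) (k0 : ℕ) (hQ : ∀ q ∈ Q, q ^ r ^ k0 = 1) :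
    ∃ (δ' : F) (a' b' : κ → Fin n → F), SB B δ' a' b' ∧
      ∃ Ψ : (κ → Q) →* H, IsPGroup r (κ → Q) ∧
      ∀ M : κ → Q, ∀ k,
        vecMul (a' k) (Ψ M).1.val = (M k).1.1 0 0 • a' k + (M k).1.1 0 1 • b' k ∧
        vecMul (b' k) (Ψ M).1.val = (M k).1.1 1 0 • a' k + (M k).1.1 1 1 • b' k := by
  obtain ⟨Φ, hΦ⟩ := exists_Phi halt h
  have hP : IsPGroup r (κ → Q) := by
    intro g
    refine ⟨k0, ?_⟩
    funext k
    apply Subtype.ext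
    exact hQ _ (g k).2
  set Γ := similitudeGroup (fun u v => B u v) with hΓ
  have hisoΓ : isometryGroup (fun u v => B u v) ≤ Γ := by
    intro g hg
    exact ⟨1, fun u v => by rw [Units.val_one, one_mul]; exact hg u v⟩
  let inc : (κ → Q) →* (κ → Matrix.SpecialLinearGroup (Fin 2) F) :=
    { toFun := fun M k => (M k).1
      map_one' := rfl
      map_mul' := fun _ _ => rfl }
  let Φ' : (κ → Q) →* Γ := (Φ.comp inc).codRestrict Γ (fun M => hisoΓ (hΦ _).2)
  obtain ⟨x, hx⟩ := conj_into hr hP Φ' (H.subgroupOf Γ) hidx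
  obtain ⟨c, hc⟩ := x.2
  have hc' : ∀ u v, B (vecMul u x.1.val) (vecMul v x.1.val) = c * B u v := hc
  let Ψ : (κ → Q) →* H :=
    { toFun := fun M => ⟨x.1⁻¹ * Φ (inc M) * x.1, hx M⟩
      map_one' := by
        apply Subtype.ext
        simp
      map_mul' := by
        intro M N
        apply Subtype.ext
        simp [mul_assoc] }
  refine ⟨c * δ, fun k => vecMul (a k) x.1.val, fun k => vecMul (b k) x.1.val, ?_, Ψ, hP, ?_⟩
  · refine ⟨mul_ne_zero c.ne_zero h.ne, ?_, ?_, ?_, ?_⟩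
    · intro k l
      rw [hc', h.aa, mul_zero]
    · intro k l
      rw [hc', h.bb, mul_zero]
    · intro k l
      rw [hc', h.ab, mul_ite, mul_zero]
    · intro v hv
      have : vecMul v (x.1⁻¹ : GL (Fin n) F).val = 0 := by
        apply h.full
        intro k
        have := hv k
        rw [← GL_cancel x.1 v, hc', hc'] at this
        exact ⟨(mul_eq_zero.mp this.1).resolve_left c.ne_zero,
          (mul_eq_zero.mp this.2).resolve_left c.ne_zero⟩
      rw [← GL_cancel x.1 v, this, zero_vecMul]
  · intro M k
    have e : ∀ v, vecMul (vecMul v x.1.val) (Ψ M).1.val =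
        vecMul (vecMul v (Φ (inc M)).val) x.1.val := by
      intro v
      have : (Ψ M).1.val = (x.1⁻¹ : GL (Fin n) F).val * (Φ (inc M)).val * x.1.val := rfl
      rw [this, ← vecMul_vecMul, ← vecMul_vecMul, GL_cancel']
    have h1 := (hΦ (inc M)).1 k
    simp only [e, h1, add_vecMul, smul_vecMul]
    exact ⟨rfl, rfl⟩

end halldata

section quat

variable {F : Type*} [Field F]

/-- The matrix `i`. -/
def qi : Matrix.SpecialLinearGroup (Fin 2) F := ⟨!![0, 1; -1, 0], by simp [Matrix.det_fin_two]⟩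

/-- The matrix `j`. -/
def qj {α β : F} (h : α * α + β * β = -1) : Matrix.SpecialLinearGroup (Fin 2) F :=
  ⟨!![α, β; β, -α], by rw [Matrix.det_fin_two]; simp; linear_combination -h⟩

/-- The matrix `t`. -/
def qt : Matrix.SpecialLinearGroup (Fin 2) F := ⟨!![0, 1; -1, -1], by simp [Matrix.det_fin_two]⟩

theorem qi_sq : (qi : Matrix.SpecialLinearGroup (Fin 2) F) * qi = -1 := by
  apply Subtype.ext
  ext r s
  simp only [Matrix.SpecialLinearGroup.coe_mul, Matrix.SpecialLinearGroup.coe_neg, Matrix.SpecialLinearGroup.coe_one]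
  fin_cases r <;> fin_cases s <;> simp [qi]

theorem qj_sq {α β : F} (h : α * α + β * β = -1) : qj h * qj h = -1 := by
  apply Subtype.ext
  ext r s
  simp only [Matrix.SpecialLinearGroup.coe_mul, Matrix.SpecialLinearGroup.coe_neg, Matrix.SpecialLinearGroup.coe_one]
  fin_cases r <;> fin_cases s <;> simp [qj] <;> first | linear_combination h | ring

theorem qj_qi {α β : F} (h : α * α + β * β = -1) : qj h * qi = -(qi * qj h) := by
  apply Subtype.ext
  ext r s
  simp only [Matrix.SpecialLinearGroup.coe_mul, Matrix.SpecialLinearGroup.coe_neg, Matrix.SpecialLinearGroup.coe_one]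
  fin_cases r <;> fin_cases s <;> simp [qj, qi]

theorem qt_cube : (qt : Matrix.SpecialLinearGroup (Fin 2) F) ^ 3 = 1 := by
  rw [pow_succ, pow_two]
  apply Subtype.ext
  ext r s
  simp only [Matrix.SpecialLinearGroup.coe_mul, Matrix.SpecialLinearGroup.coe_neg, Matrix.SpecialLinearGroup.coe_one]
  fin_cases r <;> fin_cases s <;> simp [qt]

theorem quat_mul {R : Type*} [Monoid R] [HasDistribNeg R] {i j : R} (hi : i * i = -1)
    (hj : j * j = -1) (hji : j * i = -(i * j)) {P : R → Prop}
    (hP : ∀ x, P x ↔ ∃ s t : R, (s = 1 ∨ s = -1) ∧ (t = 1 ∨ t = i ∨ t = j ∨ t = i * j) ∧ x = s * t)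
    {x y : R} (hx : P x) (hy : P y) : P (x * y) := by
  have e1 : ∀ z, i * (i * z) = -z := fun z => by rw [← mul_assoc, hi, neg_one_mul]
  have e2 : ∀ z, j * (j * z) = -z := fun z => by rw [← mul_assoc, hj, neg_one_mul]
  have e3 : ∀ z, j * (i * z) = -(i * (j * z)) := fun z => by
    rw [← mul_assoc, hji, neg_mul, mul_assoc]
  rw [hP] at *
  obtain ⟨s, t, hs, ht, rfl⟩ := hx
  obtain ⟨s', t', hs', ht', rfl⟩ := hy
  have hneg : ∀ x : R, (∃ s t : R, (s = 1 ∨ s = -1) ∧ (t = 1 ∨ t = i ∨ t = j ∨ t = i * j) ∧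
      x = s * t) → (∃ s t : R, (s = 1 ∨ s = -1) ∧ (t = 1 ∨ t = i ∨ t = j ∨ t = i * j) ∧
      -x = s * t) := by
    rintro x ⟨s, t, hs, ht, rfl⟩
    refine ⟨-s, t, ?_, ht, by rw [neg_mul]⟩
    rcases hs with rfl | rfl <;> simp
  have main : ∃ s0 t0 : R, (s0 = 1 ∨ s0 = -1) ∧ (t0 = 1 ∨ t0 = i ∨ t0 = j ∨ t0 = i * j) ∧
      t * t' = s0 * t0 := by
    rcases ht with h | h | h | h <;> rcases ht' with h' | h' | h' | h' <;> rw [h, h'] <;>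
      try simp only [one_mul, mul_one, mul_assoc, hi, hj, hji, e1, e2, e3, mul_neg, neg_neg]
    all_goals first
      | (refine ⟨1, 1, ?_, ?_, ?_⟩ <;> simp; done)
      | (refine ⟨-1, 1, ?_, ?_, ?_⟩ <;> simp; done)
      | (refine ⟨1, i, ?_, ?_, ?_⟩ <;> simp; done)
      | (refine ⟨-1, i, ?_, ?_, ?_⟩ <;> simp; done)
      | (refine ⟨1, j, ?_, ?_, ?_⟩ <;> simp; done)
      | (refine ⟨-1, j, ?_, ?_, ?_⟩ <;> simp; done)
      | (refine ⟨1, i * j, ?_, ?_, ?_⟩ <;> simp; done)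
      | (refine ⟨-1, i * j, ?_, ?_, ?_⟩ <;> simp; done)
  rcases hs with rfl | rfl <;> rcases hs' with rfl | rfl <;>
    simp only [one_mul, neg_one_mul, neg_mul, mul_neg, neg_neg]
  · exact main
  · exact hneg _ main
  · exact hneg _ main
  · exact main

theorem exists_quat {R : Type*} [Group R] [HasDistribNeg R] {i j : R} (hi : i * i = -1)
    (hj : j * j = -1) (hji : j * i = -(i * j)) :
    ∃ Q : Subgroup R, i ∈ Q ∧ j ∈ Q ∧ ∀ q ∈ Q, q ^ 2 ^ 2 = 1 := by
  let P : R → Prop := fun x => ∃ s t : R, (s = 1 ∨ s = -1) ∧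
    (t = 1 ∨ t = i ∨ t = j ∨ t = i * j) ∧ x = s * t
  have hmul : ∀ {x y}, P x → P y → P (x * y) := fun hx hy =>
    quat_mul hi hj hji (P := P) (fun x => Iff.rfl) hx hy
  have h4 : ∀ x, P x → x ^ 2 ^ 2 = 1 := by
    have e1 : ∀ z, i * (i * z) = -z := fun z => by rw [← mul_assoc, hi, neg_one_mul]
    have e2 : ∀ z, j * (j * z) = -z := fun z => by rw [← mul_assoc, hj, neg_one_mul]
    have e3 : ∀ z, j * (i * z) = -(i * (j * z)) := fun z => by
      rw [← mul_assoc, hji, neg_mul, mul_assoc]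
    rintro x ⟨s, t, hs, ht, rfl⟩
    have : (2 : ℕ) ^ 2 = 3 + 1 := by norm_num
    rw [this, pow_succ, pow_succ, pow_two]
    rcases hs with rfl | rfl <;> rcases ht with rfl | rfl | rfl | rfl <;>
      simp only [one_mul, mul_one, mul_assoc, hi, hj, hji, e1, e2, e3, mul_neg, neg_neg, neg_mul]
  refine ⟨⟨⟨⟨{x | P x}, fun hx hy => hmul hx hy⟩, ⟨1, 1, by simp, by simp, by simp⟩⟩, ?_⟩,
    ⟨1, i, by simp, by simp, by simp⟩, ⟨1, j, by simp, by simp, by simp⟩, h4⟩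
  intro x hx
  have e : x⁻¹ = x * x * x := by
    rw [inv_eq_iff_mul_eq_one]
    have := h4 x hx
    have e : (2 : ℕ) ^ 2 = 3 + 1 := by norm_num
    rw [e, pow_succ', pow_succ, pow_two] at this
    exact this
  rw [e]
  exact hmul (hmul hx hx) hx

end quat

section mkdata

variable {K V : Type*} [Field K] [AddCommGroup V] [Module K V] {B : V →ₗ[K] V →ₗ[K] K}

theorem qd_back (h2 : (2 : K) ≠ 0) {ι α β : K} (hι : ι * ι = -1) (hαβ : α * α + β * β = -1)
    {a b : V} {f : V →ₗ[K] K} (h1 : f (a - ι • b) = 0)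
    (hw : f ((α - ι * β) • a + (β + ι * α) • b) = 0) : f a = 0 ∧ f b = 0 := by
  simp only [map_sub, map_add, map_smul, smul_eq_mul] at h1 hw
  have e1 : f a = ι * f b := by linear_combination h1
  rw [e1] at hw
  have e2 : 2 * ((β + ι * α) * f b) = 0 := by
    linear_combination hw + β * f b * hι
  have e3 : (β + ι * α) * f b = 0 := (mul_eq_zero.mp e2).resolve_left h2
  have e4 : f b = 0 := by
    linear_combination (-(β - ι * α)) * e3 + (f b) * hαβ - f b * α * α * hι
  exact ⟨by rw [e1, e4, mul_zero], e4⟩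

theorem QD.mk' (halt : ∀ v, B v v = 0) (h2 : (2 : K) ≠ 0) {ι α β δ : K} (hι : ι * ι = -1)
    (hαβ : α * α + β * β = -1) (hδ : δ ≠ 0) {I J : Module.End K V} {a b : V}
    (Ia : I a = b) (Ib : I b = -a) (Ja : J a = α • a + β • b) (Jb : J b = β • a - α • b)
    (hab : B a b = δ) (hf : ∀ v, B a v = 0 → B b v = 0 → I v = v ∧ J v = v) :
    QD B ι I J (a - ι • b) ((α - ι * β) • a + (β + ι * α) • b) := by
  have hba : B b a = -δ := by rw [skewB halt, hab]
  refine ⟨?_, ?_, ?_, ?_, ?_, ?_⟩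
  · simp only [map_sub, map_add, map_smul, LinearMap.sub_apply, LinearMap.smul_apply, halt, hab,
      hba, smul_eq_mul]
    intro h0
    have e : 2 * (δ * (β + ι * α)) = 0 := by linear_combination h0 + δ * β * hι
    rcases mul_eq_zero.mp ((mul_eq_zero.mp e).resolve_left h2) with h | h
    · exact hδ h
    · have : (1 : K) = 0 := by linear_combination (-(β - ι * α)) * h + hαβ - α * α * hι
      exact one_ne_zero this
  · simp only [map_sub, map_smul, Ia, Ib, smul_sub, smul_smul, hι]
    module
  · simp only [map_add, map_smul, Ia, Ib, smul_add, smul_smul]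
    rw [← sub_eq_zero]
    have : (α - ι * β) • b + (β + ι * α) • -a - -((ι * (α - ι * β)) • a + (ι * (β + ι * α)) • b) =
      ((ι * ι + 1) * α) • b + (-(ι * ι + 1) * β) • a := by module
    rw [this, hι]
    simp
  · simp only [map_sub, map_smul, Ja, Jb]
    module
  · simp only [map_add, map_smul, Ja, Jb]
    rw [← sub_eq_zero]
    have : (α - ι * β) • (α • a + β • b) + (β + ι * α) • (β • a - α • b) - -(a - ι • b) =
      ((α * α + β * β + 1)) • a + (-ι * (α * α + β * β + 1)) • b := by module
    rw [this, hαβ]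
    simp
  · intro v hu hw
    have h := qd_back h2 hι hαβ (f := B.flip v) hu hw
    exact hf v h.1 h.2

theorem TD.mk' (halt : ∀ v, B v v = 0) (h3 : (3 : K) ≠ 0) {ω δ : K} (hω : ω * ω + ω + 1 = 0)
    (hδ : δ ≠ 0) {T : Module.End K V} {a b : V}
    (Ta : T a = b) (Tb : T b = -a - b)
    (hab : B a b = δ) (hf : ∀ v, B a v = 0 → B b v = 0 → T v = v) :
    TD B ω T (a - ω • b) (a - (ω * ω) • b) := by
  have hba : B b a = -δ := by rw [skewB halt, hab]
  have hne : ω - ω * ω ≠ 0 := by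
    intro h0
    apply h3
    linear_combination 4 * hω - (2 * ω + 1) * (hω + h0)
  have hw3 : ω * ω * ω = 1 := by linear_combination (ω - 1) * hω
  refine ⟨?_, ?_, ?_, ?_⟩
  · simp only [map_sub, map_smul, LinearMap.sub_apply, LinearMap.smul_apply, halt, hab,
      hba, smul_eq_mul]
    intro h0
    have e : δ * (ω - ω * ω) = 0 := by linear_combination h0
    rcases mul_eq_zero.mp e with h | h
    · exact hδ h
    · exact hne h
  · simp only [map_sub, map_smul, Ta, Tb]
    rw [← sub_eq_zero]
    have : b - ω • (-a - b) - ω • (a - ω • b) = (ω * ω + ω + 1) • b := by module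
    rw [this, hω, zero_smul]
  · simp only [map_sub, map_smul, Ta, Tb]
    rw [← sub_eq_zero]
    have : b - (ω * ω) • (-a - b) - (ω * ω) • (a - (ω * ω) • b)
      = ((ω * ω + ω + 1) * (ω * ω - ω + 1)) • b := by module
    rw [this, hω, zero_mul, zero_smul]
  · intro v hu hw
    simp only [map_sub, map_smul, LinearMap.sub_apply, LinearMap.smul_apply, smul_eq_mul] at hu hw
    have e : (ω - ω * ω) * B b v = 0 := by linear_combination hw - hu
    have hb := (mul_eq_zero.mp e).resolve_left hne
    rw [hb, mul_zero, sub_zero] at hu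
    exact hf v hu hb

theorem QD.fixed (halt : ∀ v, B v v = 0) (h2 : (2 : K) ≠ 0) {ι : K} (hι : ι * ι = -1)
    {I J : Module.End K V} {u w : V} (h : QD B ι I J u w) {v : V} (hv : I v = v) :
    B u v = 0 ∧ B w v = 0 := by
  obtain ⟨a, b, v0, e, k1, k2, ha, hb⟩ := decompB halt h.buw v
  have e1 : (a * (ι - 1)) • u + (b * (-ι - 1)) • w + (0 : V) = 0 := by
    have := hv
    rw [e] at this
    simp only [map_add, map_smul, h.Iu, h.Iw, (h.fix v0 k1 k2).1] at this
    rw [← sub_eq_zero] at this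
    refine Eq.trans ?_ this
    module
  obtain ⟨z1, z2, -⟩ := coeff_zero halt h.buw (map_zero _) (map_zero _) e1
  have n1 : ι - 1 ≠ 0 := by
    intro h0
    apply h2
    linear_combination hι - (ι + 1) * h0
  have n2 : -ι - 1 ≠ 0 := by
    intro h0
    apply h2
    linear_combination hι + (ι - 1) * h0
  have z1 := (mul_eq_zero.mp z1).resolve_right n1
  have z2 := (mul_eq_zero.mp z2).resolve_right n2
  rw [e, z1, z2]
  simp [k1, k2]

theorem TD.fixed (halt : ∀ v, B v v = 0) (h3 : (3 : K) ≠ 0) {ω : K} (hω : ω * ω + ω + 1 = 0)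
    {T : Module.End K V} {u w : V} (h : TD B ω T u w) {v : V} (hv : T v = v) :
    B u v = 0 ∧ B w v = 0 := by
  obtain ⟨a, b, v0, e, k1, k2, ha, hb⟩ := decompB halt h.buw v
  have e1 : (a * (ω - 1)) • u + (b * (ω * ω - 1)) • w + (0 : V) = 0 := by
    have := hv
    rw [e] at this
    simp only [map_add, map_smul, h.Tu, h.Tw, (h.fix v0 k1 k2)] at this
    rw [← sub_eq_zero] at this
    refine Eq.trans ?_ this
    module
  obtain ⟨z1, z2, -⟩ := coeff_zero halt h.buw (map_zero _) (map_zero _) e1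
  have n1 : ω - 1 ≠ 0 := by
    intro h0
    apply h3
    linear_combination hω - (ω + 2) * h0
  have n2 : ω * ω - 1 ≠ 0 := by
    intro h0
    apply h3
    linear_combination h0 - (ω - 2) * (hω - h0)
  have z1 := (mul_eq_zero.mp z1).resolve_right n1
  have z2 := (mul_eq_zero.mp z2).resolve_right n2
  rw [e, z1, z2]
  simp [k1, k2]

theorem QD.conj {G : Type*} [Group G] {ρ : G →* Module.End K V} {lam : G → K}
    (halt : ∀ v, B v v = 0)
    (hlam : ∀ g x y, B (ρ g x) (ρ g y) = lam g * B x y) {ι : K} {i j : G} {u w : V}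
    (h : QD B ι (ρ i) (ρ j) u w) (g : G) :
    QD B ι (ρ (g * i * g⁻¹)) (ρ (g * j * g⁻¹)) (ρ g u) (ρ g w) := by
  have hl := lam_ne_zero hlam h.buw g
  have e : ∀ x v, ρ (g * x * g⁻¹) (ρ g v) = ρ g (ρ x v) := by
    intro x v
    simp only [map_mul, Module.End.mul_apply, rho_inv_apply]
  refine ⟨?_, ?_, ?_, ?_, ?_, ?_⟩
  · rw [hlam]; exact mul_ne_zero hl h.buw
  · rw [e, h.Iu, map_smul]
  · rw [e, h.Iw, map_neg, map_smul]
  · rw [e, h.Ju]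
  · rw [e, h.Jw, map_neg]
  · intro v h1 h2
    obtain ⟨v', rfl⟩ : ∃ v', v = ρ g v' := ⟨ρ g⁻¹ v, by rw [rho_apply_inv]⟩
    rw [hlam] at h1 h2
    have := h.fix v' ((mul_eq_zero.mp h1).resolve_left hl) ((mul_eq_zero.mp h2).resolve_left hl)
    rw [e, e, this.1, this.2]
    exact ⟨rfl, rfl⟩

end mkdata

section basechange

variable {F K : Type} [Field F] [Field K] (φ : F →+* K) {n : ℕ}
  (B : (Fin n → F) →ₗ[F] (Fin n → F) →ₗ[F] F)

/-- Extension of scalars for vectors. -/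
def upv (v : Fin n → F) : Fin n → K := fun i => φ (v i)

/-- Extension of scalars for bilinear forms. -/
noncomputable def BKf : (Fin n → K) →ₗ[K] (Fin n → K) →ₗ[K] K :=
  Matrix.toLinearMap₂' K (Matrix.of fun i j => φ (B (Pi.single i 1) (Pi.single j 1)))

theorem upv_single (i : Fin n) : upv φ (Pi.single i (1 : F)) = Pi.single i 1 := by
  funext j
  by_cases h : j = i
  · subst h; simp [upv]
  · simp [upv, h]

theorem upv_add (u v : Fin n → F) : upv φ (u + v) = upv φ u + upv φ v := by
  funext j; simp [upv]

theorem upv_neg (u : Fin n → F) : upv φ (-u) = -upv φ u := by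
  funext j; simp [upv]

theorem upv_sub (u v : Fin n → F) : upv φ (u - v) = upv φ u - upv φ v := by
  funext j; simp [upv]

theorem upv_smul (c : F) (v : Fin n → F) : upv φ (c • v) = φ c • upv φ v := by
  funext j; simp [upv]

theorem upv_sum {κ : Type*} (s : Finset κ) (f : κ → Fin n → F) :
    upv φ (∑ k ∈ s, f k) = ∑ k ∈ s, upv φ (f k) := by
  funext j; simp [upv]

theorem BKf_up (u v : Fin n → F) : BKf φ B (upv φ u) (upv φ v) = φ (B u v) := by
  have e : B = Matrix.toLinearMap₂' F (LinearMap.toMatrix₂' F B) := by simp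
  conv_rhs => rw [e]
  simp only [BKf, Matrix.toLinearMap₂'_apply, upv, LinearMap.toMatrix₂'_apply, Matrix.of_apply,
    map_sum, map_mul, smul_eq_mul]

theorem up_ext {W : Type*} [AddCommGroup W] [Module K W] {f g : (Fin n → K) →ₗ[K] W}
    (h : ∀ v : Fin n → F, f (upv φ v) = g (upv φ v)) : f = g := by
  apply LinearMap.pi_ext'
  intro i
  apply LinearMap.ext_ring
  have := h (Pi.single i 1)
  rw [upv_single] at this
  simpa using this

theorem up_ext2 {W : Type*} [AddCommGroup W] [Module K W]
    {f g : (Fin n → K) →ₗ[K] (Fin n → K) →ₗ[K] W}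
    (h : ∀ u v : Fin n → F, f (upv φ u) (upv φ v) = g (upv φ u) (upv φ v)) : f = g :=
  up_ext φ fun u => up_ext φ fun v => h u v

variable {B}

theorem BKf_alt (h2 : (2 : K) ≠ 0) (halt : ∀ v, B v v = 0) (v : Fin n → K) :
    BKf φ B v v = 0 := by
  have e : BKf φ B = -(BKf φ B).flip := by
    apply up_ext2 φ
    intro u v
    rw [LinearMap.neg_apply, LinearMap.neg_apply, LinearMap.flip_apply, BKf_up, BKf_up,
      skewB halt, map_neg]
  have := LinearMap.congr_fun (LinearMap.congr_fun e v) v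
  rw [LinearMap.neg_apply, LinearMap.neg_apply, LinearMap.flip_apply] at this
  have h : 2 * BKf φ B v v = 0 := by linear_combination this
  exact (mul_eq_zero.mp h).resolve_left h2

theorem SB.up {κ : Type*} [Fintype κ] [DecidableEq κ] (halt : ∀ v, B v v = 0) {δ : F}
    {a b : κ → Fin n → F} (h : SB B δ a b) :
    SB (BKf φ B) (φ δ) (fun k => upv φ (a k)) (fun k => upv φ (b k)) := by
  have hd : φ δ ≠ 0 := (map_ne_zero φ).mpr h.ne
  refine ⟨hd, ?_, ?_, ?_, ?_⟩
  · intro k l; rw [BKf_up, h.aa, map_zero]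
  · intro k l; rw [BKf_up, h.bb, map_zero]
  · intro k l; rw [BKf_up, h.ab]; split_ifs <;> simp
  · intro v hv
    have e : (LinearMap.id : (Fin n → K) →ₗ[K] (Fin n → K)) =
        ∑ k, ((-(φ δ)⁻¹) • (BKf φ B (upv φ (b k))).smulRight (upv φ (a k)) +
          (φ δ)⁻¹ • (BKf φ B (upv φ (a k))).smulRight (upv φ (b k))) := by
      apply up_ext φ
      intro v
      rw [LinearMap.id_apply]
      conv_lhs => rw [h.expand halt v]
      rw [upv_sum, LinearMap.sum_apply]
      refine Finset.sum_congr rfl fun k _ => ?_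
      simp only [upv_add, upv_smul, LinearMap.add_apply, LinearMap.smul_apply,
        LinearMap.smulRight_apply, BKf_up, map_div₀, map_neg, smul_smul]
      congr 2 <;> ring
    have := LinearMap.congr_fun e v
    rw [LinearMap.id_apply, LinearMap.sum_apply] at this
    rw [this]
    apply Finset.sum_eq_zero
    intro k _
    simp [LinearMap.smulRight_apply, (hv k).1, (hv k).2]

theorem SB.nd {κ : Type*} [DecidableEq κ] {V : Type*} [AddCommGroup V] [Module K V]
    {B : V →ₗ[K] V →ₗ[K] K} (halt : ∀ v, B v v = 0) {δ : K}
    {a b : κ → V} (h : SB B δ a b) (v : V) (hv : ∀ x, B v x = 0) : v = 0 :=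
  h.full v fun k => ⟨by rw [skewB halt, hv, neg_zero], by rw [skewB halt, hv, neg_zero]⟩

/-- The action of `H` over the extension. -/
noncomputable def rhoK (H : Subgroup (GL (Fin n) F)) : H →* Module.End K (Fin n → K) where
  toFun h := Matrix.vecMulLinear ((h⁻¹).1.val.map φ)
  map_one' := by
    apply LinearMap.ext
    intro v
    simp [Matrix.map_one]
  map_mul' g h := by
    apply LinearMap.ext
    intro v
    have : ((g * h)⁻¹).1.val = (h⁻¹).1.val * (g⁻¹).1.val := by
      rw [_root_.mul_inv_rev]; rfl
    rw [this, Matrix.map_mul]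
    simp [Matrix.vecMul_vecMul]

theorem rhoK_up {H : Subgroup (GL (Fin n) F)} (h : H) (v : Fin n → F) :
    rhoK φ H h (upv φ v) = upv φ (vecMul v (h⁻¹).1.val) := by
  funext i
  simp [rhoK, upv, vecMul, dotProduct, map_sum, map_mul]

theorem rhoK_sim {H : Subgroup (GL (Fin n) F)}
    (hle : H ≤ similitudeGroup (fun u v => B u v)) :
    ∃ lam : H → K, ∀ g x y, BKf φ B (rhoK φ H g x) (rhoK φ H g y) = lam g * BKf φ B x y := by
  have : ∀ g : H, ∃ c : F, ∀ u v, B (vecMul u (g⁻¹).1.val) (vecMul v (g⁻¹).1.val) = c * B u v := by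
    intro g
    obtain ⟨c, hc⟩ := hle (g⁻¹).2
    exact ⟨c, hc⟩
  choose c hc using this
  refine ⟨fun g => φ (c g), fun g x y => ?_⟩
  have e : (BKf φ B).compl₁₂ (rhoK φ H g) (rhoK φ H g) = φ (c g) • BKf φ B := by
    apply up_ext2 φ
    intro u v
    simp only [LinearMap.compl₁₂_apply, rhoK_up, BKf_up, hc, LinearMap.smul_apply, map_mul,
      smul_eq_mul]
  have := LinearMap.congr_fun (LinearMap.congr_fun e x) y
  simpa using this

end basechange

section blocks

variable {F : Type} [Field F] [Finite F] {n : ℕ}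
  {B : (Fin n → F) →ₗ[F] (Fin n → F) →ₗ[F] F}

theorem SB.fix_of {κ : Type*} [Fintype κ] [DecidableEq κ] {V K : Type*} [Field K] [AddCommGroup V]
    [Module K V] {B : V →ₗ[K] V →ₗ[K] K} (halt : ∀ v, B v v = 0) {δ : K}
    {a b : κ → V} (h : SB B δ a b) {I : Module.End K V} {k : κ}
    (hI : ∀ l, l ≠ k → I (a l) = a l ∧ I (b l) = b l) {v : V} (h1 : B (a k) v = 0)
    (h2 : B (b k) v = 0) : I v = v := by
  conv_lhs => rw [h.expand halt v]
  conv_rhs => rw [h.expand halt v]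
  rw [map_sum]
  refine Finset.sum_congr rfl fun l _ => ?_
  by_cases hl : l = k
  · subst hl
    simp [h1, h2]
  · rw [map_add, map_smul, map_smul, (hI l hl).1, (hI l hl).2]

theorem block_thm (halt : ∀ v, B v v = 0) (h2 : (2 : F) ≠ 0) (h3 : (3 : F) ≠ 0) {m : ℕ} {δ : F}
    {a b : Fin m → Fin n → F} (h : SB B δ a b) {H : Subgroup (GL (Fin n) F)}
    (hle : H ≤ similitudeGroup (fun u v => B u v))
    (hi2 : ¬ 2 ∣ H.relIndex (similitudeGroup (fun u v => B u v)))
    (hi3 : ¬ 3 ∣ H.relIndex (similitudeGroup (fun u v => B u v)))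
    (hsol : Group.IsSolvable H) (hcard : (Nat.card H : F) ≠ 0) :
    ∃ (δ : F) (a b : Fin m → Fin n → F), SB B δ a b ∧ ∀ g ∈ H, ∀ l, ∃ k,
      (∃ c d : F, vecMul (a l) g.val = c • a k + d • b k) ∧
      (∃ c d : F, vecMul (b l) g.val = c • a k + d • b k) := by
  obtain ⟨α, β, hαβ⟩ : ∃ α β : F, α * α + β * β = -1 := by
    have := Fintype.ofFinite F
    have hodd : Fintype.card F % 2 = 1 := by
      apply FiniteField.odd_card_of_char_ne_two
      intro hc
      apply h2
      have := ringChar.Nat.cast_ringChar (R := F)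
      rw [hc] at this
      exact_mod_cast this
    obtain ⟨x, y, hxy⟩ := FiniteField.exists_root_sum_quadratic
      (f := (Polynomial.X ^ 2 : Polynomial F)) (g := Polynomial.X ^ 2 - Polynomial.C (-1))
      (Polynomial.degree_X_pow 2) (Polynomial.degree_X_pow_sub_C (by decide) _) hodd
    refine ⟨x, y, ?_⟩
    simp only [Polynomial.eval_pow, Polynomial.eval_X, Polynomial.eval_sub, Polynomial.eval_C] at hxy
    linear_combination hxy
  obtain ⟨Q, hiQ, hjQ, hQ⟩ := exists_quat (qi_sq (F := F)) (qj_sq hαβ) (qj_qi hαβ)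
  obtain ⟨δ₂, a₂, b₂, sb2, Ψ₂, hP2, hΨ₂⟩ := hall_data halt h hle Nat.prime_two hi2 Q 2 hQ
  have hQ3 : ∀ q ∈ Subgroup.zpowers (qt : Matrix.SpecialLinearGroup (Fin 2) F), q ^ 3 ^ 1 = 1 := by
    rintro q ⟨z, rfl⟩
    simp only [pow_one]
    rw [← zpow_natCast, zpow_comm, zpow_natCast, qt_cube, _root_.one_zpow]
  obtain ⟨δ₃, a₃, b₃, sb3, Ψ₃, hP3, hΨ₃⟩ := hall_data halt h hle Nat.prime_three hi3 _ 1 hQ3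
  refine ⟨δ₂, a₂, b₂, sb2, ?_⟩
  let φ := algebraMap F (AlgebraicClosure F)
  have h2' : (2 : AlgebraicClosure F) ≠ 0 := by
    have := (map_ne_zero φ).mpr h2
    rwa [map_ofNat] at this
  have h3' : (3 : AlgebraicClosure F) ≠ 0 := by
    have := (map_ne_zero φ).mpr h3
    rwa [map_ofNat] at this
  have hc' : (Nat.card H : AlgebraicClosure F) ≠ 0 := by
    have := (map_ne_zero φ).mpr hcard
    simpa using this
  obtain ⟨ι, hι⟩ : ∃ ι : AlgebraicClosure F, ι * ι = -1 := by
    obtain ⟨z, hz⟩ := IsAlgClosed.exists_pow_nat_eq (-1 : AlgebraicClosure F) (n := 2) (by norm_num)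
    exact ⟨z, by rw [← pow_two, hz]⟩
  obtain ⟨ω, hω⟩ : ∃ ω : AlgebraicClosure F, ω * ω + ω + 1 = 0 := by
    obtain ⟨z, hz⟩ := IsAlgClosed.exists_pow_nat_eq (-3 : AlgebraicClosure F) (n := 2) (by norm_num)
    refine ⟨(z - 1) / 2, ?_⟩
    field_simp
    linear_combination hz
  have haltK := BKf_alt φ h2' halt
  have kb2 := sb2.up φ halt
  have kb3 := sb3.up φ halt
  have hαβK : φ α * φ α + φ β * φ β = -1 := by
    rw [← map_mul, ← map_mul, ← map_add, hαβ, map_neg, map_one]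
  obtain ⟨lam, hlam⟩ := rhoK_sim φ hle
  -- elements
  let ei : Fin m → H := fun k => (Ψ₂ (Pi.mulSingle k ⟨qi, hiQ⟩))⁻¹
  let ej : Fin m → H := fun k => (Ψ₂ (Pi.mulSingle k ⟨qj hαβ, hjQ⟩))⁻¹
  let et : Fin m → H := fun k =>
    (Ψ₃ (Pi.mulSingle k ⟨qt, Subgroup.mem_zpowers _⟩))⁻¹
  have act2 : ∀ (k : Fin m) (q : Q) (l : Fin m), l ≠ k →
      rhoK φ H (Ψ₂ (Pi.mulSingle k q))⁻¹ (upv φ (a₂ l)) = upv φ (a₂ l) ∧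
      rhoK φ H (Ψ₂ (Pi.mulSingle k q))⁻¹ (upv φ (b₂ l)) = upv φ (b₂ l) := by
    intro k q l hl
    rw [rhoK_up, rhoK_up, inv_inv, (hΨ₂ _ l).1, (hΨ₂ _ l).2, Pi.mulSingle_eq_of_ne hl]
    simp
  have act3 : ∀ (k : Fin m) q (l : Fin m), l ≠ k →
      rhoK φ H (Ψ₃ (Pi.mulSingle k q))⁻¹ (upv φ (a₃ l)) = upv φ (a₃ l) ∧
      rhoK φ H (Ψ₃ (Pi.mulSingle k q))⁻¹ (upv φ (b₃ l)) = upv φ (b₃ l) := by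
    intro k q l hl
    rw [rhoK_up, rhoK_up, inv_inv, (hΨ₃ _ l).1, (hΨ₃ _ l).2, Pi.mulSingle_eq_of_ne hl]
    simp
  let u : Fin m → Fin n → AlgebraicClosure F := fun k => upv φ (a₂ k) - ι • upv φ (b₂ k)
  let w : Fin m → Fin n → AlgebraicClosure F := fun k =>
    (φ α - ι * φ β) • upv φ (a₂ k) + (φ β + ι * φ α) • upv φ (b₂ k)
  have hQD : ∀ k, QD (BKf φ B) ι (rhoK φ H (ei k)) (rhoK φ H (ej k)) (u k) (w k) := by
    intro k
    refine QD.mk' haltK h2' hι hαβK kb2.ne ?_ ?_ ?_ ?_ (by have := kb2.ab k k; simpa using this) ?_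
    · rw [rhoK_up, inv_inv, (hΨ₂ _ k).1, Pi.mulSingle_eq_same]
      simp [qi]
    · rw [rhoK_up, inv_inv, (hΨ₂ _ k).2, Pi.mulSingle_eq_same]
      simp [qi, upv_neg]
    · rw [rhoK_up, inv_inv, (hΨ₂ _ k).1, Pi.mulSingle_eq_same]
      simp [qj, upv_add, upv_smul]
    · rw [rhoK_up, inv_inv, (hΨ₂ _ k).2, Pi.mulSingle_eq_same]
      simp [qj, upv_add, upv_smul, upv_neg, sub_eq_add_neg]
    · intro v v1 v2
      exact ⟨kb2.fix_of haltK (act2 k _) v1 v2, kb2.fix_of haltK (act2 k _) v1 v2⟩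
  have hTD : ∀ k, TD (BKf φ B) ω (rhoK φ H (et k)) (upv φ (a₃ k) - ω • upv φ (b₃ k))
      (upv φ (a₃ k) - (ω * ω) • upv φ (b₃ k)) := by
    intro k
    refine TD.mk' haltK h3' hω kb3.ne ?_ ?_ (by have := kb3.ab k k; simpa using this) ?_
    · rw [rhoK_up, inv_inv, (hΨ₃ _ k).1, Pi.mulSingle_eq_same]
      simp [qt]
    · rw [rhoK_up, inv_inv, (hΨ₃ _ k).2, Pi.mulSingle_eq_same]
      simp [qt, upv_neg, upv_add, sub_eq_add_neg]
    · intro v v1 v2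
      exact kb3.fix_of haltK (act3 k _) v1 v2
  have back : ∀ v, (∀ k, BKf φ B (u k) v = 0 ∧ BKf φ B (w k) v = 0) → v = 0 := by
    intro v hv
    apply kb2.full
    intro k
    exact qd_back h2' hι hαβK (f := (BKf φ B).flip v) (hv k).1 (hv k).2
  have hfull : ∀ v, (∀ k, rhoK φ H (ei k) v = v) → v = 0 := by
    intro v hv
    exact back v fun k => (hQD k).fixed haltK h2' hι (hv k)
  have htfull : ∀ v, (∀ k, rhoK φ H (et k) v = v) → v = 0 := by
    intro v hv
    apply kb3.full
    intro k
    have := (hTD k).fixed haltK h3' hω (hv k)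
    obtain ⟨hu, hw⟩ := this
    have hne : ω - ω * ω ≠ 0 := by
      intro h0
      apply h3'
      linear_combination 4 * hω - (2 * ω + 1) * (hω + h0)
    simp only [map_sub, map_smul, LinearMap.sub_apply, LinearMap.smul_apply, smul_eq_mul] at hu hw
    have e : (ω - ω * ω) * BKf φ B (upv φ (b₃ k)) v = 0 := by linear_combination hw - hu
    have hb := (mul_eq_zero.mp e).resolve_left hne
    rw [hb, mul_zero, sub_zero] at hu
    exact ⟨hu, hb⟩
  have ho : ∀ k l, k ≠ l → Orth4 (BKf φ B) (u k) (w k) (u l) (w l) := by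
    intro k l hkl
    have e1 := kb2.aa k l
    have e2 := kb2.bb k l
    have e3 := kb2.ab k l
    have e4 := kb2.ba haltK k l
    simp only [if_neg hkl] at e3 e4
    simp only [Orth4, u, w, map_sub, map_add, map_smul, LinearMap.sub_apply, LinearMap.add_apply,
      LinearMap.smul_apply, e1, e2, e3, e4]
    simp
  have hS : IsPGroup 2 Ψ₂.range := hP2.of_surjective Ψ₂.rangeRestrict Ψ₂.rangeRestrict_surjective
  intro g hg l
  let g' : H := (⟨g, hg⟩ : H)⁻¹
  have hg' : ∀ v, rhoK φ H g' (upv φ v) = upv φ (vecMul v g.val) := by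
    intro v
    rw [rhoK_up, inv_inv]
  have q2 := (hQD l).conj haltK hlam g'
  have dich := fun k => structure_thm h2' h3' hι hω _ hsol hc' haltK (kb2.nd haltK) hlam hS hQD
    (fun k => inv_mem ⟨_, rfl⟩) (fun k => inv_mem ⟨_, rfl⟩) ho hfull hTD htfull (hQD k) q2 rfl
  obtain ⟨k, hk⟩ : ∃ k, Submodule.span (AlgebraicClosure F) {u k, w k} =
      Submodule.span (AlgebraicClosure F) {rhoK φ H g' (u l), rhoK φ H g' (w l)} := by
    by_contra hcon
    push Not at hcon
    have : rhoK φ H g' (u l) = 0 := by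
      apply back
      intro k
      have := (dich k).resolve_left (hcon k)
      exact ⟨this.1, this.2.2.1⟩
    exact (ne_of_B q2.buw).1 this
  have key : ∀ j, j ≠ k → ∀ s : Fin n → F, B s (a₂ k) = 0 → B s (b₂ k) = 0 →
      B s (vecMul (a₂ l) g.val) = 0 ∧ B s (vecMul (b₂ l) g.val) = 0 := by
    intro j hj s s1 s2
    have f1 : BKf φ B (upv φ s) (u k) = 0 := by
      simp [u, BKf_up, s1, s2]
    have f2 : BKf φ B (upv φ s) (w k) = 0 := by
      simp [w, BKf_up, s1, s2]
    have := perp_span hk.symm f1 f2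
    have := qd_back h2' hι hαβK (f := (BKf φ B (upv φ s)).comp (rhoK φ H g')) this.1 this.2
    simp only [LinearMap.comp_apply, hg', BKf_up, map_eq_zero] at this
    exact this
  have fin : ∀ v, (∀ j, j ≠ k → B (a₂ j) v = 0 ∧ B (b₂ j) v = 0) →
      ∃ c d : F, v = c • a₂ k + d • b₂ k := by
    intro v hv
    refine ⟨_, _, (sb2.expand halt v).trans (Finset.sum_eq_single k ?_ ?_)⟩
    · intro j _ hj
      simp [hv j hj]
    · simp
  refine ⟨k, fin _ fun j hj => ⟨?_, ?_⟩, fin _ fun j hj => ⟨?_, ?_⟩⟩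
  · exact (key j hj _ (sb2.aa _ _) (by rw [sb2.ab, if_neg hj])).1
  · exact (key j hj _ (by rw [sb2.ba halt, if_neg hj]) (sb2.bb _ _)).1
  · exact (key j hj _ (sb2.aa _ _) (by rw [sb2.ab, if_neg hj])).2
  · exact (key j hj _ (by rw [sb2.ba halt, if_neg hj]) (sb2.bb _ _)).2

end blocks

section partTwo

variable {F V κ : Type*} [Field F] [AddCommGroup V] [Module F V] {B : V →ₗ[F] V →ₗ[F] F}

/-- `T` maps every block `⟨a l, b l⟩` into some block. -/
def Blk (T : V →ₗ[F] V) (a b : κ → V) : Prop :=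
  ∀ l, ∃ k, (∃ c d : F, T (a l) = c • a k + d • b k) ∧ (∃ c d : F, T (b l) = c • a k + d • b k)

theorem Blk.swap {T : V →ₗ[F] V} {a b : κ → V} (h : Blk T a b) : Blk T b a := by
  intro l
  obtain ⟨k, ⟨c, d, e⟩, ⟨c', d', e'⟩⟩ := h l
  exact ⟨k, ⟨d', c', by rw [e', add_comm]⟩, ⟨d, c, by rw [e, add_comm]⟩⟩

theorem SB.swap [DecidableEq κ] (halt : ∀ v, B v v = 0) {δ : F} {a b : κ → V} (h : SB B δ a b) :
    SB B (-δ) b a :=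
  ⟨neg_ne_zero.mpr h.ne, h.bb, h.aa, h.ba halt, fun v hv => h.full v fun k => (hv k).symm⟩

theorem SB.extW [Fintype κ] [DecidableEq κ] (halt : ∀ v, B v v = 0) {δ : F} {a b : κ → V}
    (h : SB B δ a b) {W : Type*} [AddCommGroup W] [Module F W] {f g : V →ₗ[F] W}
    (ha : ∀ k, f (a k) = g (a k)) (hb : ∀ k, f (b k) = g (b k)) : f = g := by
  apply LinearMap.ext
  intro v
  rw [h.expand halt v]
  simp only [map_sum, map_add, map_smul, ha, hb]

/-- The map taking one symplectic basis to another system. -/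
noncomputable def chg [Fintype κ] (B : V →ₗ[F] V →ₗ[F] F) (δ : F) (a b a' b' : κ → V) :
    V →ₗ[F] V :=
  ∑ k, ((-δ⁻¹) • (B (b k)).smulRight (a' k) + δ⁻¹ • (B (a k)).smulRight (b' k))

theorem chg_apply [Fintype κ] [DecidableEq κ] (halt : ∀ v, B v v = 0) {δ : F} {a b : κ → V}
    (h : SB B δ a b) (a' b' : κ → V) (k : κ) :
    chg B δ a b a' b' (a k) = a' k ∧ chg B δ a b a' b' (b k) = b' k := by
  have hd := h.ne
  simp only [chg, LinearMap.sum_apply, LinearMap.add_apply, LinearMap.smul_apply,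
    LinearMap.smulRight_apply, h.aa, h.bb, h.ab, h.ba halt]
  constructor
  · rw [Finset.sum_eq_single k]
    · simp [smul_smul, hd]
    · intro j _ hj
      simp [hj]
    · simp
  · rw [Finset.sum_eq_single k]
    · simp [smul_smul, hd]
    · intro j _ hj
      simp [hj]
    · simp

theorem exists_iso {n : ℕ} {B : (Fin n → F) →ₗ[F] (Fin n → F) →ₗ[F] F} [Fintype κ] [DecidableEq κ]
    (halt : ∀ v, B v v = 0) {δ : F} {a b a' b' : κ → Fin n → F}
    (h : SB B δ a b) (h' : SB B δ a' b') :
    ∃ x ∈ isometryGroup (fun u v => B u v), ∀ k, vecMul (a k) x.val = a' k ∧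
      vecMul (b k) x.val = b' k := by
  let f := chg B δ a b a' b'
  let g := chg B δ a' b' a b
  have hf := chg_apply halt h a' b'
  have hg := chg_apply halt h' a b
  have fg : f ∘ₗ g = LinearMap.id := by
    apply h'.extW halt <;> intro k <;> simp [f, g, hf, hg]
  have gf : g ∘ₗ f = LinearMap.id := by
    apply h.extW halt <;> intro k <;> simp [f, g, hf, hg]
  have m1 : (LinearMap.toMatrix' f)ᵀ * (LinearMap.toMatrix' g)ᵀ = 1 := by
    rw [← Matrix.transpose_mul, ← LinearMap.toMatrix'_comp, gf, LinearMap.toMatrix'_id,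
      Matrix.transpose_one]
  have m2 : (LinearMap.toMatrix' g)ᵀ * (LinearMap.toMatrix' f)ᵀ = 1 := by
    rw [← Matrix.transpose_mul, ← LinearMap.toMatrix'_comp, fg, LinearMap.toMatrix'_id,
      Matrix.transpose_one]
  have key : ∀ v, vecMul v (LinearMap.toMatrix' f)ᵀ = f v := by
    intro v
    rw [Matrix.vecMul_transpose, LinearMap.toMatrix'_mulVec]
  have iso : B.compl₁₂ f f = B := by
    apply h.extW halt <;> intro k <;> apply h.extW halt <;> intro l <;>
      simp [f, hf, h.aa, h'.aa, h.bb, h'.bb, h.ab, h'.ab, h.ba halt, h'.ba halt]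
  refine ⟨⟨_, _, m1, m2⟩, ?_, ?_⟩
  · intro u v
    change B (vecMul u (LinearMap.toMatrix' f)ᵀ) (vecMul v (LinearMap.toMatrix' f)ᵀ) = B u v
    rw [key, key]
    exact LinearMap.congr_fun (LinearMap.congr_fun iso u) v
  · intro k
    change vecMul (a k) (LinearMap.toMatrix' f)ᵀ = _ ∧ vecMul (b k) (LinearMap.toMatrix' f)ᵀ = _
    rw [key, key]
    exact hf k

theorem SB.shear [Fintype κ] [DecidableEq κ] (halt : ∀ v, B v v = 0) {δ : F} {a b : κ → V}
    (h : SB B δ a b) (s : κ → κ → F) (hs : ∀ k l, s k l = s l k) :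
    SB B δ a (fun k => b k + ∑ l, s k l • a l) := by
  refine ⟨h.ne, h.aa, ?_, ?_, ?_⟩
  · intro k l
    simp only [map_add, map_sum, map_smul, LinearMap.add_apply, LinearMap.sum_apply,
      LinearMap.smul_apply, h.aa, h.bb, h.ab, h.ba halt, smul_eq_mul]
    simp [hs k l]
  · intro k l
    simp only [map_add, map_sum, map_smul, h.aa, h.ab, smul_eq_mul]
    simp
  · intro v hv
    apply h.full
    intro k
    refine ⟨(hv k).1, ?_⟩
    have := (hv k).2
    simpa [map_add, map_sum, map_smul, LinearMap.add_apply, LinearMap.sum_apply,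
      LinearMap.smul_apply, fun l => (hv l).1] using this

/-- Monomial-like structure of block maps. -/
theorem Blk.mono [DecidableEq κ] (halt : ∀ v, B v v = 0) {δ : F} {a b : κ → V}
    (h : SB B δ a b) {T : V →ₗ[F] V} {c : F} (hc : c ≠ 0)
    (hT : ∀ u v, B (T u) (T v) = c * B u v) (hb : Blk T a b) :
    ∃ (σ : κ → κ) (α α' γ β : κ → F), Function.Injective σ ∧
      (∀ k, T (a k) = α k • a (σ k) + α' k • b (σ k)) ∧
      (∀ k, T (b k) = γ k • a (σ k) + β k • b (σ k)) ∧
      (∀ k, α k * β k - α' k * γ k = c) := by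
  choose σ h1 h2 using hb
  choose α α' ha using h1
  choose γ β hb using h2
  have hd := h.ne
  have det : ∀ k, α k * β k - α' k * γ k = c := by
    intro k
    have := hT (a k) (b k)
    simp only [ha, hb, map_add, map_smul, LinearMap.add_apply, LinearMap.smul_apply, h.aa, h.bb,
      h.ab, h.ba halt, smul_eq_mul, if_true] at this
    apply mul_right_cancel₀ hd
    linear_combination this
  refine ⟨σ, α, α', γ, β, ?_, ha, hb, det⟩
  intro l l' hl
  by_contra hne
  have e1 := hT (a l) (a l')
  have e2 := hT (b l) (a l')
  simp only [ha, hb, map_add, map_smul, LinearMap.add_apply, LinearMap.smul_apply, h.aa, h.bb,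
      h.ab, h.ba halt, smul_eq_mul, if_true, hl, if_neg hne] at e1 e2
  have f1 : c * α l' = 0 := by
    apply mul_right_cancel₀ hd
    rw [← det l]
    linear_combination (γ l) * e1 - (α l) * e2
  have f2 : c * α' l' = 0 := by
    apply mul_right_cancel₀ hd
    rw [← det l]
    linear_combination (β l) * e1 - (α' l) * e2
  have f1 := (mul_eq_zero.mp f1).resolve_left hc
  have f2 := (mul_eq_zero.mp f2).resolve_left hc
  apply hc
  rw [← det l', f1, f2]
  ring

theorem Blk.shear_rel [Fintype κ] [DecidableEq κ] (halt : ∀ v, B v v = 0) {δ : F} {a b : κ → V}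
    (h : SB B δ a b) {T : V →ₗ[F] V} {c : F} (hc : c ≠ 0)
    {σ : κ → κ} {α α' γ β : κ → F} (hσ : Function.Injective σ)
    (ha : ∀ k, T (a k) = α k • a (σ k) + α' k • b (σ k))
    (hb : ∀ k, T (b k) = γ k • a (σ k) + β k • b (σ k))
    (hdet : ∀ k, α k * β k - α' k * γ k = c)
    (s : κ → κ → F) (hnb : ∀ k, ∃ l, l ≠ k ∧ s k l ≠ 0)
    (hs : Blk T a (fun k => b k + ∑ l, s k l • a l)) :
    (∀ k, α' k = 0) ∧ ∀ k l, l ≠ k → s k l * α l = β k * s (σ k) (σ l) := by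
  have hd := h.ne
  choose j h1 h2 using hs
  choose x y e1 using h1
  choose x' y' e2 using h2
  -- pairing with `a r`, `b r`
  have pa : ∀ k r, (if r = σ k then α' k else 0) = if r = j k then y k else 0 := by
    intro k r
    have := congrArg (B (a r)) (e1 k)
    simp only [ha, map_add, map_smul, map_sum, h.aa, h.ab, smul_eq_mul, mul_zero,
      Finset.sum_const_zero, add_zero, zero_add, mul_ite] at this
    split_ifs at this ⊢ <;> first | rfl | (apply mul_right_cancel₀ hd; linear_combination this)
  have pb : ∀ k r, (if r = σ k then α k else 0) = (if r = j k then x k else 0) + y k * s (j k) r := by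
    intro k r
    have := congrArg (B (b r)) (e1 k)
    simp only [ha, map_add, map_smul, map_sum, h.bb, h.ba halt, smul_eq_mul, mul_zero,
      Finset.sum_const_zero, add_zero, zero_add, mul_ite, Finset.sum_ite_eq, Finset.mem_univ,
      if_true] at this
    split_ifs at this ⊢ <;> (apply mul_right_cancel₀ hd; linear_combination -this)
  have hy : ∀ k, y k = 0 := by
    intro k
    by_contra hy
    have q := pa k (j k)
    rw [if_pos rfl] at q
    have hj : j k = σ k := by
      by_contra hne
      rw [if_neg hne] at q
      exact hy q.symm
    obtain ⟨l, hl, hsl⟩ := hnb (j k)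
    have := pb k l
    rw [if_neg (hj ▸ hl), if_neg hl, zero_add] at this
    exact mul_ne_zero hy hsl this.symm
  have hα' : ∀ k, α' k = 0 := by
    intro k
    have := pa k (σ k)
    rw [if_pos rfl, hy k, ite_self] at this
    exact this
  have hα : ∀ k, α k ≠ 0 := by
    intro k h0
    apply hc
    rw [← hdet k, hα' k, h0]
    ring
  have hj : ∀ k, j k = σ k := by
    intro k
    by_contra hne
    have := pb k (σ k)
    rw [if_pos rfl, hy k, if_neg (Ne.symm hne)] at this
    apply hα k
    rw [this]
    ring
  refine ⟨hα', ?_⟩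
  have hy' : ∀ k, y' k = β k := by
    intro k
    have := congrArg (B (a (σ k))) (e2 k)
    simp only [ha, hb, hj, hα', zero_smul, map_add, map_smul, map_sum, h.aa, h.ab, smul_eq_mul,
      mul_zero, Finset.sum_const_zero, add_zero, zero_add, mul_ite, if_true] at this
    exact (mul_right_cancel₀ hd this).symm
  intro k l hl
  have := congrArg (B (b (σ l))) (e2 k)
  have hne : σ l ≠ σ k := fun e => hl (hσ e)
  simp only [ha, hb, hj, hα', hy', zero_smul, map_add, map_smul, map_sum, h.bb, h.ba halt,
    smul_eq_mul, mul_zero, Finset.sum_const_zero, add_zero, zero_add, mul_ite, if_neg hne,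
    Finset.sum_ite_eq, Finset.mem_univ, if_true, hσ.eq_iff, if_neg hl] at this
  apply mul_right_cancel₀ hd
  linear_combination -this

end partTwo

section partThree

variable {F V : Type*} [Field F] [AddCommGroup V] [Module F V] {B : V →ₗ[F] V →ₗ[F] F}

theorem scalar_big {m : ℕ} (hm : 3 ≤ m) (halt : ∀ v, B v v = 0) {δ : F} {a b : Fin m → V}
    (h : SB B δ a b) : ∃ s t : Fin m → Fin m → F, (∀ k l, s k l = s l k) ∧ (∀ k l, t k l = t l k) ∧
    ∀ (T : V →ₗ[F] V) (c : F), c ≠ 0 → (∀ u v, B (T u) (T v) = c * B u v) → Blk T a b →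
      Blk T a (fun k => b k + ∑ l, s k l • a l) → Blk T (fun k => a k + ∑ l, t k l • b l) b →
      ∃ z : F, (∀ k, T (a k) = z • a k) ∧ ∀ k, T (b k) = z • b k := by
  let s : Fin m → Fin m → F := fun k l => if k.val + 1 = l.val ∨ l.val + 1 = k.val then 1 else 0
  let t : Fin m → Fin m → F := fun k l =>
    if (k.val = 0 ∧ l.val ≠ 0) ∨ (l.val = 0 ∧ k.val ≠ 0) then 1 else 0
  have hs0 : ∀ k l, s k l ≠ 0 → k.val + 1 = l.val ∨ l.val + 1 = k.val := by
    intro k l h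
    by_contra hn
    exact h (if_neg hn)
  have ht0 : ∀ k l, t k l ≠ 0 → (k.val = 0 ∧ l.val ≠ 0) ∨ (l.val = 0 ∧ k.val ≠ 0) := by
    intro k l h
    by_contra hn
    exact h (if_neg hn)
  refine ⟨s, t, ?_, ?_, ?_⟩
  · intro k l
    simp only [s, or_comm]
  · intro k l
    simp only [t, or_comm]
  intro T c hc hT h1 h2 h3
  obtain ⟨σ, α, α', γ, β, hσ, ha, hb, hdet⟩ := h1.mono halt h hc hT
  obtain ⟨hα', hs⟩ := Blk.shear_rel halt h hc hσ ha hb hdet s (by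
    intro k
    by_cases hk : k.val = 0
    · refine ⟨⟨1, by omega⟩, ?_, ?_⟩
      · intro e; rw [← e] at hk; simp at hk
      · simp [s, hk]
    · refine ⟨⟨k.val - 1, by omega⟩, ?_, ?_⟩
      · intro e; have := congrArg Fin.val e; simp at this; omega
      · have : s k ⟨k.val - 1, by omega⟩ = 1 := if_pos (Or.inr (by simp; omega))
        rw [this]
        exact one_ne_zero) h2
  obtain ⟨hγ, ht⟩ := Blk.shear_rel halt (h.swap halt) (α := β) (α' := γ) (γ := α') (β := α) hc hσ
    (fun k => by rw [hb, add_comm]) (fun k => by rw [ha, add_comm])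
    (fun k => by rw [← hdet k]; ring) t (by
    intro k
    by_cases hk : k.val = 0
    · refine ⟨⟨1, by omega⟩, ?_, ?_⟩
      · intro e; rw [← e] at hk; simp at hk
      · simp [t, hk]
    · refine ⟨⟨0, by omega⟩, ?_, ?_⟩
      · intro e; have := congrArg Fin.val e; simp at this; omega
      · simp [t, hk]) h3.swap
  have hα : ∀ k, α k ≠ 0 := by
    intro k h0
    apply hc
    rw [← hdet k, hα' k, h0]
    ring
  have hβ : ∀ k, β k ≠ 0 := by
    intro k h0
    apply hc
    rw [← hdet k, hα' k, h0]
    ring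
  have edge : ∀ k l, l ≠ k → (k.val + 1 = l.val ∨ l.val + 1 = k.val) →
      ((σ k).val + 1 = (σ l).val ∨ (σ l).val + 1 = (σ k).val) := by
    intro k l hl e
    have q := hs k l hl
    have e' : s k l = 1 := if_pos e
    rw [e', one_mul] at q
    apply hs0
    intro h0
    rw [h0, mul_zero] at q
    exact hα _ q
  have star : ∀ k l, l ≠ k → ((k.val = 0 ∧ l.val ≠ 0) ∨ (l.val = 0 ∧ k.val ≠ 0)) →
      (((σ k).val = 0 ∧ (σ l).val ≠ 0) ∨ ((σ l).val = 0 ∧ (σ k).val ≠ 0)) := by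
    intro k l hl e
    have q := ht k l hl
    have e' : t k l = 1 := if_pos e
    rw [e', one_mul] at q
    apply ht0
    intro h0
    rw [h0, mul_zero] at q
    exact hβ _ q
  have inj : ∀ k l, (σ k).val = (σ l).val → k.val = l.val := by
    intro k l e
    rw [hσ (Fin.ext e)]
  have neq : ∀ k l : Fin m, k.val ≠ l.val → k ≠ l := fun k l h e => h (by rw [e])
  let v0 : Fin m := ⟨0, by omega⟩
  let v1 : Fin m := ⟨1, by omega⟩
  let v2 : Fin m := ⟨2, by omega⟩
  have n10 : v1 ≠ v0 := neq _ _ (by simp [v0, v1])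
  have n20 : v2 ≠ v0 := neq _ _ (by simp [v0, v2])
  have n21 : v2 ≠ v1 := neq _ _ (by simp [v1, v2])
  have s0 : (σ v0).val = 0 := by
    have e1 := star v0 v1 n10 (Or.inl ⟨rfl, by simp [v1]⟩)
    have e2 := star v0 v2 n20 (Or.inl ⟨rfl, by simp [v2]⟩)
    have e3 := inj v1 v2
    simp only [v1, v2] at e3 e1 e2
    omega
  have sid : ∀ r : ℕ, ∀ k : Fin m, k.val = r → (σ k).val = r := by
    intro r
    induction r using Nat.strong_induction_on with
    | _ r ih =>
      intro k hk
      rcases Nat.eq_zero_or_pos r with h0 | h0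
      · have : k = v0 := Fin.ext (by rw [hk, h0])
        rw [this, s0, h0]
      · have p1 := ih (r - 1) (by omega) ⟨r - 1, by omega⟩ rfl
        have e := edge ⟨r - 1, by omega⟩ k (neq _ _ (by simp; omega)) (Or.inl (by simp; omega))
        by_cases h1 : r = 1
        · omega
        · have p2 := ih (r - 2) (by omega) ⟨r - 2, by omega⟩ rfl
          have e3 := inj k ⟨r - 2, by omega⟩
          simp only at e3
          omega
  have sid : ∀ k, σ k = k := fun k => Fin.ext (sid k.val k rfl)
  have pathr : ∀ k l, l ≠ k → (k.val + 1 = l.val ∨ l.val + 1 = k.val) → α l = β k := by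
    intro k l hl e
    have q := hs k l hl
    have e' : s k l = 1 := if_pos e
    rwa [sid, sid, e', one_mul, mul_one] at q
  have starr : ∀ k l, l ≠ k → ((k.val = 0 ∧ l.val ≠ 0) ∨ (l.val = 0 ∧ k.val ≠ 0)) →
      β l = α k := by
    intro k l hl e
    have q := ht k l hl
    have e' : t k l = 1 := if_pos e
    rwa [sid, sid, e', one_mul, mul_one] at q
  have r1 : α v0 = β v1 := pathr v1 v0 n10.symm (Or.inr rfl)
  have r2 : α v2 = β v1 := pathr v1 v2 n21 (Or.inl rfl)
  have r3 : β v0 = α v2 := starr v2 v0 n20.symm (Or.inr ⟨rfl, by simp [v2]⟩)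
  have r4 : β v0 = α v0 := by rw [r3, r2, r1]
  refine ⟨α v0, ?_, ?_⟩
  · intro k
    rw [ha, hα', zero_smul, add_zero, sid]
    by_cases hk : k = v0
    · rw [hk]
    · have hk' : k.val ≠ 0 := fun e => hk (Fin.ext e)
      rw [← r4, starr k v0 (Ne.symm hk) (Or.inr ⟨rfl, hk'⟩)]
  · intro k
    rw [hb, hγ, zero_smul, zero_add, sid]
    by_cases hk : k = v0
    · rw [hk, r4]
    · have hk' : k.val ≠ 0 := fun e => hk (Fin.ext e)
      rw [starr v0 k hk (Or.inl ⟨rfl, hk'⟩)]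

theorem SB.z2 (halt : ∀ v, B v v = 0) {δ : F} {a b : Fin 2 → V} (h : SB B δ a b) :
    SB B δ ![a 0, a 1 - a 0] ![b 0 + b 1, b 1] := by
  refine ⟨h.ne, ?_, ?_, ?_, ?_⟩
  · intro k l
    fin_cases k <;> fin_cases l <;> simp [h.aa]
  · intro k l
    fin_cases k <;> fin_cases l <;> simp [h.bb]
  · intro k l
    fin_cases k <;> fin_cases l <;> simp [h.ab]
  · intro v hv
    have h0 := hv 0
    have h1 := hv 1
    simp at h0 h1
    apply h.full
    intro k
    fin_cases k
    · refine ⟨h0.1, ?_⟩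
      have := h0.2
      rw [h1.2, add_zero] at this
      exact this
    · refine ⟨?_, h1.2⟩
      have := h1.1
      rw [h0.1, sub_zero] at this
      exact this

theorem scalar_two (halt : ∀ v, B v v = 0) {δ : F} {a b : Fin 2 → V}
    (h : SB B δ a b) : ∃ s t : Fin 2 → Fin 2 → F, (∀ k l, s k l = s l k) ∧ (∀ k l, t k l = t l k) ∧
    ∀ (T : V →ₗ[F] V) (c : F), c ≠ 0 → (∀ u v, B (T u) (T v) = c * B u v) → Blk T a b →
      Blk T a (fun k => b k + ∑ l, s k l • a l) → Blk T (fun k => a k + ∑ l, t k l • b l) b →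
      Blk T ![a 0, a 1 - a 0] ![b 0 + b 1, b 1] →
      ∃ z : F, (∀ k, T (a k) = z • a k) ∧ ∀ k, T (b k) = z • b k := by
  let s : Fin 2 → Fin 2 → F := fun k l => if k = l then 0 else 1
  have hsy : ∀ k l, s k l = s l k := fun k l => by simp only [s, eq_comm]
  have hs1 : ∀ k l, k ≠ l → s k l = 1 := fun k l h => if_neg h
  have hnb : ∀ k, ∃ l, l ≠ k ∧ s k l ≠ 0 := by
    intro k
    refine ⟨k + 1, ?_, ?_⟩
    · fin_cases k <;> simp
    · rw [hs1 k (k + 1) (by fin_cases k <;> simp)]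
      exact one_ne_zero
  refine ⟨s, s, hsy, hsy, ?_⟩
  intro T c hc hT h1 h2 h3 h4
  have hd := h.ne
  obtain ⟨σ, α, α', γ, β, hσ, ha, hb, hdet⟩ := h1.mono halt h hc hT
  obtain ⟨hα', hs⟩ := Blk.shear_rel halt h hc hσ ha hb hdet s hnb h2
  obtain ⟨hγ, ht⟩ := Blk.shear_rel halt (h.swap halt) (α := β) (α' := γ) (γ := α') (β := α) hc hσ
    (fun k => by rw [hb, add_comm]) (fun k => by rw [ha, add_comm])
    (fun k => by rw [← hdet k]; ring) s hnb h3.swap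
  have hα : ∀ k, α k ≠ 0 := by
    intro k h0
    apply hc
    rw [← hdet k, hα' k, h0]
    ring
  have r1 : ∀ k l, l ≠ k → α l = β k := by
    intro k l hl
    have q := hs k l hl
    rwa [hs1 k l hl.symm, hs1 _ _ (fun e => hl (hσ e).symm), one_mul, mul_one] at q
  obtain ⟨k, ⟨x, y, e1⟩, ⟨x', y', e2⟩⟩ := h4 0
  have two : ∀ k : Fin 2, k = 0 ∨ k = 1 := by decide
  have n01 : σ 0 ≠ σ 1 := fun e => by simpa using hσ e
  have hs0 : σ 0 = 0 ∧ σ 1 = 1 ∧ k = 0 := by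
    have p0 := congrArg (B (b 0)) e1
    have p1 := congrArg (B (b 1)) e1
    have q0 := hα 0
    by_cases h0 : σ 0 = 0
    · have h11 : σ 1 = 1 := by
        rw [h0] at n01
        omega
      refine ⟨h0, h11, ?_⟩
      by_contra hk
      have hk : k = 1 := (two k).resolve_left hk
      subst hk
      simp [ha, hα', h0, h.bb, h.ba halt, hd] at p0 p1
      simp [p1, hd] at p0
      exact q0 p0
    · have h01 : σ 0 = 1 := by omega
      exfalso
      have hk := two k
      rcases hk with rfl | rfl
      · simp [ha, hα', h01, h.bb, h.ba halt, hd] at p0 p1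
        exact q0 p1
      · simp [ha, hα', h01, h.bb, h.ba halt, hd] at p0 p1
        rw [p0] at p1
        exact q0 p1
  obtain ⟨h0, h11, rfl⟩ := hs0
  have e3 : β 0 = β 1 := by
    have p0 := congrArg (B (a 0)) e2
    have p1 := congrArg (B (a 1)) e2
    simp [hb, hγ, h0, h11, h.aa, h.ab, hd] at p0 p1
    rw [p0, p1]
  have r01 := r1 0 1 (by simp)
  have r10 := r1 1 0 (by simp)
  refine ⟨β 0, ?_, ?_⟩
  · intro k
    rw [ha, hα', zero_smul, add_zero]
    fin_cases k
    · simp [h0, r10, e3]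
    · simp [h11, r01]
  · intro k
    rw [hb, hγ, zero_smul, zero_add]
    fin_cases k
    · simp [h0]
    · simp [h11, e3]

theorem Blk.of_conj {n : ℕ} {κ : Type*} {a b a' b' : κ → Fin n → F} {H : Subgroup (GL (Fin n) F)}
    (hH : ∀ g ∈ H, Blk (Matrix.vecMulLinear g.val) a b) {x : GL (Fin n) F}
    (hx : ∀ k, vecMul (a k) x.val = a' k ∧ vecMul (b k) x.val = b' k) {g : GL (Fin n) F}
    (hg : g ∈ conjBy H x) : Blk (Matrix.vecMulLinear g.val) a' b' := by
  obtain ⟨h0, hh0, rfl⟩ := hg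
  have e : ∀ v, vecMul (vecMul v x.val) ((MulAut.conj x⁻¹).toMonoidHom h0).val =
      vecMul (vecMul v h0.val) x.val := by
    intro v
    have : (MulAut.conj x⁻¹).toMonoidHom h0 = x⁻¹ * h0 * x := by simp
    rw [this]
    simp only [Units.val_mul]
    rw [← vecMul_vecMul, ← vecMul_vecMul, vecMul_vecMul v, x.mul_inv, vecMul_one]
  intro l
  obtain ⟨k, ⟨c, d, e1⟩, ⟨c', d', e2⟩⟩ := hH h0 hh0 l
  simp only [Matrix.vecMulLinear_apply] at e1 e2 ⊢
  refine ⟨k, ⟨c, d, ?_⟩, ⟨c', d', ?_⟩⟩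
  · rw [← (hx l).1, e, e1, add_vecMul, smul_vecMul, smul_vecMul, (hx k).1, (hx k).2]
  · rw [← (hx l).2, e, e2, add_vecMul, smul_vecMul, smul_vecMul, (hx k).1, (hx k).2]

theorem scalar_mat {n : ℕ} {κ : Type*} [Fintype κ] [DecidableEq κ] 
    {B : (Fin n → F) →ₗ[F] (Fin n → F) →ₗ[F] F} (halt : ∀ v, B v v = 0) {δ : F}
    {a b : κ → Fin n → F} (h : SB B δ a b) {M : Matrix (Fin n) (Fin n) F} {z : F}
    (ha : ∀ k, Matrix.vecMulLinear M (a k) = z • a k)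
    (hb : ∀ k, Matrix.vecMulLinear M (b k) = z • b k) : M = z • (1 : Matrix (Fin n) (Fin n) F) := by
  have e : Matrix.vecMulLinear M = z • (LinearMap.id : (Fin n → F) →ₗ[F] (Fin n → F)) :=
    h.extW halt (fun k => by rw [ha]; rfl) (fun k => by rw [hb]; rfl)
  apply Matrix.ext_of_single_vecMul
  intro i
  have := LinearMap.congr_fun e (Pi.single i 1)
  rw [Matrix.vecMulLinear_apply] at this
  rw [this]
  simp [Matrix.vecMul_smul]

theorem final {F : Type} [Field F] [Finite F] {m : ℕ} (hm : 2 ≤ m)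
    {B : (Fin (2 * m) → F) →ₗ[F] (Fin (2 * m) → F) →ₗ[F] F}
    (halt : ∀ v, B v v = 0) (hnd : ∀ v, (∀ x, B v x = 0) → v = 0)
    (h2 : (2 : F) ≠ 0) (h3 : (3 : F) ≠ 0)
    {H : Subgroup (GL (Fin (2 * m)) F)}
    (hle : H ≤ similitudeGroup (fun u v => B u v))
    (hi2 : ¬ 2 ∣ H.relIndex (similitudeGroup (fun u v => B u v)))
    (hi3 : ¬ 3 ∣ H.relIndex (similitudeGroup (fun u v => B u v)))
    (hsol : Group.IsSolvable H) (hcard : (Nat.card H : F) ≠ 0) :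
    ∃ x ∈ isometryGroup (fun u v => B u v), ∃ y ∈ isometryGroup (fun u v => B u v),
      ∃ z ∈ isometryGroup (fun u v => B u v), ∀ g ∈ H ⊓ conjBy H x ⊓ conjBy H y ⊓ conjBy H z,
      ∃ c : F, (g : Matrix (Fin (2 * m)) (Fin (2 * m)) F) =
        c • (1 : Matrix (Fin (2 * m)) (Fin (2 * m)) F) := by
  obtain ⟨m', a0, b0, sb0⟩ := exists_SB _ halt hnd rfl
  have hm' : m' = m := by
    have := sb0.two_mul halt
    simp at this
    omega
  subst hm'
  obtain ⟨δ, a, b, sb, hblk⟩ := block_thm halt h2 h3 sb0 hle hi2 hi3 hsol hcard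
  have hblk : ∀ g ∈ H, Blk (Matrix.vecMulLinear g.val) a b := hblk
  have mk : ∀ s t : Fin m' → Fin m' → F, (∀ k l, s k l = s l k) → (∀ k l, t k l = t l k) →
      ∃ x ∈ isometryGroup (fun u v => B u v), ∃ y ∈ isometryGroup (fun u v => B u v),
      (∀ g ∈ conjBy H x, Blk (Matrix.vecMulLinear g.val) a (fun k => b k + ∑ l, s k l • a l)) ∧
      (∀ g ∈ conjBy H y, Blk (Matrix.vecMulLinear g.val) (fun k => a k + ∑ l, t k l • b l) b) := by
    intro s t hs ht
    obtain ⟨x, hx, hx'⟩ := exists_iso halt sb (sb.shear halt s hs)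
    have sbt := ((sb.swap halt).shear halt t ht).swap halt
    rw [neg_neg] at sbt
    obtain ⟨y, hy, hy'⟩ := exists_iso halt sb sbt
    exact ⟨x, hx, y, hy, fun g hg => Blk.of_conj hblk hx' hg, fun g hg => Blk.of_conj hblk hy' hg⟩
  have sim : ∀ g ∈ H, ∃ c : F, c ≠ 0 ∧ ∀ u v, B (Matrix.vecMulLinear g.val u)
      (Matrix.vecMulLinear g.val v) = c * B u v := by
    intro g hg
    obtain ⟨c, hc⟩ := hle hg
    exact ⟨c, c.ne_zero, hc⟩
  rcases Nat.eq_or_lt_of_le hm with h | h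
  · subst h
    obtain ⟨s, t, hs, ht, key⟩ := scalar_two halt sb
    obtain ⟨x, hx, y, hy, hx', hy'⟩ := mk s t hs ht
    obtain ⟨z, hz, hz'⟩ := exists_iso halt sb (sb.z2 halt)
    refine ⟨x, hx, y, hy, z, hz, ?_⟩
    rintro g ⟨⟨⟨g0, g1⟩, g2⟩, g3⟩
    obtain ⟨c, hc, hcB⟩ := sim g g0
    obtain ⟨r, ra, rb⟩ := key _ c hc hcB (hblk g g0) (hx' g g1) (hy' g g2)
      (Blk.of_conj hblk hz' g3)
    exact ⟨r, scalar_mat halt sb ra rb⟩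
  · obtain ⟨s, t, hs, ht, key⟩ := scalar_big h halt sb
    obtain ⟨x, hx, y, hy, hx', hy'⟩ := mk s t hs ht
    refine ⟨x, hx, y, hy, 1, one_mem _, ?_⟩
    rintro g ⟨⟨⟨g0, g1⟩, g2⟩, g3⟩
    obtain ⟨c, hc, hcB⟩ := sim g g0
    obtain ⟨r, ra, rb⟩ := key _ c hc hcB (hblk g g0) (hx' g g1) (hy' g g2)
    exact ⟨r, scalar_mat halt sb ra rb⟩

end partThree

theorem stmt11 (p f q m : ℕ) (hp : p.Prime) (hf : 1 ≤ f) (hq : q = p ^ f)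
    (F : Type) [Field F] [Fintype F] (hcard : Fintype.card F = q)
    (hm : 4 ≤ 2 * m)
    (B : LinearMap.BilinForm F (Fin (2 * m) → F))
    (halt : ∀ v : Fin (2 * m) → F, B v v = 0) (hnd : B.SeparatingLeft)
    (hnonsolv : ¬ IsSolvable ↥(similitudeGroup (fun u v => B u v)))
    (π : Set ℕ) (hπ : ∀ r ∈ π, r.Prime) (h2pi : 2 ∈ π) (h3pi : 3 ∈ π) (hppi : p ∉ π)
    (H : Subgroup (GL (Fin (2 * m)) F))
    (hH : IsHallSubgroupIn π (similitudeGroup (fun u v => B u v)) H)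
    (hsolv : IsSolvable ↥H)
    :
    ∃ x y z : GL (Fin (2 * m)) F,
      x ∈ (H : Set (GL (Fin (2 * m)) F)) * (isometryGroup (fun u v => B u v) : Set (GL (Fin (2 * m)) F)) ∧
      y ∈ (H : Set (GL (Fin (2 * m)) F)) * (isometryGroup (fun u v => B u v) : Set (GL (Fin (2 * m)) F)) ∧
      z ∈ (H : Set (GL (Fin (2 * m)) F)) * (isometryGroup (fun u v => B u v) : Set (GL (Fin (2 * m)) F)) ∧
    ∀ g ∈ H ⊓ conjBy H x ⊓ conjBy H y ⊓ conjBy H z,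
      ∃ c : F, (g : Matrix (Fin (2 * m)) (Fin (2 * m)) F) = c • (1 : Matrix (Fin (2 * m)) (Fin (2 * m)) F) := by
  obtain ⟨hle, hHp, hidx⟩ := hH
  obtain ⟨p', hcp⟩ := CharP.exists F
  obtain ⟨k, hp', hk⟩ := FiniteField.card F p'
  have hpp : p' = p := by
    rw [hcard, hq] at hk
    have h1 : p' ∣ p ^ f := by
      rw [hk]
      exact dvd_pow_self _ k.ne_zero
    exact (Nat.prime_dvd_prime_iff_eq hp' hp).mp (hp'.dvd_of_dvd_pow h1)
  subst hpp
  have hz : ∀ r : ℕ, ¬ p' ∣ r → (r : F) ≠ 0 := fun r hr h0 => hr ((CharP.cast_eq_zero_iff F p' r).mp h0)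
  have h2 : (2 : F) ≠ 0 := by
    have := hz 2 (fun h => hppi (by rwa [(Nat.prime_dvd_prime_iff_eq hp' Nat.prime_two).mp h]))
    exact_mod_cast this
  have h3 : (3 : F) ≠ 0 := by
    have := hz 3 (fun h => hppi (by rwa [(Nat.prime_dvd_prime_iff_eq hp' Nat.prime_three).mp h]))
    exact_mod_cast this
  obtain ⟨x, hx, y, hy, z, hz', key⟩ := final (by omega) halt hnd h2 h3 hle (hidx 2 h2pi)
    (hidx 3 h3pi) hsolv (hz _ fun h => hppi (hHp _ hp' h))
  have mem : ∀ g ∈ isometryGroup (fun u v => B u v),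
      g ∈ (H : Set (GL (Fin (2 * m)) F)) *
        (isometryGroup (fun u v => B u v) : Set (GL (Fin (2 * m)) F)) :=
    fun g hg => ⟨1, one_mem H, g, hg, one_mul g⟩
  exact ⟨x, y, z, mem x hx, mem y hy, mem z hz', key⟩
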